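/- Let d ↦ n(d) be a function with n(d) → ∞ and d/n(d) → 0 as d → ∞. For each d, let X_1, …, X_{n(d)} be i.i.d. d-dimensional standard normal random vectors N_d(0, I). Let S_d be the sample covariance matrix, T_d Tyler's M-estimator of the sample, S*_d = √(n(d)/d)(S_d − I), T*_d = √(n(d)/d)(T_d − I), and for 1 ≤ i ≤ d let B_i = {α λ_i(T*_d) + (1−α) λ_i(S*_d) : α ∈ [0,1]} be the segment joining the i-th eigenvalues. Then sup{|λ| : λ ∈ ⋃_{i=1}^d B_i} converges in probability to 2 as d → ∞. -/

import Mathlib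

open MeasureTheory ProbabilityTheory Filter Matrix

/-- The eigenvalues of a real symmetric `d × d` matrix, sorted in increasing order,
so that `sortedEigs A i` is `λ_{i+1}(A)` with `λ_1(A) ≤ … ≤ λ_d(A)`
(junk value `0` if the matrix is not symmetric). -/
noncomputable def sortedEigs {d : ℕ} (A : Matrix (Fin d) (Fin d) ℝ) : Fin d → ℝ :=
  if h : A.IsHermitian then h.eigenvalues ∘ Tuple.sort h.eigenvalues else 0

/-- The spectral norm `‖A‖₂ = max (|λ_1(A)|, |λ_d(A)|)` of a symmetric matrix,
i.e. the largest absolute value of an eigenvalue. -/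
noncomputable def specNorm {d : ℕ} (A : Matrix (Fin d) (Fin d) ℝ) : ℝ :=
  ⨆ i : Fin d, |sortedEigs A i|

/-- `IsTyler X T` says that `T` is Tyler's M-estimator of the sample
`X : Fin n → (Fin d → ℝ)`: it is symmetric positive definite, normalized by
`tr T = d`, and satisfies Tyler's fixed-point equation
`T = (d/n) ∑_j (X_j X_jᵗ) / (X_jᵗ T⁻¹ X_j)`. -/
def IsTyler {d n : ℕ} (X : Fin n → Fin d → ℝ) (T : Matrix (Fin d) (Fin d) ℝ) : Prop :=
  T.PosDef ∧ T.trace = d ∧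
    T = ((d : ℝ) / (n : ℝ)) •
      ∑ j : Fin n, (X j ⬝ᵥ T⁻¹ *ᵥ X j)⁻¹ • vecMulVec (X j) (X j)

open MeasureTheory ProbabilityTheory Filter Matrix

namespace Tyl

/-- moments of the standard gaussian -/
noncomputable def gm (k : ℕ) : ℝ := ∫ x, x ^ k ∂(gaussianReal 0 1)

lemma integrable_pow_gauss (k : ℕ) : Integrable (fun x : ℝ => x ^ k) (gaussianReal 0 1) := by
  rcases Nat.eq_zero_or_pos k with rfl | hk
  · simp
  · have h := (memLp_id_gaussianReal (μ := 0) (v := 1) (k : NNReal)).integrable_norm_pow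
      (by omega)
    refine (integrable_norm_iff (by fun_prop)).1 ?_
    simpa [norm_pow] using h

lemma gm_zero : gm 0 = 1 := by simp [gm]

lemma gm_one : gm 1 = 0 := by simp [gm, integral_id_gaussianReal]

lemma hasDerivAt_pdf (x : ℝ) :
    HasDerivAt (gaussianPDFReal 0 1) (-(x * gaussianPDFReal 0 1 x)) x := by
  unfold gaussianPDFReal
  have h : HasDerivAt (fun x : ℝ => -(x - 0) ^ 2 / (2 * ((1 : NNReal) : ℝ))) (-x) x := by
    have := ((hasDerivAt_id x).sub_const 0).pow 2 |>.neg |>.div_const (2 * ((1 : NNReal) : ℝ))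
    refine this.congr_deriv ?_
    norm_num
    ring
  have := (h.exp).const_mul ((√(2 * Real.pi * ((1 : NNReal) : ℝ)))⁻¹)
  refine this.congr_deriv ?_
  ring

lemma integrable_pow_pdf (k : ℕ) :
    Integrable (fun x : ℝ => x ^ k * gaussianPDFReal 0 1 x) := by
  have h := integrable_pow_gauss k
  rw [gaussianReal_of_var_ne_zero 0 one_ne_zero] at h
  rw [integrable_withDensity_iff_integrable_smul' (measurable_gaussianPDF _ _)
    (ae_of_all _ fun _ => gaussianPDF_lt_top)] at h
  simpa [toReal_gaussianPDF, mul_comm] using h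

lemma gm_succ (k : ℕ) : gm (k + 2) = (k + 1) * gm k := by
  have e : ∀ k, gm k = ∫ x : ℝ, x ^ k * gaussianPDFReal 0 1 x := by
    intro k
    unfold gm
    rw [integral_gaussianReal_eq_integral_smul one_ne_zero]
    simp [mul_comm]
  rw [e, e]
  have h := integral_mul_deriv_eq_deriv_mul_of_integrable
    (u := fun x : ℝ => x ^ (k + 1)) (v := gaussianPDFReal 0 1)
    (u' := fun x => ((k + 1 : ℕ) : ℝ) * x ^ k) (v' := fun x => -(x * gaussianPDFReal 0 1 x))
    (fun x _ => by simpa using hasDerivAt_pow (k + 1) x) (fun x _ => hasDerivAt_pdf x)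
    ?_ ?_ ?_
  · have h1 : ∫ x : ℝ, x ^ (k + 2) * gaussianPDFReal 0 1 x =
        - ∫ x : ℝ, x ^ (k + 1) * (-(x * gaussianPDFReal 0 1 x)) := by
      rw [← integral_neg]; congr 1; ext x; ring
    rw [h1, h, neg_neg, ← integral_const_mul]
    congr 1; ext x; push_cast; ring
  · have := (integrable_pow_pdf (k + 2)).neg
    refine this.congr (ae_of_all _ fun x => ?_)
    simp only [Pi.mul_apply, Pi.neg_apply]; ring
  · have := (integrable_pow_pdf k).const_mul ((k + 1 : ℕ) : ℝ)
    refine this.congr (ae_of_all _ fun x => ?_)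
    simp only [Pi.mul_apply]; ring
  · exact integrable_pow_pdf (k + 1)

/-- law of one vector -/
noncomputable abbrev gvec (d : ℕ) : Measure (Fin d → ℝ) := Measure.pi fun _ : Fin d => gaussianReal 0 1

/-- law of the sample -/
noncomputable abbrev gsam (n d : ℕ) : Measure (Fin n → Fin d → ℝ) := Measure.pi fun _ : Fin n => gvec d

abbrev Pol (n d : ℕ) := MvPolynomial (Fin n × Fin d) ℝ

noncomputable def ev {n d : ℕ} (x : Fin n → Fin d → ℝ) : Pol n d →+* ℝ :=
  MvPolynomial.eval (fun i => x i.1 i.2)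

lemma ev_monomial {n d : ℕ} (x : Fin n → Fin d → ℝ) (m : Fin n × Fin d →₀ ℕ) (a : ℝ) :
    ev x (MvPolynomial.monomial m a) = a * ∏ j, ∏ b, x j b ^ m (j, b) := by
  simp only [ev, MvPolynomial.eval_monomial]
  congr 1
  rw [Finsupp.prod_fintype _ _ (by simp), Fintype.prod_prod_type]

lemma integrable_ev {n d : ℕ} (p : Pol n d) : Integrable (fun x => ev x p) (gsam n d) := by
  induction p using MvPolynomial.induction_on' with
  | add p q hp hq => simp only [map_add]; exact hp.add hq
  | monomial m b =>
    simp only [ev_monomial]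
    refine Integrable.const_mul ?_ _
    refine Integrable.fintype_prod (f := fun j (y : Fin d → ℝ) => ∏ b, y b ^ m (j, b)) ?_
    intro j
    exact Integrable.fintype_prod (f := fun b (y : ℝ) => y ^ m (j, b))
      (fun b => integrable_pow_gauss _)

/-- gaussian expectation of a polynomial -/
noncomputable def L {n d : ℕ} : Pol n d →ₗ[ℝ] ℝ where
  toFun p := ∫ x, ev x p ∂(gsam n d)
  map_add' p q := by
    simp only [map_add]
    exact integral_add (integrable_ev p) (integrable_ev q)
  map_smul' c p := by
    simp only [RingHom.id_apply, smul_eq_mul, ← integral_const_mul]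
    congr 1; ext x
    simp [ev, MvPolynomial.smul_eval]

lemma L_apply {n d : ℕ} (p : Pol n d) : L p = ∫ x, ev x p ∂(gsam n d) := rfl

lemma L_monomial {n d : ℕ} (m : Fin n × Fin d →₀ ℕ) (a : ℝ) :
    L (MvPolynomial.monomial m a) = a * ∏ i, gm (m i) := by
  rw [L_apply]
  simp only [ev_monomial]
  rw [integral_const_mul, Fintype.prod_prod_type]
  congr 1
  rw [integral_fintype_prod_eq_prod (f := fun j (y : Fin d → ℝ) => ∏ b, y b ^ m (j, b))]
  congr 1; ext j
  rw [integral_fintype_prod_eq_prod (f := fun b (y : ℝ) => y ^ m (j, b))]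
  rfl

lemma L_C {n d : ℕ} (a : ℝ) : L (MvPolynomial.C a : Pol n d) = a := by
  simp [L_apply, ev]

lemma L_one {n d : ℕ} : L (1 : Pol n d) = 1 := by
  simp [L_apply, ev]

lemma L_mono {n d : ℕ} {p q : Pol n d} (h : ∀ x, ev x p ≤ ev x q) : L p ≤ L q :=
  integral_mono (integrable_ev p) (integrable_ev q) h

lemma stein {n d : ℕ} (i : Fin n × Fin d) (p : Pol n d) :
    L (MvPolynomial.X i * p) = L (MvPolynomial.pderiv i p) := by
  induction p using MvPolynomial.induction_on' with
  | add p q hp hq => simp only [mul_add, map_add, hp, hq]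
  | monomial m a =>
    rw [MvPolynomial.pderiv_monomial, MvPolynomial.X, MvPolynomial.monomial_mul, L_monomial,
      L_monomial, one_mul, mul_assoc]
    congr 1
    rw [← Finset.mul_prod_erase _ _ (Finset.mem_univ i), ← Finset.mul_prod_erase _ (fun j => gm ((m - Finsupp.single i 1 : Fin n × Fin d →₀ ℕ) j)) (Finset.mem_univ i), ← mul_assoc]
    congr 1
    · simp only [Finsupp.coe_add, Pi.add_apply, Finsupp.single_eq_same, Finsupp.coe_tsub,
        Pi.sub_apply]
      rcases hk : m i with _ | k
      · simp [gm_one]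
      · rw [show 1 + (k + 1) = k + 2 by ring, gm_succ]; push_cast; simp
    · refine Finset.prod_congr rfl fun j hj => ?_
      have : j ≠ i := Finset.ne_of_mem_erase hj
      simp [Finsupp.single_apply, this.symm]

end Tyl

open MeasureTheory ProbabilityTheory Filter Matrix

namespace Tyl

/-- abstract gaussian algebra -/
structure GS (n d : ℕ) (R : Type) [CommRing R] [Algebra ℝ R] where
  X : Fin n → Fin d → R
  D : Fin n → Fin d → Derivation ℝ R R
  hD : ∀ j a k b, D j a (X k b) = if k = j ∧ b = a then 1 else 0
  L : R →ₗ[ℝ] ℝ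
  one : L 1 = 1
  st : ∀ j a f, L (X j a * f) = L (D j a f)

section loop
variable {n d : ℕ} {R : Type} [CommRing R] [Algebra ℝ R] (g : GS n d R)

lemma trAB {ι κ : Type} [Fintype ι] [Fintype κ] (A B : Matrix ι κ R) :
    trace (A * Bᵀ) = ∑ j, ∑ a, A j a * B j a := by
  simp [Matrix.trace, Matrix.mul_apply]

lemma trAB' {ι κ : Type} [Fintype ι] [Fintype κ] (A : Matrix ι κ R) (B : Matrix κ ι R) :
    trace (A * B) = ∑ j, ∑ a, A j a * B a j := by
  simp [Matrix.trace, Matrix.mul_apply]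

namespace GS

def Gm : Matrix (Fin d) (Fin n) R := Matrix.of fun a j => g.X j a

noncomputable def Wp (c : ℝ) : Matrix (Fin d) (Fin d) R :=
  c • (g.Gm * g.Gmᵀ - (n : ℝ) • (1 : Matrix (Fin d) (Fin d) R))

def Dm {ι κ : Type} (j : Fin n) (a : Fin d) (A : Matrix ι κ R) : Matrix ι κ R :=
  A.map (g.D j a)

lemma Dm_mul {ι κ μ : Type} [Fintype κ] (j : Fin n) (a : Fin d) (A : Matrix ι κ R)
    (B : Matrix κ μ R) : g.Dm j a (A * B) = g.Dm j a A * B + A * g.Dm j a B := by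
  ext x b
  simp only [Dm, Matrix.map_apply, Matrix.mul_apply, Matrix.add_apply, map_sum, Derivation.leibniz,
    smul_eq_mul, ← Finset.sum_add_distrib]
  exact Finset.sum_congr rfl fun k _ => by ring

lemma Dm_pow (j : Fin n) (a : Fin d) (A : Matrix (Fin d) (Fin d) R) (p : ℕ) :
    g.Dm j a (A ^ p) = ∑ q ∈ Finset.range p, A ^ q * g.Dm j a A * A ^ (p - 1 - q) := by
  induction p with
  | zero =>
    ext x b
    simp only [pow_zero, Dm, Matrix.map_apply, Matrix.one_apply, Finset.range_zero, Finset.sum_empty,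
      Matrix.zero_apply]
    split_ifs <;> simp
  | succ p ih =>
    rw [pow_succ, Dm_mul, ih, Finset.sum_range_succ, Finset.sum_mul]
    congr 1
    · refine Finset.sum_congr rfl fun q hq => ?_
      rw [Finset.mem_range] at hq
      rw [mul_assoc (A ^ q * _), ← pow_succ]
      congr 2; omega
    · simp

lemma Wp_sym (c : ℝ) : (g.Wp c)ᵀ = g.Wp c := by
  simp [Wp]

lemma Wp_pow_sym (c : ℝ) (p : ℕ) : ((g.Wp c) ^ p)ᵀ = (g.Wp c) ^ p := by
  rw [Matrix.transpose_pow, Wp_sym]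

lemma Dm_Wp (c : ℝ) (j : Fin n) (a x y : Fin d) :
    g.Dm j a (g.Wp c) x y = c • ((if x = a then g.Gm y j else 0) + (if y = a then g.Gm x j else 0)) := by
  simp only [Dm, Wp, Matrix.map_apply, Matrix.smul_apply, Matrix.sub_apply, Derivation.map_smul]
  congr 1
  rw [map_sub, Derivation.map_smul]
  have h1 : (g.D j a) ((1 : Matrix (Fin d) (Fin d) R) x y) = 0 := by
    rw [Matrix.one_apply]; split_ifs <;> simp
  rw [h1, smul_zero, sub_zero, Matrix.mul_apply, map_sum]
  simp only [Matrix.transpose_apply, Gm, Matrix.of_apply, Derivation.leibniz, g.hD, smul_eq_mul,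
    Finset.sum_add_distrib]
  rw [add_comm]
  congr 1
  · rw [Finset.sum_eq_single j]
    · by_cases h : x = a <;> simp [h]
    · intro b _ hb; simp [hb]
    · simp
  · rw [Finset.sum_eq_single j]
    · by_cases h : y = a <;> simp [h]
    · intro b _ hb; simp [hb]
    · simp

lemma contract1 (c : ℝ) (B B' : Matrix (Fin d) (Fin d) R) (hB' : B'ᵀ = B') :
    ∑ j : Fin n, ∑ a : Fin d, (g.Gmᵀ * (B * g.Dm j a (g.Wp c) * B')) j a
      = c • (trace (B * B' * (g.Gm * g.Gmᵀ)) + trace (B * (g.Gm * g.Gmᵀ)) * trace B') := by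
  have key : ∀ j a, (g.Gmᵀ * (B * g.Dm j a (g.Wp c) * B')) j a =
      c • ((g.Gmᵀ * B) j a * (g.Gmᵀ * B') j a + (g.Gmᵀ * B * g.Gm) j j * B' a a) := by
    intro j a
    have e1 : g.Dm j a (g.Wp c) = c • (vecMulVec (Pi.single a 1) (fun y => g.Gm y j)
        + vecMulVec (fun y => g.Gm y j) (Pi.single a 1)) := by
      ext x y
      rw [Dm_Wp]
      simp [vecMulVec_apply, Pi.single_apply]
    rw [e1, Matrix.mul_smul, Matrix.smul_mul, Matrix.mul_smul, Matrix.smul_apply]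
    congr 1
    rw [← Matrix.mul_assoc, ← Matrix.mul_assoc, Matrix.mul_add, Matrix.add_mul, Matrix.add_apply]
    rw [Matrix.mul_vecMulVec, Matrix.vecMulVec_mul, Matrix.mul_vecMulVec, Matrix.vecMulVec_mul]
    simp only [vecMulVec_apply]
    congr 1
    · congr 1
      · simp [Matrix.mulVec_single_one]
    · congr 1
      simp
  simp only [key, ← Finset.smul_sum, Finset.sum_add_distrib]
  congr 1
  congr 1
  · have : trace (B * B' * (g.Gm * g.Gmᵀ)) = trace ((g.Gmᵀ * B) * (g.Gmᵀ * B')ᵀ) := by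
      rw [Matrix.transpose_mul, hB', Matrix.transpose_transpose, ← Matrix.mul_assoc,
        Matrix.trace_mul_comm, Matrix.mul_assoc g.Gmᵀ, Matrix.mul_assoc B B']
    rw [this]
    rw [trAB]
  · have : trace (B * (g.Gm * g.Gmᵀ)) = trace (g.Gmᵀ * B * g.Gm) := by
      rw [← Matrix.mul_assoc, Matrix.trace_mul_comm, Matrix.mul_assoc]
    rw [this]
    simp only [← Finset.mul_sum, ← Finset.sum_mul]
    rfl

/-- normalized trace -/
noncomputable def tp (c : ℝ) (q : ℕ) : R := (d : ℝ)⁻¹ • trace ((g.Wp c) ^ q)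

lemma D_trace (c : ℝ) (j : Fin n) (a : Fin d) (q : ℕ) :
    g.D j a (trace ((g.Wp c) ^ q)) =
      (2 * q * c) • (g.Gmᵀ * (g.Wp c) ^ (q - 1)) j a := by
  have h0 : ∀ A : Matrix (Fin d) (Fin d) R, g.D j a (trace A) = trace (g.Dm j a A) := by
    intro A; simp [Matrix.trace, Dm]
  rw [h0, Dm_pow, Matrix.trace_sum]
  have h1 : ∀ q' ∈ Finset.range q, trace ((g.Wp c) ^ q' * g.Dm j a (g.Wp c) * (g.Wp c) ^ (q - 1 - q'))
      = trace ((g.Wp c) ^ (q - 1) * g.Dm j a (g.Wp c)) := by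
    intro q' hq
    rw [Finset.mem_range] at hq
    rw [Matrix.trace_mul_comm, ← Matrix.mul_assoc, ← pow_add]
    congr 3; omega
  rw [Finset.sum_congr rfl h1, Finset.sum_const, Finset.card_range]
  have h2 : trace ((g.Wp c) ^ (q - 1) * g.Dm j a (g.Wp c)) =
      (2 * c) • (g.Gmᵀ * (g.Wp c) ^ (q - 1)) j a := by
    have hs := g.Wp_pow_sym c (q - 1)
    set B := (g.Wp c) ^ (q - 1)
    have hB : ∀ x y, B x y = B y x := fun x y => by
      have := congrFun (congrFun hs y) x
      simpa [Matrix.transpose_apply] using this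
    simp only [Matrix.trace, Matrix.diag_apply, Matrix.mul_apply, Dm_Wp, Matrix.transpose_apply]
    simp only [mul_smul_comm, ← Finset.smul_sum, mul_add, mul_ite, mul_zero, Finset.sum_add_distrib]
    rw [mul_comm (2 : ℝ) c, mul_smul]
    congr 1
    simp only [Finset.sum_ite_eq', Finset.mem_univ, if_true]
    rw [Finset.sum_comm]
    simp only [Finset.sum_ite_eq', Finset.sum_ite_eq, Finset.mem_univ, if_true]
    rw [two_smul]
    congr 1
    · exact Finset.sum_congr rfl fun x _ => by first | (rw [mul_comm]; done) | rw [mul_comm, hB]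
    · exact Finset.sum_congr rfl fun x _ => by first | (rw [mul_comm]; done) | rw [mul_comm, hB]
  rw [h2, ← Nat.cast_smul_eq_nsmul ℝ, smul_smul]
  congr 1; ring

/-- the derivation occurring in the loop equation -/
noncomputable def Ga (c : ℝ) (p : ℕ) (f : R) : R :=
  (c / d) • ∑ j : Fin n, ∑ a : Fin d, (g.Gmᵀ * (g.Wp c) ^ p) j a * g.D j a f

lemma Ga_mul (c : ℝ) (p : ℕ) (f h : R) :
    g.Ga c p (f * h) = g.Ga c p f * h + f * g.Ga c p h := by
  simp only [Ga, Derivation.leibniz, smul_eq_mul, smul_mul_assoc, mul_smul_comm, ← smul_add,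
    Finset.sum_mul, Finset.mul_sum, ← Finset.sum_add_distrib]
  congr 1
  refine Finset.sum_congr rfl fun j _ => Finset.sum_congr rfl fun a _ => by ring

lemma Ga_one (c : ℝ) (p : ℕ) : g.Ga c p 1 = 0 := by
  simp [Ga]

end GS

noncomputable def cc (n d : ℕ) : ℝ := (Real.sqrt (n * d))⁻¹
noncomputable def rh (n d : ℕ) : ℝ := Real.sqrt (d / n)

variable (hn : 0 < n) (hd : 0 < d)

include hn hd in
lemma cc_sq : cc n d ^ 2 * n = (d : ℝ)⁻¹ := by
  have hn' : (0 : ℝ) < n := by exact_mod_cast hn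
  have hd' : (0 : ℝ) < d := by exact_mod_cast hd
  rw [cc, inv_pow, Real.sq_sqrt (by positivity)]
  field_simp

include hn hd in
lemma cc_eq : cc n d = (d : ℝ)⁻¹ * rh n d := by
  have hn' : (0 : ℝ) < n := by exact_mod_cast hn
  have hd' : (0 : ℝ) < d := by exact_mod_cast hd
  rw [cc, rh, Real.sqrt_mul hn'.le, Real.sqrt_div hd'.le]
  have h1 : √(d : ℝ) * √(d : ℝ) = d := Real.mul_self_sqrt hd'.le
  have h2 : 0 < √(d : ℝ) := Real.sqrt_pos.2 hd'
  have h3 : 0 < √(n : ℝ) := Real.sqrt_pos.2 hn'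
  field_simp
  nlinarith

namespace GS
include hn hd in
lemma c2M : (cc n d ^ 2) • (g.Gm * g.Gmᵀ) = (d : ℝ)⁻¹ • (1 + rh n d • g.Wp (cc n d)) := by
  have h : (cc n d ^ 2) • (g.Gm * g.Gmᵀ) = cc n d • g.Wp (cc n d) + (cc n d ^ 2 * n) • (1 : Matrix (Fin d) (Fin d) R) := by
    rw [Wp, smul_smul, smul_sub, smul_smul, ← sq, sub_add_cancel]
  rw [h, cc_sq hn hd, smul_add, smul_smul, add_comm, ← cc_eq hn hd]

include hn hd in
lemma trM (q : ℕ) : (cc n d ^ 2) • trace ((g.Wp (cc n d)) ^ q * (g.Gm * g.Gmᵀ)) =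
    g.tp (cc n d) q + rh n d • g.tp (cc n d) (q + 1) := by
  rw [← Matrix.trace_smul, ← Matrix.mul_smul, c2M g hn hd, Matrix.mul_smul, Matrix.mul_add,
    Matrix.mul_smul, mul_one, ← pow_succ]
  simp only [tp, Matrix.trace_smul, Matrix.trace_add, smul_add]
  rw [smul_comm]

include hn hd in
lemma Ga_tp (p q : ℕ) : g.Ga (cc n d) p (g.tp (cc n d) q) =
    (2 * q / d ^ 2 : ℝ) • (g.tp (cc n d) (p + q - 1) + rh n d • g.tp (cc n d) (p + q)) := by
  rcases Nat.eq_zero_or_pos q with rfl | hq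
  · simp [Ga, tp]
  · have e : p + q = (p + q - 1) + 1 := by omega
    conv_rhs => rw [e]
    simp only [Nat.add_sub_cancel]
    rw [← trM g hn hd]
    unfold Ga
    have ee : ∀ j a, g.D j a (g.tp (cc n d) q) = (d : ℝ)⁻¹ • (2 * q * cc n d) • (g.Gmᵀ * (g.Wp (cc n d)) ^ (q - 1)) j a := by
      intro j a; rw [tp, Derivation.map_smul, D_trace]
    simp only [ee]
    simp only [mul_smul_comm, ← Finset.smul_sum, smul_smul]
    have : trace ((g.Wp (cc n d)) ^ (p + q - 1) * (g.Gm * g.Gmᵀ)) =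
        ∑ j : Fin n, ∑ a : Fin d, (g.Gmᵀ * (g.Wp (cc n d)) ^ p) j a * (g.Gmᵀ * (g.Wp (cc n d)) ^ (q - 1)) j a := by
      have : trace ((g.Wp (cc n d)) ^ (p + q - 1) * (g.Gm * g.Gmᵀ)) =
        trace ((g.Gmᵀ * (g.Wp (cc n d)) ^ p) * (g.Gmᵀ * (g.Wp (cc n d)) ^ (q - 1))ᵀ) := by
        rw [Matrix.transpose_mul, Wp_pow_sym, Matrix.transpose_transpose, Matrix.mul_assoc g.Gmᵀ,
          Matrix.trace_mul_comm g.Gmᵀ, show p + q - 1 = p + (q - 1) by omega, pow_add]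
        simp only [Matrix.mul_assoc]
      rw [this]
      rw [trAB]
    rw [this]
    congr 1
    have hd' : (d : ℝ) ≠ 0 := by positivity
    field_simp

include hn hd in
/-- the loop equation -/
lemma loop (p : ℕ) (f : R) :
    g.L (g.tp (cc n d) (p + 1) * f) =
      g.L ((∑ q ∈ Finset.range p, (g.tp (cc n d) q + rh n d • g.tp (cc n d) (q + 1)) * g.tp (cc n d) (p - 1 - q)) * f)
      + (p / d : ℝ) * g.L ((g.tp (cc n d) (p - 1) + rh n d • g.tp (cc n d) p) * f)
      + g.L (g.Ga (cc n d) p f) := by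
  set c := cc n d with hc
  set W := g.Wp c with hW
  have hd' : (d : ℝ) ≠ 0 := by positivity
  have e1 : trace (W ^ (p + 1)) = c • (∑ j : Fin n, ∑ a : Fin d, g.X j a * (g.Gmᵀ * W ^ p) j a)
      - (c * n) • trace (W ^ p) := by
    have : W ^ (p + 1) = c • (g.Gm * (g.Gmᵀ * W ^ p)) - (c * n) • W ^ p := by
      rw [pow_succ']
      conv_lhs => enter [1]; rw [hW, Wp]
      rw [Matrix.smul_mul, Matrix.sub_mul, Matrix.smul_mul, one_mul, smul_sub, smul_smul, Matrix.mul_assoc]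
    rw [this, Matrix.trace_sub, Matrix.trace_smul, Matrix.trace_smul]
    congr 2
    rw [Finset.sum_comm]
    rw [trAB']
    rfl
  have e2 : g.L (∑ j : Fin n, ∑ a : Fin d, g.X j a * ((g.Gmᵀ * W ^ p) j a * f)) =
      n * g.L (trace (W ^ p) * f) + g.L ((∑ j : Fin n, ∑ a : Fin d, (g.Gmᵀ * g.Dm j a (W ^ p)) j a) * f)
       + g.L (∑ j : Fin n, ∑ a : Fin d, (g.Gmᵀ * W ^ p) j a * g.D j a f) := by
    have e3 : ∀ j a, g.D j a ((g.Gmᵀ * W ^ p) j a) =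
        (W ^ p) a a + (g.Gmᵀ * g.Dm j a (W ^ p)) j a := by
      intro j a
      have := congrFun (congrFun (g.Dm_mul j a g.Gmᵀ (W ^ p)) j) a
      simp only [Matrix.add_apply] at this
      rw [show g.D j a ((g.Gmᵀ * W ^ p) j a) = g.Dm j a (g.Gmᵀ * W ^ p) j a from rfl, this]
      congr 1
      rw [Matrix.mul_apply, Finset.sum_eq_single a]
      · simp [Dm, Gm, g.hD]
      · intro b _ hb; simp [Dm, Gm, g.hD, hb]
      · simp
    have e3' : ∀ j a, g.L (g.X j a * ((g.Gmᵀ * W ^ p) j a * f)) =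
        g.L ((W ^ p) a a * f) + g.L ((g.Gmᵀ * g.Dm j a (W ^ p)) j a * f) + g.L ((g.Gmᵀ * W ^ p) j a * g.D j a f) := by
      intro j a
      rw [g.st, Derivation.leibniz, e3, smul_eq_mul, smul_eq_mul, ← map_add, ← map_add]
      congr 1; ring
    simp only [map_sum, e3', Finset.sum_add_distrib, Finset.sum_mul]
    congr 2
    simp [Matrix.trace, Finset.sum_mul, map_sum]
  have e4 : ∑ j : Fin n, ∑ a : Fin d, (g.Gmᵀ * g.Dm j a (W ^ p)) j a =
      ∑ q ∈ Finset.range p, c • (trace (W ^ (p - 1) * (g.Gm * g.Gmᵀ)) +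
         trace (W ^ q * (g.Gm * g.Gmᵀ)) * trace (W ^ (p - 1 - q))) := by
    have : ∀ q ∈ Finset.range p, ∑ j : Fin n, ∑ a : Fin d, (g.Gmᵀ * (W ^ q * g.Dm j a W * W ^ (p - 1 - q))) j a
       = c • (trace (W ^ (p - 1) * (g.Gm * g.Gmᵀ)) +
         trace (W ^ q * (g.Gm * g.Gmᵀ)) * trace (W ^ (p - 1 - q))) := by
      intro q hq
      rw [Finset.mem_range] at hq
      rw [hW, contract1 _ _ _ _ (Wp_pow_sym _ _ _), ← pow_add, show q + (p - 1 - q) = p - 1 by omega]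
    rw [← Finset.sum_congr rfl this]
    calc _ = ∑ j : Fin n, ∑ a : Fin d, ∑ q ∈ Finset.range p,
          (g.Gmᵀ * (W ^ q * g.Dm j a W * W ^ (p - 1 - q))) j a := by
          refine Finset.sum_congr rfl fun j _ => Finset.sum_congr rfl fun a _ => ?_
          rw [Dm_pow, Matrix.mul_sum, Matrix.sum_apply]
      _ = ∑ j : Fin n, ∑ q ∈ Finset.range p, ∑ a : Fin d,
          (g.Gmᵀ * (W ^ q * g.Dm j a W * W ^ (p - 1 - q))) j a :=
          Finset.sum_congr rfl fun j _ => Finset.sum_comm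
      _ = _ := Finset.sum_comm
  have e5 : ∀ q, (d : ℝ) • g.tp c q = trace (W ^ q) := by
    intro q; rw [tp, smul_smul, mul_inv_cancel₀ hd', one_smul]
  have e6 := g.trM hn hd
  rw [← hc, ← hW] at e6
  -- c • e4
  have e7 : c • ∑ j : Fin n, ∑ a : Fin d, (g.Gmᵀ * g.Dm j a (W ^ p)) j a =
     (p : ℝ) • (g.tp c (p - 1) + rh n d • g.tp c p) + (d : ℝ) • ∑ q ∈ Finset.range p, (g.tp c q + rh n d • g.tp c (q + 1)) * g.tp c (p - 1 - q) := by
    rcases Nat.eq_zero_or_pos p with rfl | hp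
    · rw [e4]; simp
    have hp1 : p - 1 + 1 = p := by omega
    rw [e4, Finset.smul_sum]
    have h7 : ∀ q, c • c • (trace (W ^ (p - 1) * (g.Gm * g.Gmᵀ)) +
         trace (W ^ q * (g.Gm * g.Gmᵀ)) * trace (W ^ (p - 1 - q))) =
         (g.tp c (p - 1) + rh n d • g.tp c p) + (d : ℝ) • ((g.tp c q + rh n d • g.tp c (q + 1)) * g.tp c (p - 1 - q)) := by
      intro q
      rw [smul_smul, ← sq, smul_add, ← smul_mul_assoc, e6, e6, ← e5, hp1, mul_smul_comm]
    rw [Finset.sum_congr rfl fun q _ => h7 q, Finset.sum_add_distrib, Finset.sum_const,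
      Finset.card_range, ← Finset.smul_sum, ← Nat.cast_smul_eq_nsmul ℝ p]
  have e8 : g.L (trace (W ^ (p + 1)) * f) = c * g.L (∑ j : Fin n, ∑ a : Fin d, g.X j a * ((g.Gmᵀ * W ^ p) j a * f)) -
     c * n * g.L (trace (W ^ p) * f) := by
    rw [e1, sub_mul, map_sub, smul_mul_assoc, smul_mul_assoc, map_smul, map_smul, Finset.sum_mul]
    simp only [smul_eq_mul, Finset.sum_mul, mul_assoc]
  have e9 : g.L ((c • ∑ j : Fin n, ∑ a : Fin d, (g.Gmᵀ * g.Dm j a (W ^ p)) j a) * f) =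
      c * g.L ((∑ j : Fin n, ∑ a : Fin d, (g.Gmᵀ * g.Dm j a (W ^ p)) j a) * f) := by
    rw [smul_mul_assoc, map_smul, smul_eq_mul]
  rw [e7, add_mul, smul_mul_assoc, smul_mul_assoc, map_add, map_smul, map_smul, smul_eq_mul, smul_eq_mul] at e9
  rw [Ga, map_smul, smul_eq_mul, ← hW]
  rw [tp, smul_mul_assoc, map_smul, smul_eq_mul, ← hW, e8, e2]
  field_simp
  linear_combination -e9
end GS
end loop
end Tyl

open MeasureTheory ProbabilityTheory Filter Matrix

namespace Tyl

/-- dominating moment sequence -/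
noncomputable def bb (ε : ℝ) : ℕ → ℝ
  | 0 => 1
  | p + 1 => ∑ i : Fin p, bb ε i * bb ε (p - 1 - i) + ε * ∑ i : Fin (p + 1), bb ε i * bb ε (p - i)
decreasing_by all_goals omega

lemma bb_zero (ε : ℝ) : bb ε 0 = 1 := by rw [bb]

lemma bb_succ (ε : ℝ) (p : ℕ) : bb ε (p + 1) = ∑ i ∈ Finset.range p, bb ε i * bb ε (p - 1 - i) +
    ε * ∑ i ∈ Finset.range (p + 1), bb ε i * bb ε (p - i) := by
  rw [bb, Finset.sum_range, Finset.sum_range]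

lemma bb_nonneg {ε : ℝ} (hε : 0 ≤ ε) (q : ℕ) : 0 ≤ bb ε q := by
  induction q using Nat.strong_induction_on with
  | _ q ih =>
    rcases q with _ | p
    · simp [bb_zero]
    · rw [bb_succ]
      have h1 : ∀ i ∈ Finset.range p, 0 ≤ bb ε i * bb ε (p - 1 - i) := fun i hi => by
        rw [Finset.mem_range] at hi
        exact mul_nonneg (ih _ (by omega)) (ih _ (by omega))
      have h2 : ∀ i ∈ Finset.range (p + 1), 0 ≤ bb ε i * bb ε (p - i) := fun i hi => by
        rw [Finset.mem_range] at hi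
        exact mul_nonneg (ih _ (by omega)) (ih _ (by omega))
      have := Finset.sum_nonneg h1
      have := Finset.sum_nonneg h2
      positivity

lemma bb_step {ε : ℝ} (hε : 0 ≤ ε) (p : ℕ) : ε * bb ε p ≤ bb ε (p + 1) := by
  rw [bb_succ, Finset.sum_range_succ' _ p]
  have h1 : 0 ≤ ∑ i ∈ Finset.range p, bb ε i * bb ε (p - 1 - i) :=
    Finset.sum_nonneg fun i _ => mul_nonneg (bb_nonneg hε _) (bb_nonneg hε _)
  have h2 : 0 ≤ ∑ i ∈ Finset.range p, bb ε (i + 1) * bb ε (p - (i + 1)) :=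
    Finset.sum_nonneg fun i _ => mul_nonneg (bb_nonneg hε _) (bb_nonneg hε _)
  simp only [bb_zero, one_mul, Nat.sub_zero]
  nlinarith

lemma bb_pos {ε : ℝ} (hε : 0 < ε) (q : ℕ) : 0 < bb ε q := by
  induction q with
  | zero => simp [bb_zero]
  | succ q ih => exact lt_of_lt_of_le (by positivity) (bb_step hε.le q)

lemma bb_cont (q : ℕ) : Continuous fun ε => bb ε q := by
  induction q using Nat.strong_induction_on with
  | _ q ih =>
    rcases q with _ | p
    · simp only [bb_zero]; exact continuous_const
    · simp only [bb_succ]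
      refine Continuous.add ?_ (continuous_id.mul ?_)
      · refine continuous_finset_sum _ fun i hi => ?_
        rw [Finset.mem_range] at hi
        exact (ih _ (by omega)).mul (ih _ (by omega))
      · refine continuous_finset_sum _ fun i hi => ?_
        rw [Finset.mem_range] at hi
        exact (ih _ (by omega)).mul (ih _ (by omega))

lemma conv_le (a : ℕ → ℝ) (ha : ∀ i, 0 ≤ a i) (M : ℕ) :
    ∑ p ∈ Finset.range M, ∑ i ∈ Finset.range (p + 1), a i * a (p - i) ≤ (∑ i ∈ Finset.range M, a i) ^ 2 := by
  have h : ∀ p, ∑ i ∈ Finset.range (p + 1), a i * a (p - i) = ∑ x ∈ Finset.HasAntidiagonal.antidiagonal p, a x.1 * a x.2 := by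
    intro p
    rw [Finset.Nat.sum_antidiagonal_eq_sum_range_succ_mk]
  simp only [h]
  rw [sq, Finset.sum_mul_sum, ← Finset.sum_product', ← Finset.sum_biUnion]
  · refine Finset.sum_le_sum_of_subset_of_nonneg ?_ fun i _ _ => mul_nonneg (ha _) (ha _)
    intro x hx
    simp only [Finset.mem_biUnion, Finset.mem_range, Finset.HasAntidiagonal.mem_antidiagonal, Finset.mem_product] at hx ⊢
    obtain ⟨p, hp, h⟩ := hx
    omega
  · intro p _ q _ hpq
    rw [Function.onFun, Finset.disjoint_left]
    intro x hx hx'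
    rw [Finset.HasAntidiagonal.mem_antidiagonal] at hx hx'
    exact hpq (hx ▸ hx')

lemma bb_le {ε x : ℝ} (hε : 0 ≤ ε) (hx : 0 < x) (h : (x⁻¹) ^ 2 + ε * x⁻¹ ≤ 1 / 4) (q : ℕ) :
    bb ε q ≤ 2 * x ^ q := by
  set z := x⁻¹ with hz
  have hz0 : 0 < z := by positivity
  have key : ∀ N, ∑ q ∈ Finset.range (N + 1), bb ε q * z ^ q ≤ 2 := by
    intro N
    induction N with
    | zero => simp [bb_zero]
    | succ N ih =>
      rw [Finset.sum_range_succ']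
      simp only [bb_succ, bb_zero, pow_zero, mul_one]
      have hnn : ∀ i, 0 ≤ bb ε i * z ^ i := fun i => mul_nonneg (bb_nonneg hε _) (by positivity)
      have hc := conv_le (fun q => bb ε q * z ^ q) hnn (N + 1)
      have hc2 := conv_le (fun q => bb ε q * z ^ q) hnn N
      have hS : ∑ i ∈ Finset.range N, bb ε i * z ^ i ≤ ∑ i ∈ Finset.range (N + 1), bb ε i * z ^ i := by
        rw [Finset.sum_range_succ]; linarith [hnn N]
      have hS0 : 0 ≤ ∑ i ∈ Finset.range N, bb ε i * z ^ i := Finset.sum_nonneg fun i _ => hnn i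
      have e1 : ∑ p ∈ Finset.range (N + 1), (∑ i ∈ Finset.range p, bb ε i * bb ε (p - 1 - i)) * z ^ (p + 1)
          = z ^ 2 * ∑ p ∈ Finset.range N, ∑ i ∈ Finset.range (p + 1), (bb ε i * z ^ i) * (bb ε (p - i) * z ^ (p - i)) := by
        rw [Finset.sum_range_succ']
        simp only [Finset.range_zero, Finset.sum_empty, zero_mul, add_zero]
        rw [Finset.mul_sum]
        refine Finset.sum_congr rfl fun p _ => ?_
        rw [Finset.sum_mul, Finset.mul_sum]
        refine Finset.sum_congr rfl fun i hi => ?_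
        rw [Finset.mem_range] at hi
        obtain ⟨r, rfl⟩ : ∃ r, p = i + r := ⟨p - i, by omega⟩
        rw [show i + r + 1 - 1 - i = r by omega, show i + r - i = r by omega]
        ring
      have e2 : ∑ p ∈ Finset.range (N + 1), (ε * ∑ i ∈ Finset.range (p + 1), bb ε i * bb ε (p - i)) * z ^ (p + 1)
          = ε * z * ∑ p ∈ Finset.range (N + 1), ∑ i ∈ Finset.range (p + 1), (bb ε i * z ^ i) * (bb ε (p - i) * z ^ (p - i)) := by
        rw [Finset.mul_sum]
        refine Finset.sum_congr rfl fun p _ => ?_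
        rw [Finset.mul_sum, Finset.sum_mul, Finset.mul_sum]
        refine Finset.sum_congr rfl fun i hi => ?_
        rw [Finset.mem_range] at hi
        obtain ⟨r, rfl⟩ : ∃ r, p = i + r := ⟨p - i, by omega⟩
        rw [show i + r - i = r by omega]
        ring
      simp only [add_mul, Finset.sum_add_distrib]
      rw [e1, e2]
      have f1 : (∑ i ∈ Finset.range N, bb ε i * z ^ i) ^ 2 ≤ 4 := by nlinarith
      have f2 : (∑ i ∈ Finset.range (N + 1), bb ε i * z ^ i) ^ 2 ≤ 4 := by nlinarith
      have g1 := mul_le_mul_of_nonneg_left (hc2.trans f1) (sq_nonneg z)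
      have g2 := mul_le_mul_of_nonneg_left (hc.trans f2) (by positivity : 0 ≤ ε * z)
      linarith
  have h1 : bb ε q * z ^ q ≤ 2 := by
    refine le_trans ?_ (key q)
    exact Finset.single_le_sum (f := fun q => bb ε q * z ^ q) (fun i _ => mul_nonneg (bb_nonneg hε _) (by positivity))
      (Finset.self_mem_range_succ q)
  rw [hz, inv_pow, ← div_eq_mul_inv, div_le_iff₀ (by positivity)] at h1
  exact h1

lemma bb_catalan {ε : ℝ} (hε : 0 ≤ ε) (a : ℕ) : (catalan a : ℝ) ≤ bb ε (2 * a) := by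
  induction a using Nat.strong_induction_on with
  | _ a ih =>
    rcases a with _ | a
    · simp [bb_zero]
    · rw [catalan_succ, show 2 * (a + 1) = (2 * a + 1) + 1 by ring, bb_succ]
      have h2 : 0 ≤ ∑ i ∈ Finset.range (2 * a + 1 + 1), bb ε i * bb ε (2 * a + 1 - i) :=
        Finset.sum_nonneg fun i _ => mul_nonneg (bb_nonneg hε _) (bb_nonneg hε _)
      have h3 : ∑ s ∈ Finset.range (a + 1), bb ε (2 * s) * bb ε (2 * a - 2 * s) ≤
          ∑ i ∈ Finset.range (2 * a + 1), bb ε i * bb ε (2 * a + 1 - 1 - i) := by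
        have := Finset.sum_image (s := Finset.range (a + 1)) (g := fun s => 2 * s)
          (f := fun i => bb ε i * bb ε (2 * a + 1 - 1 - i)) (by intro x _ y _ h; simpa using h)
        refine le_trans (le_of_eq ?_) (le_trans (le_of_eq this.symm) ?_)
        · rfl
        · refine Finset.sum_le_sum_of_subset_of_nonneg ?_ fun i _ _ => mul_nonneg (bb_nonneg hε _) (bb_nonneg hε _)
          intro x hx
          simp only [Finset.mem_image, Finset.mem_range] at hx ⊢
          omega
      have h4 : ((∑ i : Fin a.succ, catalan i * catalan (a - i) : ℕ) : ℝ) ≤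
          ∑ s ∈ Finset.range (a + 1), bb ε (2 * s) * bb ε (2 * a - 2 * s) := by
        rw [Finset.sum_range]
        push_cast
        refine Finset.sum_le_sum fun i _ => ?_
        rw [show 2 * a - 2 * (i : ℕ) = 2 * (a - i) by omega]
        have := i.2
        exact mul_le_mul (ih _ (by omega)) (ih _ (by omega)) (by positivity) (bb_nonneg hε _)
      nlinarith

lemma catalan_lb (a : ℕ) : (4 : ℝ) ^ a ≤ 2 * (a + 1) ^ 2 * catalan a := by
  have h : 4 ^ a ≤ 2 * (a + 1) * Nat.centralBinom a := by
    rcases Nat.eq_zero_or_pos a with rfl | ha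
    · simp
    · refine (Nat.four_pow_le_two_mul_self_mul_centralBinom a ha).trans ?_
      gcongr; omega
  have h2 := succ_mul_catalan_eq_centralBinom a
  rw [← h2] at h
  have h3 : ((4 ^ a : ℕ) : ℝ) ≤ ((2 * (a + 1) * ((a + 1) * catalan a) : ℕ) : ℝ) := by exact_mod_cast h
  push_cast at h3
  linarith

lemma bb_lb {ε : ℝ} (hε : 0 < ε) (hε1 : ε ≤ 1) (q : ℕ) : ε * 2 ^ q ≤ 4 * (q + 1) ^ 2 * bb ε q := by
  have key : ∀ a : ℕ, (4 : ℝ) ^ a ≤ 2 * (a + 1) ^ 2 * bb ε (2 * a) := fun a =>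
    (catalan_lb a).trans (mul_le_mul_of_nonneg_left (bb_catalan hε.le a) (by positivity))
  rcases Nat.even_or_odd' q with ⟨a, rfl | rfl⟩
  · have := key a
    have hb := bb_nonneg hε.le (2 * a)
    rw [pow_mul]; push_cast; norm_num
    have h1 : 2 * ((a:ℝ) + 1) ^ 2 * bb ε (2 * a) ≤ 4 * (2 * a + 1) ^ 2 * bb ε (2 * a) := by
      refine mul_le_mul_of_nonneg_right ?_ hb
      have : (0:ℝ) ≤ a := by positivity
      nlinarith
    have h2 : ε * 4 ^ a ≤ 1 * 4 ^ a := by gcongr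
    linarith
  · have := key a
    have hs := bb_step hε.le (2 * a)
    rw [pow_succ, pow_mul]; push_cast; norm_num
    have h1 : ε * 4 ^ a ≤ 2 * (a + 1) ^ 2 * (ε * bb ε (2 * a)) := by
      nlinarith [mul_le_mul_of_nonneg_left this hε.le]
    have h2 : 2 * ((a:ℝ) + 1) ^ 2 * (ε * bb ε (2 * a)) ≤ 2 * (a + 1) ^ 2 * bb ε (2 * a + 1) := by gcongr
    have hb := bb_nonneg hε.le (2 * a + 1)
    have h3 : 4 * ((a:ℝ) + 1) ^ 2 * bb ε (2 * a + 1) ≤ 4 * (2 * a + 1 + 1) ^ 2 * bb ε (2 * a + 1) := by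
      have : (0:ℝ) ≤ a := by positivity
      gcongr; linarith
    linarith
end Tyl

open MeasureTheory ProbabilityTheory Filter Matrix

namespace Tyl
namespace GS
variable {n d : ℕ} {R : Type} [CommRing R] [Algebra ℝ R] (g : GS n d R)

noncomputable def tl (l : List ℕ) : R := (l.map (g.tp (cc n d))).prod
noncomputable def ee (l : List ℕ) : ℝ := g.L (g.tl l)

lemma tl_nil : g.tl [] = 1 := by simp [tl]
lemma tl_cons (q : ℕ) (l : List ℕ) : g.tl (q :: l) = g.tp (cc n d) q * g.tl l := by simp [tl]
lemma tl_append (l l' : List ℕ) : g.tl (l ++ l') = g.tl l * g.tl l' := by simp [tl]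

variable (hn : 0 < n) (hd : 0 < d)

include hd in
lemma tp_zero (c : ℝ) : g.tp c 0 = 1 := by
  have hd' : (d : ℝ) ≠ 0 := by positivity
  have h : ((d : ℕ) : R) = (d : ℝ) • (1 : R) := by
    rw [Algebra.smul_def, mul_one, map_natCast]
  rw [tp, pow_zero, Matrix.trace_one, Fintype.card_fin, h, smul_smul, inv_mul_cancel₀ hd', one_smul]

noncomputable def cross (p : ℕ) : List ℕ → List ℕ → ℝ
  | [], _ => 0
  | q :: l, pre => (2 * q / d ^ 2 : ℝ) * (g.ee ((p + q - 1) :: (l ++ pre)) + rh n d * g.ee ((p + q) :: (l ++ pre)))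
      + cross p l (q :: pre)

include hn hd in
lemma cross_eq (p : ℕ) (l pre : List ℕ) : g.L (g.Ga (cc n d) p (g.tl l) * g.tl pre) = g.cross p l pre := by
  induction l generalizing pre with
  | nil => simp [tl_nil, Ga_one, cross]
  | cons q l ih =>
    rw [cross, ← ih, tl_cons, Ga_mul, Ga_tp g hn hd, tl_cons, add_mul, map_add]
    congr 1
    · rw [ee, ee, tl_cons, tl_cons, tl_append, smul_mul_assoc, smul_mul_assoc, map_smul, smul_eq_mul,
        add_mul, add_mul, map_add, smul_mul_assoc, smul_mul_assoc, map_smul, smul_eq_mul, mul_assoc, mul_assoc]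
    · congr 1; ring

include hn hd in
lemma ee_rec (p : ℕ) (l : List ℕ) : g.ee ((p + 1) :: l) =
    ∑ q ∈ Finset.range p, (g.ee (q :: (p - 1 - q) :: l) + rh n d * g.ee ((q + 1) :: (p - 1 - q) :: l))
    + (p / d : ℝ) * (g.ee ((p - 1) :: l) + rh n d * g.ee (p :: l)) + g.cross p l [] := by
  rw [← cross_eq g hn hd, tl_nil, mul_one, ee, tl_cons, loop g hn hd]
  congr 2
  · rw [Finset.sum_mul, map_sum]
    refine Finset.sum_congr rfl fun q _ => ?_
    rw [ee, ee, tl_cons, tl_cons, tl_cons, tl_cons, add_mul, add_mul, map_add, smul_mul_assoc, smul_mul_assoc,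
      map_smul, smul_eq_mul, mul_assoc, mul_assoc]
  · rw [ee, ee, tl_cons, tl_cons, add_mul, map_add, smul_mul_assoc, map_smul, smul_eq_mul]

lemma ee_nil : g.ee [] = 1 := by rw [ee, tl_nil, g.one]
include hd in
lemma ee_zero (l : List ℕ) : g.ee (0 :: l) = g.ee l := by rw [ee, tl_cons, tp_zero g hd, one_mul, ee]

lemma rh_nonneg : 0 ≤ rh n d := Real.sqrt_nonneg _

lemma cross_nonneg (p N : ℕ) (ih : ∀ l : List ℕ, 2 * l.sum + l.length < N → 0 ≤ g.ee l) (l pre : List ℕ)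
    (h : 2 * (p + 1 + l.sum + pre.sum) + l.length + pre.length + 1 ≤ N) : 0 ≤ g.cross p l pre := by
  induction l generalizing pre with
  | nil => simp [cross]
  | cons q l ih' =>
    rw [cross]
    have h1 := ih' (q :: pre) (by simp at h ⊢; omega)
    have h2 := ih ((p + q - 1) :: (l ++ pre)) (by simp at h ⊢; omega)
    have h3 := ih ((p + q) :: (l ++ pre)) (by simp at h ⊢; omega)
    have h4 : 0 ≤ rh n d := rh_nonneg
    positivity

include hn hd in
lemma ee_nonneg (N : ℕ) : ∀ l : List ℕ, 2 * l.sum + l.length < N → 0 ≤ g.ee l := by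
  induction N with
  | zero => intro l h; omega
  | succ N ih =>
    intro l hl
    match l with
    | [] => rw [ee_nil]; norm_num
    | 0 :: l => rw [ee_zero g hd]; exact ih l (by simp at hl; omega)
    | (p + 1) :: l =>
      rw [ee_rec g hn hd]
      have h1 := g.cross_nonneg p N ih l [] (by simp at hl ⊢; omega)
      have h2 := ih ((p - 1) :: l) (by simp at hl ⊢; omega)
      have h3 := ih (p :: l) (by simp at hl ⊢; omega)
      have h0 : 0 ≤ rh n d := rh_nonneg
      have h4 : 0 ≤ ∑ q ∈ Finset.range p, (g.ee (q :: (p - 1 - q) :: l) + rh n d * g.ee ((q + 1) :: (p - 1 - q) :: l)) := by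
        refine Finset.sum_nonneg fun q hq => ?_
        rw [Finset.mem_range] at hq
        have := ih (q :: (p - 1 - q) :: l) (by simp at hl ⊢; omega)
        have := ih ((q + 1) :: (p - 1 - q) :: l) (by simp at hl ⊢; omega)
        positivity
      positivity

noncomputable def bl (ε : ℝ) (l : List ℕ) : ℝ := (l.map (bb ε)).prod

lemma _root_.Tyl.GS.bl_cons (ε : ℝ) (q : ℕ) (l : List ℕ) : bl ε (q :: l) = bb ε q * bl ε l := by simp [bl]
lemma _root_.Tyl.GS.bl_append (ε : ℝ) (l l' : List ℕ) : bl ε (l ++ l') = bl ε l * bl ε l' := by simp [bl]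
lemma _root_.Tyl.GS.bl_nonneg {ε : ℝ} (hε : 0 ≤ ε) (l : List ℕ) : 0 ≤ bl ε l := by
  induction l with
  | nil => simp [bl]
  | cons q l ih => rw [bl_cons]; exact mul_nonneg (bb_nonneg hε _) ih

include hn hd in
lemma ee_lower (N : ℕ) : ∀ l : List ℕ, 2 * l.sum + l.length < N → bl 0 l ≤ g.ee l := by
  induction N with
  | zero => intro l h; omega
  | succ N ih =>
    intro l hl
    match l with
    | [] => rw [ee_nil]; simp [bl]
    | 0 :: l => rw [ee_zero g hd, bl_cons, bb_zero, one_mul]; exact ih l (by simp at hl; omega)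
    | (p + 1) :: l =>
      have hnn := g.ee_nonneg hn hd N
      rw [ee_rec g hn hd]
      have h1 := g.cross_nonneg p N hnn l [] (by simp at hl ⊢; omega)
      have h2 := hnn ((p - 1) :: l) (by simp at hl ⊢; omega)
      have h3 := hnn (p :: l) (by simp at hl ⊢; omega)
      have h0 : 0 ≤ rh n d := rh_nonneg
      have h4 : bl 0 ((p + 1) :: l) ≤ ∑ q ∈ Finset.range p, (g.ee (q :: (p - 1 - q) :: l) + rh n d * g.ee ((q + 1) :: (p - 1 - q) :: l)) := by
        rw [bl_cons, bb_succ, zero_mul, add_zero, Finset.sum_mul]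
        refine Finset.sum_le_sum fun q hq => ?_
        rw [Finset.mem_range] at hq
        have h5 := ih (q :: (p - 1 - q) :: l) (by simp at hl ⊢; omega)
        have := hnn ((q + 1) :: (p - 1 - q) :: l) (by simp at hl ⊢; omega)
        rw [bl_cons, bl_cons, ← mul_assoc] at h5
        have : 0 ≤ rh n d * g.ee ((q + 1) :: (p - 1 - q) :: l) := by positivity
        linarith
      have : 0 ≤ (p / d : ℝ) * (g.ee ((p - 1) :: l) + rh n d * g.ee (p :: l)) := by positivity
      linarith

section upper
variable {ε δ Λ : ℝ} (M : ℕ) (hε : 0 < ε) (hδ : 0 ≤ δ) (hρ : rh n d ≤ ε) (hε1 : ε ≤ 1) (hΛ0 : 0 ≤ Λ)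
  (hΛ : ∀ p q, p + 1 + q ≤ M → bb ε (p + q - 1) + bb ε (p + q) ≤ Λ * (bb ε (p + 1) * bb ε q))
  (hδ2 : M * ((ε⁻¹) ^ 2 + 1) / d + 2 * M * Λ / d ^ 2 ≤ δ)

include hε hδ hρ hε1 hΛ in
lemma cross_upper (p N : ℕ) (ih : ∀ l : List ℕ, 2 * l.sum + l.length < N → l.sum ≤ M → g.ee l ≤ (1 + δ) ^ l.sum * bl ε l)
    (l pre : List ℕ)
    (h : 2 * (p + 1 + l.sum + pre.sum) + l.length + pre.length + 1 ≤ N)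
    (hM : p + 1 + l.sum + pre.sum ≤ M) :
    g.cross p l pre ≤ (2 * l.sum / d ^ 2 : ℝ) * Λ * (1 + δ) ^ (p + l.sum + pre.sum) * (bb ε (p + 1) * bl ε l * bl ε pre) := by
  induction l generalizing pre with
  | nil => simp [cross]
  | cons q l ih' =>
    rw [cross]
    have h1 := ih' (q :: pre) (by simp at h ⊢; omega) (by simp at hM ⊢; omega)
    simp only [List.sum_cons, bl_cons] at h1 ⊢
    rw [show p + (q + l.sum) + pre.sum = p + l.sum + (q + pre.sum) by ring, Nat.cast_add]
    set E := (1 + δ) ^ (p + l.sum + (q + pre.sum)) with hE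
    have hE0 : 0 ≤ E := by positivity
    have hbl : 0 ≤ bl ε l := bl_nonneg hε.le _
    have hbpre : 0 ≤ bl ε pre := bl_nonneg hε.le _
    have hb := fun q => bb_nonneg hε.le q
    have h4 : 0 ≤ rh n d := rh_nonneg
    suffices hs : (2 * q / d ^ 2 : ℝ) * (g.ee ((p + q - 1) :: (l ++ pre)) + rh n d * g.ee ((p + q) :: (l ++ pre)))
        ≤ (2 * q / d ^ 2 : ℝ) * Λ * E * (bb ε (p + 1) * (bb ε q * bl ε l) * bl ε pre) by
      refine (add_le_add hs h1).trans (le_of_eq ?_)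
      ring
    rcases Nat.eq_zero_or_pos q with rfl | hq
    · simp
    have h2 := ih ((p + q - 1) :: (l ++ pre)) (by simp at h ⊢; omega) (by simp at hM ⊢; omega)
    have h3 := ih ((p + q) :: (l ++ pre)) (by simp at h ⊢; omega) (by simp at hM ⊢; omega)
    simp only [List.sum_cons, List.sum_append, bl_cons, bl_append] at h2 h3
    rw [show p + q + (l.sum + pre.sum) = p + l.sum + (q + pre.sum) by ring, ← hE] at h3
    have hE2 : (1 + δ) ^ (p + q - 1 + (l.sum + pre.sum)) ≤ E :=
      pow_le_pow_right₀ (by linarith) (by omega)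
    have h2' : g.ee ((p + q - 1) :: (l ++ pre)) ≤ E * (bb ε (p + q - 1) * (bl ε l * bl ε pre)) :=
      h2.trans (mul_le_mul_of_nonneg_right hE2 (mul_nonneg (hb _) (mul_nonneg hbl hbpre)))
    have h3' : rh n d * g.ee ((p + q) :: (l ++ pre)) ≤ E * (bb ε (p + q) * (bl ε l * bl ε pre)) := by
      have hX : 0 ≤ E * (bb ε (p + q) * (bl ε l * bl ε pre)) := mul_nonneg hE0 (mul_nonneg (hb _) (mul_nonneg hbl hbpre))
      calc _ ≤ rh n d * (E * (bb ε (p + q) * (bl ε l * bl ε pre))) := by gcongr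
        _ ≤ 1 * (E * (bb ε (p + q) * (bl ε l * bl ε pre))) := by gcongr; linarith
        _ = _ := one_mul _
    have hq' := hΛ p q (by simp at hM; omega)
    have hfac : (0:ℝ) ≤ 2 * q / d ^ 2 := by positivity
    calc _ ≤ (2 * q / d ^ 2 : ℝ) * (E * ((bl ε l * bl ε pre)) * (bb ε (p + q - 1) + bb ε (p + q))) := by
          refine mul_le_mul_of_nonneg_left ?_ hfac
          linarith
      _ ≤ (2 * q / d ^ 2 : ℝ) * (E * ((bl ε l * bl ε pre)) * (Λ * (bb ε (p + 1) * bb ε q))) := by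
          refine mul_le_mul_of_nonneg_left ?_ hfac
          exact mul_le_mul_of_nonneg_left hq' (mul_nonneg hE0 (mul_nonneg hbl hbpre))
      _ = _ := by ring

include hn hd hε hδ hρ hε1 hΛ hΛ0 hδ2 in
lemma ee_upper (N : ℕ) : ∀ l : List ℕ, 2 * l.sum + l.length < N → l.sum ≤ M → g.ee l ≤ (1 + δ) ^ l.sum * bl ε l := by
  induction N with
  | zero => intro l h; omega
  | succ N ih =>
    intro l hl hM
    match l with
    | [] => rw [ee_nil]; simp [bl]
    | 0 :: l => 
      rw [ee_zero g hd, bl_cons, bb_zero, one_mul, List.sum_cons, zero_add]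
      exact ih l (by simp at hl; omega) (by simpa using hM)
    | (p + 1) :: l =>
      have hd' : (0:ℝ) < d := by exact_mod_cast hd
      rw [ee_rec g hn hd]
      have h1 := g.cross_upper M hε hδ hρ hε1 hΛ p N ih l [] (by simp at hl ⊢; omega) (by simp at hM ⊢; omega)
      have h0 : 0 ≤ rh n d := rh_nonneg
      have hbl : 0 ≤ bl ε l := bl_nonneg hε.le _
      have hb := fun q => bb_nonneg hε.le q
      simp only [List.sum_cons, bl_cons, List.sum_nil, add_zero] at h1 ⊢
      rw [show bl ε [] = 1 by simp [bl], mul_one] at h1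
      rw [show p + 1 + l.sum = (p + l.sum) + 1 by ring, pow_succ]
      simp only [List.sum_cons] at hM
      set E := (1 + δ) ^ (p + l.sum) with hE
      have hE0 : 0 ≤ E := by positivity
      have h1d : 1 ≤ 1 + δ := by linarith
      set B := bb ε (p + 1) * bl ε l with hB
      have hB0 : 0 ≤ B := mul_nonneg (hb _) hbl
      have hA : ∑ q ∈ Finset.range p, (g.ee (q :: (p - 1 - q) :: l) + rh n d * g.ee ((q + 1) :: (p - 1 - q) :: l)) ≤ E * B := by
        have : ∀ q ∈ Finset.range p, (g.ee (q :: (p - 1 - q) :: l) + rh n d * g.ee ((q + 1) :: (p - 1 - q) :: l)) ≤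
            E * bl ε l * (bb ε q * bb ε (p - 1 - q) + ε * (bb ε (q + 1) * bb ε (p - (q + 1)))) := by
          intro q hq
          rw [Finset.mem_range] at hq
          have h2 := ih (q :: (p - 1 - q) :: l) (by simp at hl ⊢; omega) (by simp at hM ⊢; omega)
          have h3 := ih ((q + 1) :: (p - 1 - q) :: l) (by simp at hl ⊢; omega) (by simp at hM ⊢; omega)
          simp only [List.sum_cons, bl_cons] at h2 h3
          rw [show q + 1 + (p - 1 - q + l.sum) = p + l.sum by omega, ← hE] at h3
          have hE2 : (1 + δ) ^ (q + (p - 1 - q + l.sum)) ≤ E := pow_le_pow_right₀ h1d (by omega)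
          have h2' := h2.trans (mul_le_mul_of_nonneg_right hE2 (mul_nonneg (hb _) (mul_nonneg (hb _) hbl)))
          have hX : 0 ≤ E * (bb ε (q + 1) * (bb ε (p - 1 - q) * bl ε l)) := mul_nonneg hE0 (mul_nonneg (hb _) (mul_nonneg (hb _) hbl))
          have h3' : rh n d * g.ee ((q + 1) :: (p - 1 - q) :: l) ≤ ε * (E * (bb ε (q + 1) * (bb ε (p - 1 - q) * bl ε l))) :=
            (mul_le_mul_of_nonneg_left h3 h0).trans (mul_le_mul_of_nonneg_right hρ hX)
          rw [show p - (q + 1) = p - 1 - q by omega]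
          linarith
        refine (Finset.sum_le_sum this).trans ?_
        rw [← Finset.mul_sum, Finset.sum_add_distrib, ← Finset.mul_sum, hB, bb_succ, Finset.sum_range_succ' _ p]
        have : 0 ≤ ε * (bb ε 0 * bb ε (p - 0)) := mul_nonneg hε.le (mul_nonneg (hb _) (hb _))
        have := mul_le_mul_of_nonneg_left (le_add_of_nonneg_right this (a := (∑ i ∈ Finset.range p, bb ε i * bb ε (p - 1 - i) + ε * ∑ i ∈ Finset.range p, bb ε (i + 1) * bb ε (p - (i + 1))))) (mul_nonneg hE0 hbl)
        linarith
      have hC : (p / d : ℝ) * (g.ee ((p - 1) :: l) + rh n d * g.ee (p :: l)) ≤ (M * ((ε⁻¹) ^ 2 + 1) / d) * (E * B) := by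
        rcases Nat.eq_zero_or_pos p with rfl | hp
        · simp only [Nat.cast_zero, zero_div, zero_mul]; positivity
        have h2 := ih ((p - 1) :: l) (by simp at hl ⊢; omega) (by simp at hM ⊢; omega)
        have h3 := ih (p :: l) (by simp at hl ⊢; omega) (by simp at hM ⊢; omega)
        simp only [List.sum_cons, bl_cons] at h2 h3
        rw [← hE] at h3
        have hE2 : (1 + δ) ^ (p - 1 + l.sum) ≤ E := pow_le_pow_right₀ h1d (by omega)
        have h2' := h2.trans (mul_le_mul_of_nonneg_right hE2 (mul_nonneg (hb _) hbl))
        have s1 : bb ε p ≤ ε⁻¹ * bb ε (p + 1) := by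
          rw [inv_mul_eq_div, le_div_iff₀ hε, mul_comm]; exact bb_step hε.le p
        have s2 : bb ε (p - 1) ≤ ε⁻¹ * bb ε p := by
          rw [inv_mul_eq_div, le_div_iff₀ hε, mul_comm]
          have := bb_step hε.le (p - 1)
          rwa [show p - 1 + 1 = p by omega] at this
        have s3 : bb ε (p - 1) ≤ (ε⁻¹) ^ 2 * bb ε (p + 1) := by
          refine s2.trans ?_
          rw [sq, mul_assoc]; gcongr
        have s4 : rh n d * bb ε p ≤ bb ε (p + 1) := (mul_le_mul_of_nonneg_right hρ (hb _)).trans (bb_step hε.le p)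
        have t1 : g.ee ((p - 1) :: l) ≤ (ε⁻¹) ^ 2 * (E * B) := by
          refine h2'.trans ?_
          have := mul_le_mul_of_nonneg_left s3 (mul_nonneg hE0 hbl)
          rw [hB]; linarith
        have t2 : rh n d * g.ee (p :: l) ≤ E * B := by
          have u1 := mul_le_mul_of_nonneg_left h3 h0
          have := mul_le_mul_of_nonneg_left s4 (mul_nonneg hE0 hbl)
          rw [hB]; linarith
        have hpM : (p : ℝ) ≤ M := by exact_mod_cast (by omega : p ≤ M)
        have hEB : 0 ≤ E * B := mul_nonneg hE0 hB0
        calc _ ≤ (p / d : ℝ) * (((ε⁻¹) ^ 2 + 1) * (E * B)) := by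
              refine mul_le_mul_of_nonneg_left ?_ (by positivity)
              linarith
          _ ≤ (M / d : ℝ) * (((ε⁻¹) ^ 2 + 1) * (E * B)) := by gcongr
          _ = _ := by ring
      have hD : g.cross p l [] ≤ (2 * M * Λ / d ^ 2) * (E * B) := by
        refine h1.trans ?_
        have hs : (l.sum : ℝ) ≤ M := by exact_mod_cast (by omega : l.sum ≤ M)
        have hEB : 0 ≤ E * B := mul_nonneg hE0 hB0
        calc _ = (2 * l.sum / d ^ 2 : ℝ) * Λ * (E * B) := by ring
          _ ≤ (2 * M / d ^ 2 : ℝ) * Λ * (E * B) := by gcongr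
          _ = _ := by ring
      have := mul_le_mul_of_nonneg_right hδ2 (mul_nonneg hE0 hB0)
      linarith
end upper
end GS
end Tyl

open MeasureTheory ProbabilityTheory Filter Matrix

namespace Tyl

/-- the gaussian polynomial algebra -/
noncomputable def gs (n d : ℕ) : GS n d (Pol n d) where
  X j a := MvPolynomial.X (j, a)
  D j a := MvPolynomial.pderiv (j, a)
  hD j a k b := by
    rw [MvPolynomial.pderiv_X]
    by_cases h : k = j ∧ b = a
    · rw [if_pos h, h.1, h.2, Pi.single_eq_same]
    · rw [if_neg h, Pi.single_eq_of_ne]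
      intro h'; simp only [Prod.mk.injEq] at h'; exact h h'
  L := L
  one := L_one
  st j a f := stein (j, a) f

/-- moments -/
noncomputable def em (n d : ℕ) (l : List ℕ) : ℝ := (gs n d).ee l

lemma em_lower {n d : ℕ} (hn : 0 < n) (hd : 0 < d) (l : List ℕ) : GS.bl 0 l ≤ em n d l :=
  (gs n d).ee_lower hn hd _ l (Nat.lt_succ_self _)

lemma em_upper {n d : ℕ} (hn : 0 < n) (hd : 0 < d) {ε δ Λ : ℝ} (M : ℕ) (hε : 0 < ε) (hρ : rh n d ≤ ε) (hε1 : ε ≤ 1) (hΛ0 : 0 ≤ Λ)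
  (hΛ : ∀ p q, p + 1 + q ≤ M → bb ε (p + q - 1) + bb ε (p + q) ≤ Λ * (bb ε (p + 1) * bb ε q))
  (hδ2 : M * ((ε⁻¹) ^ 2 + 1) / d + 2 * M * Λ / d ^ 2 ≤ δ) (l : List ℕ) (hl : l.sum ≤ M) :
    em n d l ≤ (1 + δ) ^ l.sum * GS.bl ε l :=
  (gs n d).ee_upper hn hd M hε (le_trans (by positivity) hδ2) hρ hε1 hΛ0 hΛ hδ2 _ l (Nat.lt_succ_self _) hl

section asym
variable (n : ℕ → ℕ) (hn : Tendsto n atTop atTop)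
    (hdn : Tendsto (fun d : ℕ => (d : ℝ) / (n d : ℝ)) atTop (nhds 0))

include hdn in
lemma rh_tendsto : Tendsto (fun d => rh (n d) d) atTop (nhds 0) := by
  have := (Real.continuous_sqrt.tendsto 0).comp hdn
  simpa [rh, Function.comp_def] using this

include hn hdn in
lemma em_fixed (k : ℕ) (η : ℝ) (hη : 0 < η) :
    ∀ᶠ d in atTop, em (n d) d [2 * k, 2 * k] ≤ bb 0 (2 * k) ^ 2 + η := by
  have hc : Continuous fun ε => bb ε (2 * k) ^ 2 := (bb_cont _).pow 2
  have h1 : ∀ᶠ ε in nhds (0:ℝ), bb ε (2 * k) ^ 2 < bb 0 (2 * k) ^ 2 + η :=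
    hc.continuousAt.eventually_lt continuousAt_const (by linarith)
  obtain ⟨r, hr, hr'⟩ := Metric.eventually_nhds_iff.1 h1
  set ε := min (r / 2) 1 with hεdef
  have hε : 0 < ε := by positivity
  have hε1 : ε ≤ 1 := min_le_right _ _
  have hbε : bb ε (2 * k) ^ 2 < bb 0 (2 * k) ^ 2 + η := by
    apply hr'
    rw [Real.dist_eq, sub_zero, abs_of_pos hε]
    exact lt_of_le_of_lt (min_le_left _ _) (by linarith)
  set M := 4 * k with hM
  set Λ := ∑ p ∈ Finset.range (M + 1), ∑ q ∈ Finset.range (M + 1), (bb ε (p + q - 1) + bb ε (p + q)) / (bb ε (p + 1) * bb ε q) with hΛdef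
  have hterm : ∀ p q, 0 ≤ (bb ε (p + q - 1) + bb ε (p + q)) / (bb ε (p + 1) * bb ε q) := by
    intro p q
    have := fun q => bb_nonneg hε.le q
    exact div_nonneg (add_nonneg (this _) (this _)) (mul_nonneg (this _) (this _))
  have hΛ0 : 0 ≤ Λ := Finset.sum_nonneg fun p _ => Finset.sum_nonneg fun q _ => hterm p q
  have hΛ : ∀ p q, p + 1 + q ≤ M → bb ε (p + q - 1) + bb ε (p + q) ≤ Λ * (bb ε (p + 1) * bb ε q) := by
    intro p q hpq
    have hpos : 0 < bb ε (p + 1) * bb ε q := mul_pos (bb_pos hε _) (bb_pos hε _)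
    rw [← div_le_iff₀ hpos]
    calc _ ≤ ∑ q ∈ Finset.range (M + 1), (bb ε (p + q - 1) + bb ε (p + q)) / (bb ε (p + 1) * bb ε q) :=
          Finset.single_le_sum (f := fun q => (bb ε (p + q - 1) + bb ε (p + q)) / (bb ε (p + 1) * bb ε q))
            (fun q _ => hterm p q) (Finset.mem_range.2 (by omega))
      _ ≤ _ := Finset.single_le_sum (f := fun p => ∑ q ∈ Finset.range (M + 1), (bb ε (p + q - 1) + bb ε (p + q)) / (bb ε (p + 1) * bb ε q))
            (fun p _ => Finset.sum_nonneg fun q _ => hterm p q) (Finset.mem_range.2 (by omega))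
  have hδ : Tendsto (fun d : ℕ => (1 + (M * ((ε⁻¹) ^ 2 + 1) / d + 2 * M * Λ / d ^ 2 : ℝ)) ^ (4 * k) * bb ε (2 * k) ^ 2) atTop
      (nhds ((1 + (0 + 0)) ^ (4 * k) * bb ε (2 * k) ^ 2)) := by
    refine Tendsto.mul_const _ (Tendsto.pow (Tendsto.const_add _ (Tendsto.add ?_ ?_)) _)
    · exact tendsto_const_div_atTop_nhds_zero_nat _
    · exact Tendsto.div_atTop tendsto_const_nhds ((tendsto_pow_atTop (by norm_num)).comp tendsto_natCast_atTop_atTop)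
  simp only [add_zero, one_pow, one_mul] at hδ
  filter_upwards [hδ.eventually_lt_const hbε, (rh_tendsto n hdn).eventually_le_const hε, hn.eventually_ge_atTop 1,
    eventually_ge_atTop 1] with d h1 h2 h3 h4
  refine le_trans (em_upper (by omega) (by omega) M hε h2 hε1 hΛ0 hΛ le_rfl [2 * k, 2 * k] (by simp; omega)) ?_
  refine le_trans (le_of_eq ?_) h1.le
  simp [GS.bl, sq]
  left
  congr 1; omega

include hn hdn in
lemma em_growing (T : ℝ) (hT : 0 < T) :
    ∃ k : ℕ → ℕ, Tendsto (fun d : ℕ => (d : ℝ) * em (n d) d [2 * k d] / (2 + T) ^ (2 * k d)) atTop (nhds 0) := by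
  set a := (2 + T) / (2 + T / 2) with ha
  have ha1 : 1 < a := by rw [ha, one_lt_div (by positivity)]; linarith
  have ha0 : 0 < a := by linarith
  have hla : 0 < Real.log a := Real.log_pos ha1
  -- choose ε
  obtain ⟨ε, hε, hε1, hεT, hεa⟩ : ∃ ε : ℝ, 0 < ε ∧ ε ≤ 1 ∧ ε ≤ T / 8 ∧ (1 + 2 * ε) ^ 2 ≤ a := by
    have hc : Continuous fun ε : ℝ => (1 + 2 * ε) ^ 2 := by fun_prop
    have h1 : ∀ᶠ ε in nhds (0:ℝ), (1 + 2 * ε) ^ 2 < a :=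
      hc.continuousAt.eventually_lt continuousAt_const (by simpa using ha1)
    obtain ⟨r, hr, hr'⟩ := Metric.eventually_nhds_iff.1 h1
    refine ⟨min (r / 2) (min 1 (T / 8)), by positivity, ?_, ?_, ?_⟩
    · exact (min_le_right _ _).trans (min_le_left _ _)
    · exact (min_le_right _ _).trans (min_le_right _ _)
    · apply le_of_lt; apply hr'
      rw [Real.dist_eq, sub_zero, abs_of_pos (by positivity)]
      exact lt_of_le_of_lt (min_le_left _ _) (by linarith)
  set x := 2 + 4 * ε with hx
  have hx0 : 0 < x := by positivity
  have hxc : (x⁻¹) ^ 2 + ε * x⁻¹ ≤ 1 / 4 := by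
    have : (x⁻¹) ^ 2 + ε * x⁻¹ = (1 + ε * x) / x ^ 2 := by field_simp
    rw [this, div_le_iff₀ (by positivity)]
    rw [hx]; nlinarith
  set k : ℕ → ℕ := fun d => ⌈Real.log d / Real.log a⌉₊ with hk
  refine ⟨k, ?_⟩
  have hk1 : ∀ d : ℕ, 1 ≤ d → (d : ℝ) ≤ a ^ k d := by
    intro d hd
    have hd' : (0 : ℝ) < d := by exact_mod_cast hd
    have h := Nat.le_ceil (Real.log d / Real.log a)
    rw [div_le_iff₀ hla] at h
    have := Real.exp_le_exp.2 h
    rw [Real.exp_log hd', mul_comm, Real.exp_mul, Real.exp_log ha0, Real.rpow_natCast] at this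
    exact this
  have hk2' : ∀ d : ℕ, 1 ≤ d → (k d : ℝ) ≤ Real.log d / Real.log a + 1 := by
    intro d hd
    have hd' : (1 : ℝ) ≤ d := by exact_mod_cast hd
    exact (Nat.ceil_lt_add_one (div_nonneg (Real.log_nonneg hd') hla.le)).le
  have hk2 : ∀ d : ℕ, 1 ≤ d → a ^ k d ≤ a * d := by
    intro d hd
    have hd' : (0 : ℝ) < d := by exact_mod_cast hd
    have h := hk2' d hd
    have h2 : (k d : ℝ) * Real.log a ≤ Real.log d + Real.log a := by
      have := mul_le_mul_of_nonneg_right h hla.le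
      rwa [add_mul, div_mul_cancel₀ _ hla.ne', one_mul] at this
    have := Real.exp_le_exp.2 h2
    rw [Real.exp_add, Real.exp_log hd', mul_comm (k d : ℝ), Real.exp_mul, Real.exp_log ha0, Real.rpow_natCast] at this
    linarith
  set Λ : ℕ → ℝ := fun d => 64 * (ε⁻¹) ^ 2 * (2 * k d + 2) ^ 4 * (1 + 2 * ε) ^ (2 * k d) with hΛd
  have hΛ0 : ∀ d, 0 ≤ Λ d := fun d => by positivity
  have hΛ : ∀ d p q, p + 1 + q ≤ 2 * k d → bb ε (p + q - 1) + bb ε (p + q) ≤ Λ d * (bb ε (p + 1) * bb ε q) := by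
    intro d p q hpq
    have b1 := bb_le hε.le hx0 hxc (p + q - 1)
    have b2 := bb_le hε.le hx0 hxc (p + q)
    have hx1 : 1 ≤ x := by linarith
    have b3 : x ^ (p + q - 1) ≤ x ^ (p + q) := pow_le_pow_right₀ hx1 (by omega)
    have b4 : x ^ (p + q) = 2 ^ (p + q) * (1 + 2 * ε) ^ (p + q) := by rw [← mul_pow, hx]; ring
    have b5 : (1 + 2 * ε) ^ (p + q) ≤ (1 + 2 * ε) ^ (2 * k d) := pow_le_pow_right₀ (by linarith) (by omega)
    have l1 := bb_lb hε hε1 (p + 1)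
    have l2 := bb_lb hε hε1 q
    set K := 2 * (k d : ℝ) + 2 with hK
    have hpK : ((p + 1 : ℕ) : ℝ) + 1 ≤ K := by
      have : ((p + 1 + q : ℕ) : ℝ) ≤ ((2 * k d : ℕ) : ℝ) := by exact_mod_cast hpq
      push_cast at this ⊢; rw [hK]; linarith [(Nat.cast_nonneg q : (0:ℝ) ≤ q)]
    have hqK : (q : ℝ) + 1 ≤ K := by
      have : ((p + 1 + q : ℕ) : ℝ) ≤ ((2 * k d : ℕ) : ℝ) := by exact_mod_cast hpq
      push_cast at this ⊢; rw [hK]; linarith [(Nat.cast_nonneg p : (0:ℝ) ≤ p)]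
    have hbp := bb_nonneg hε.le (p + 1)
    have hbq := bb_nonneg hε.le q
    have l1' : 2 ^ (p + 1) ≤ ε⁻¹ * (4 * K ^ 2 * bb ε (p + 1)) := by
      rw [inv_mul_eq_div, le_div_iff₀ hε, mul_comm]
      refine l1.trans ?_
      gcongr
    have l2' : 2 ^ q ≤ ε⁻¹ * (4 * K ^ 2 * bb ε q) := by
      rw [inv_mul_eq_div, le_div_iff₀ hε, mul_comm]
      refine l2.trans ?_
      gcongr
    have l3 : (2:ℝ) ^ (p + q) ≤ (ε⁻¹ * (4 * K ^ 2 * bb ε (p + 1))) * (ε⁻¹ * (4 * K ^ 2 * bb ε q)) := by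
      calc (2:ℝ) ^ (p + q) ≤ 2 ^ (p + 1) * 2 ^ q := by
            rw [← pow_add]; exact pow_le_pow_right₀ (by norm_num) (by omega)
        _ ≤ _ := mul_le_mul l1' l2' (by positivity) (by positivity)
    calc _ ≤ 4 * x ^ (p + q) := by linarith
      _ = 4 * (2 ^ (p + q) * (1 + 2 * ε) ^ (p + q)) := by rw [b4]
      _ ≤ 4 * (((ε⁻¹ * (4 * K ^ 2 * bb ε (p + 1))) * (ε⁻¹ * (4 * K ^ 2 * bb ε q))) * (1 + 2 * ε) ^ (2 * k d)) := by gcongr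
      _ = _ := by rw [hΛd]; ring
  set δ : ℕ → ℝ := fun d => ((2 * k d : ℕ) : ℝ) * ((ε⁻¹) ^ 2 + 1) / d + 2 * ((2 * k d : ℕ) : ℝ) * Λ d / d ^ 2 with hδd
  have hδ0 : ∀ d, 0 ≤ δ d := fun d => by have := hΛ0 d; positivity
  set C := ((ε⁻¹) ^ 2 + 1) + 128 * (ε⁻¹) ^ 2 * a with hC
  have hC0 : 0 ≤ C := by positivity
  have hδN : ∀ d : ℕ, 1 ≤ d → δ d * (2 * k d : ℕ) ≤ C * ((2 * k d + 2) ^ 6 / d) := by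
    intro d hd
    have hd' : (0 : ℝ) < d := by exact_mod_cast hd
    have hpw : (1 + 2 * ε) ^ (2 * k d) ≤ a * d := by
      rw [pow_mul]
      exact (pow_le_pow_left₀ (by positivity) hεa _).trans (hk2 d hd)
    have hΛle : Λ d ≤ 64 * (ε⁻¹) ^ 2 * (2 * k d + 2) ^ 4 * (a * d) := by
      rw [hΛd]; dsimp only; gcongr
    set K : ℝ := 2 * (k d : ℝ) + 2 with hK
    have hK1 : 1 ≤ K := by rw [hK]; linarith [(Nat.cast_nonneg (k d) : (0:ℝ) ≤ k d)]
    have hkK : ((2 * k d : ℕ) : ℝ) ≤ K := by push_cast; rw [hK]; linarith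
    have hk0 : (0:ℝ) ≤ ((2 * k d : ℕ) : ℝ) := by positivity
    have hK0 : 0 < K := by linarith
    rw [hδd]; dsimp only
    calc (((2 * k d : ℕ) : ℝ) * ((ε⁻¹) ^ 2 + 1) / d + 2 * ((2 * k d : ℕ) : ℝ) * Λ d / d ^ 2) * (2 * k d : ℕ)
        ≤ (K * ((ε⁻¹) ^ 2 + 1) / d + 2 * K * (64 * (ε⁻¹) ^ 2 * K ^ 4 * (a * d)) / d ^ 2) * K := by gcongr
      _ = ((ε⁻¹) ^ 2 + 1) * (K ^ 2 / d) + 128 * (ε⁻¹) ^ 2 * a * (K ^ 6 / d) := by field_simp; ring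
      _ ≤ ((ε⁻¹) ^ 2 + 1) * (K ^ 6 / d) + 128 * (ε⁻¹) ^ 2 * a * (K ^ 6 / d) := by
          gcongr
          norm_num
      _ = _ := by rw [hC]; ring
  have hKlim : Tendsto (fun d : ℕ => C * ((2 * (k d : ℝ) + 2) ^ 6 / d)) atTop (nhds 0) := by
    have hl : Tendsto (fun d : ℕ => (Real.log d) ^ 6 / (d:ℝ)) atTop (nhds 0) := by
      have := (Real.isLittleO_pow_log_id_atTop (n := 6)).tendsto_div_nhds_zero
      exact this.comp tendsto_natCast_atTop_atTop
    have hl2 := (hl.const_mul (C * (2 / Real.log a + 4) ^ 6))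
    rw [mul_zero] at hl2
    refine squeeze_zero' (Eventually.of_forall fun d => by positivity) ?_ hl2
    have hlog : ∀ᶠ d : ℕ in atTop, 1 ≤ Real.log d :=
      (Real.tendsto_log_atTop.comp tendsto_natCast_atTop_atTop).eventually_ge_atTop 1
    filter_upwards [hlog, eventually_ge_atTop 1] with d h1 h2
    have h3 := hk2' d h2
    have h4 : 2 * (k d : ℝ) + 2 ≤ (2 / Real.log a + 4) * Real.log d := by
      have : (2 / Real.log a + 4) * Real.log d = 2 * (Real.log d / Real.log a) + 4 * Real.log d := by ring
      rw [this]; linarith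
    calc C * ((2 * (k d : ℝ) + 2) ^ 6 / d) ≤ C * (((2 / Real.log a + 4) * Real.log d) ^ 6 / d) := by gcongr
      _ = _ := by ring
  have hone := tendsto_const_div_atTop_nhds_zero_nat (2 * Real.exp 1)
  refine squeeze_zero' ?_ ?_ hone
  · filter_upwards [hn.eventually_ge_atTop 1, eventually_ge_atTop 1] with d h3 h4
    have : 0 ≤ em (n d) d [2 * k d] := le_trans (GS.bl_nonneg le_rfl _) (em_lower (by omega) (by omega) _)
    positivity
  filter_upwards [hKlim.eventually_le_const one_pos, (rh_tendsto n hdn).eventually_le_const hε, hn.eventually_ge_atTop 1,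
    eventually_ge_atTop 1] with d h1 h2 h3 h4
  have hd' : (0 : ℝ) < d := by exact_mod_cast h4
  have hup := em_upper (by omega) (by omega) (2 * k d) hε h2 hε1 (hΛ0 d) (hΛ d) le_rfl [2 * k d] (by simp)
  have hup2 : em (n d) d [2 * k d] ≤ (1 + δ d) ^ (2 * k d) * bb ε (2 * k d) := by
    simpa [GS.bl, hδd] using hup
  have hexp : (1 + δ d) ^ (2 * k d) ≤ Real.exp 1 := by
    calc (1 + δ d) ^ (2 * k d) ≤ (Real.exp (δ d)) ^ (2 * k d) := by
          have := hδ0 d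
          refine pow_le_pow_left₀ (by positivity) ?_ _
          linarith [Real.add_one_le_exp (δ d)]
      _ = Real.exp (δ d * (2 * k d : ℕ)) := by rw [← Real.exp_nat_mul, mul_comm]
      _ ≤ _ := Real.exp_le_exp.2 ((hδN d h4).trans h1)
  have hb := bb_le hε.le hx0 hxc (2 * k d)
  have hem : em (n d) d [2 * k d] ≤ Real.exp 1 * (2 * x ^ (2 * k d)) :=
    hup2.trans (mul_le_mul hexp hb (bb_nonneg hε.le _) (Real.exp_pos _).le)
  have hxT : a * x ≤ 2 + T := by
    rw [ha, div_mul_eq_mul_div, div_le_iff₀ (by positivity)]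
    have : x ≤ 2 + T / 2 := by rw [hx]; linarith
    gcongr
  have hpow : a ^ (2 * k d) * x ^ (2 * k d) ≤ (2 + T) ^ (2 * k d) := by
    rw [← mul_pow]; exact pow_le_pow_left₀ (by positivity) hxT _
  have hd2 : (d : ℝ) ^ 2 ≤ a ^ (2 * k d) := by
    rw [mul_comm, pow_mul]; exact pow_le_pow_left₀ hd'.le (hk1 d h4) 2
  have hpos : 0 < x ^ (2 * k d) := by positivity
  rw [div_le_div_iff₀ (by positivity) hd']
  calc (d : ℝ) * em (n d) d [2 * k d] * d ≤ d * (Real.exp 1 * (2 * x ^ (2 * k d))) * d := by gcongr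
    _ = 2 * Real.exp 1 * ((d:ℝ) ^ 2 * x ^ (2 * k d)) := by ring
    _ ≤ 2 * Real.exp 1 * (a ^ (2 * k d) * x ^ (2 * k d)) := by gcongr
    _ ≤ _ := by gcongr
end asym
end Tyl

open MeasureTheory ProbabilityTheory Filter Matrix

namespace Tyl

/-- quadratic form bound -/
def QB {d : ℕ} (M : Matrix (Fin d) (Fin d) ℝ) (s : ℝ) : Prop := ∀ v, |v ⬝ᵥ M *ᵥ v| ≤ s * (v ⬝ᵥ v)

section spec
variable {d : ℕ} {M : Matrix (Fin d) (Fin d) ℝ} (hM : M.IsHermitian)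

noncomputable def evec (i : Fin d) : Fin d → ℝ := (hM.eigenvectorBasis i).ofLp

lemma evec_dot (i j : Fin d) : evec hM i ⬝ᵥ evec hM j = if i = j then 1 else 0 := by
  have := (orthonormal_iff_ite.1 hM.eigenvectorBasis.orthonormal) j i
  rw [EuclideanSpace.inner_eq_star_dotProduct] at this
  simp only [star_trivial] at this
  rw [evec, evec, this]
  simp [eq_comm]

lemma evec_mul (i : Fin d) : M *ᵥ evec hM i = hM.eigenvalues i • evec hM i :=
  hM.mulVec_eigenvectorBasis i

lemma evec_expand (v : Fin d → ℝ) : v = ∑ i, (evec hM i ⬝ᵥ v) • evec hM i := by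
  have := hM.eigenvectorBasis.sum_repr (WithLp.toLp 2 v)
  have h2 := congrArg WithLp.ofLp this
  simp only [WithLp.ofLp_sum, WithLp.ofLp_smul] at h2
  conv_lhs => rw [← h2]
  refine Finset.sum_congr rfl fun i _ => ?_
  rw [OrthonormalBasis.repr_apply_apply, EuclideanSpace.inner_eq_star_dotProduct]
  simp [evec, dotProduct_comm]

lemma evec_norm (v : Fin d → ℝ) : v ⬝ᵥ v = ∑ i, (evec hM i ⬝ᵥ v) ^ 2 := by
  conv_lhs => enter [2]; rw [evec_expand hM v]
  rw [dotProduct_sum]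
  refine Finset.sum_congr rfl fun i _ => ?_
  rw [dotProduct_smul, smul_eq_mul, dotProduct_comm v, sq]

lemma evec_quad (v : Fin d → ℝ) : v ⬝ᵥ M *ᵥ v = ∑ i, hM.eigenvalues i * (evec hM i ⬝ᵥ v) ^ 2 := by
  conv_lhs => enter [2]; rw [evec_expand hM v]
  rw [Matrix.mulVec_sum, dotProduct_sum]
  refine Finset.sum_congr rfl fun i _ => ?_
  rw [Matrix.mulVec_smul, evec_mul, dotProduct_smul, dotProduct_smul, smul_eq_mul, smul_eq_mul, dotProduct_comm v]
  ring

lemma QB_of_eig {s : ℝ} (h : ∀ i, |hM.eigenvalues i| ≤ s) : QB M s := by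
  intro v
  rw [evec_quad hM, evec_norm hM, Finset.mul_sum]
  refine (Finset.abs_sum_le_sum_abs _ _).trans (Finset.sum_le_sum fun i _ => ?_)
  rw [abs_mul, abs_of_nonneg (sq_nonneg (evec hM i ⬝ᵥ v))]
  exact mul_le_mul_of_nonneg_right (h i) (sq_nonneg _)

lemma eig_of_QB {s : ℝ} (h : QB M s) (i : Fin d) : |hM.eigenvalues i| ≤ s := by
  have := h (evec hM i)
  rw [evec_mul, dotProduct_smul, evec_dot] at this
  simpa using this

lemma trace_pow_eig (m : ℕ) : trace (M ^ m) = ∑ i, hM.eigenvalues i ^ m := by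
  have h := hM.spectral_theorem
  have h2 : M ^ m = Unitary.conjStarAlgAut ℝ _ hM.eigenvectorUnitary (diagonal (RCLike.ofReal ∘ hM.eigenvalues) ^ m) := by
    rw [map_pow, ← h]
  rw [h2, Unitary.conjStarAlgAut_apply, Matrix.trace_mul_cycle, Unitary.coe_star_mul_self, one_mul, Matrix.diagonal_pow,
    Matrix.trace_diagonal]
  simp

include hM in
lemma quad_pow_le (k : ℕ) (v : Fin d → ℝ) (hv : v ⬝ᵥ v = 1) : (v ⬝ᵥ M *ᵥ v) ^ (2 * k) ≤ trace (M ^ (2 * k)) := by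
  rw [trace_pow_eig hM]
  by_cases hk : k = 0
  · subst hk
    simp only [mul_zero, pow_zero, Finset.sum_const, Finset.card_univ, Fintype.card_fin, nsmul_eq_mul, mul_one]
    rcases Nat.eq_zero_or_pos d with rfl | hd
    · simp [dotProduct] at hv
    · exact_mod_cast hd
  have hex : ∃ i, |v ⬝ᵥ M *ᵥ v| ≤ |hM.eigenvalues i| := by
    by_contra! h
    rcases Nat.eq_zero_or_pos d with rfl | hd
    · simp [dotProduct] at hv
    haveI : Nonempty (Fin d) := ⟨⟨0, hd⟩⟩
    obtain ⟨i0, -, hi0⟩ := Finset.exists_max_image Finset.univ (fun i => |hM.eigenvalues i|) Finset.univ_nonempty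
    have := QB_of_eig hM (s := |hM.eigenvalues i0|) (fun i => hi0 i (Finset.mem_univ i)) v
    rw [hv, mul_one] at this
    linarith [h i0]
  obtain ⟨i, hi⟩ := hex
  calc (v ⬝ᵥ M *ᵥ v) ^ (2 * k) = |v ⬝ᵥ M *ᵥ v| ^ (2 * k) := by rw [pow_mul, pow_mul, sq_abs]
    _ ≤ |hM.eigenvalues i| ^ (2 * k) := by gcongr
    _ = hM.eigenvalues i ^ (2 * k) := by rw [pow_mul, pow_mul, sq_abs]
    _ ≤ _ := Finset.single_le_sum (f := fun i => hM.eigenvalues i ^ (2 * k)) (fun i _ => by rw [pow_mul]; positivity) (Finset.mem_univ i)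

include hM in
lemma trace_pow_le {s : ℝ} (h : QB M s) (k : ℕ) : trace (M ^ (2 * k)) ≤ d * s ^ (2 * k) := by
  rw [trace_pow_eig hM]
  calc _ ≤ ∑ _i : Fin d, s ^ (2 * k) := by
        refine Finset.sum_le_sum fun i _ => ?_
        calc hM.eigenvalues i ^ (2 * k) = |hM.eigenvalues i| ^ (2 * k) := by rw [pow_mul, pow_mul, sq_abs]
          _ ≤ _ := by gcongr; exact eig_of_QB hM h i
    _ = _ := by simp

include hM in
lemma trace_pow_nonneg (k : ℕ) : 0 ≤ trace (M ^ (2 * k)) := by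
  rw [trace_pow_eig hM]
  exact Finset.sum_nonneg fun i _ => by rw [pow_mul]; positivity

lemma not_QB {s : ℝ} (h : ¬ QB M s) : ∃ v, v ⬝ᵥ v = 1 ∧ s < |v ⬝ᵥ M *ᵥ v| := by
  simp only [QB, not_forall, not_le] at h
  obtain ⟨v, hv⟩ := h
  have hv0 : 0 < v ⬝ᵥ v := by
    rcases (dotProduct_self_star_nonneg v).lt_or_eq with h | h
    · simpa using h
    · exfalso
      have : v = 0 := by
        have h' : v ⬝ᵥ v = 0 := by simpa using h.symm
        exact dotProduct_self_eq_zero.1 h'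
      subst this
      simp at hv
  set r := (√(v ⬝ᵥ v))⁻¹ with hr
  have hr2 : r * r * (v ⬝ᵥ v) = 1 := by
    rw [hr, ← mul_inv, Real.mul_self_sqrt hv0.le, inv_mul_cancel₀ hv0.ne']
  refine ⟨r • v, ?_, ?_⟩
  · rw [smul_dotProduct, dotProduct_smul, smul_eq_mul, smul_eq_mul, ← mul_assoc, hr2]
  · rw [smul_dotProduct, Matrix.mulVec_smul, dotProduct_smul, smul_eq_mul, smul_eq_mul, ← mul_assoc, abs_mul,
      abs_of_nonneg (mul_self_nonneg r)]
    have hrr : 0 < r * r := by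
      have : 0 < r := by positivity
      positivity
    have := mul_lt_mul_of_pos_left hv hrr
    calc s = s * (r * r * (v ⬝ᵥ v)) := by rw [hr2, mul_one]
      _ = r * r * (s * (v ⬝ᵥ v)) := by ring
      _ < _ := this
end spec

noncomputable def Sr {n d : ℕ} (x : Fin n → Fin d → ℝ) : Matrix (Fin d) (Fin d) ℝ :=
  (n : ℝ)⁻¹ • ∑ j : Fin n, vecMulVec (x j) (x j)
noncomputable def Wr {n d : ℕ} (x : Fin n → Fin d → ℝ) : Matrix (Fin d) (Fin d) ℝ :=
  Real.sqrt ((n : ℝ) / d) • (Sr x - 1)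

lemma vmv_herm {d : ℕ} (v : Fin d → ℝ) : (vecMulVec v v).IsHermitian := by
  ext i j; simp [vecMulVec_apply, mul_comm]

lemma Sr_herm {n d : ℕ} (x : Fin n → Fin d → ℝ) : (Sr x).IsHermitian := by
  unfold Sr
  have h : (∑ j : Fin n, vecMulVec (x j) (x j)).IsHermitian := by
    rw [Matrix.IsHermitian, Matrix.conjTranspose_sum]
    exact Finset.sum_congr rfl fun j _ => vmv_herm (x j)
  rw [Matrix.IsHermitian, Matrix.conjTranspose_smul, h]; simp

lemma Wr_herm {n d : ℕ} (x : Fin n → Fin d → ℝ) : (Wr x).IsHermitian := by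
  unfold Wr
  rw [Matrix.IsHermitian, Matrix.conjTranspose_smul, Matrix.conjTranspose_sub, Sr_herm x]; simp

lemma ev_Wp {n d : ℕ} (hn : 0 < n) (hd : 0 < d) (x : Fin n → Fin d → ℝ) :
    ((gs n d).Wp (cc n d)).map (ev x) = Wr x := by
  have hn' : (0 : ℝ) < n := by exact_mod_cast hn
  have hd' : (0 : ℝ) < d := by exact_mod_cast hd
  have hsm : ∀ (r : ℝ) (p : Pol n d), ev x (r • p) = r * ev x p := by
    intro r p; simp [ev, MvPolynomial.smul_eval]
  have hX : ∀ j a, ev x ((gs n d).X j a) = x j a := by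
    intro j a; simp [ev, gs]
  have hcc : cc n d = Real.sqrt ((n : ℝ) / d) * (n : ℝ)⁻¹ := by
    rw [cc, Real.sqrt_mul hn'.le, Real.sqrt_div hn'.le]
    have h2 : 0 < √(d : ℝ) := Real.sqrt_pos.2 hd'
    have h3 : 0 < √(n : ℝ) := Real.sqrt_pos.2 hn'
    have h1 : √(n : ℝ) * √(n : ℝ) = n := Real.mul_self_sqrt hn'.le
    field_simp
    nlinarith
  apply Matrix.ext
  intro a b
  rw [Matrix.map_apply, GS.Wp, Matrix.smul_apply, hsm, Matrix.sub_apply, map_sub, Matrix.smul_apply, hsm,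
    Matrix.mul_apply, map_sum]
  have h1 : ∑ j, ev x ((gs n d).Gm a j * (gs n d).Gmᵀ j b) = ∑ j, x j a * x j b := by
    refine Finset.sum_congr rfl fun j _ => ?_
    rw [map_mul]
    simp only [GS.Gm, Matrix.transpose_apply, Matrix.of_apply]
    rw [hX, hX]
  have h2 : ev x ((1 : Matrix (Fin d) (Fin d) (Pol n d)) a b) = (1 : Matrix (Fin d) (Fin d) ℝ) a b := by
    rw [Matrix.one_apply, Matrix.one_apply]; split_ifs <;> simp
  rw [h1, h2, Wr, Sr, Matrix.smul_apply, Matrix.sub_apply, Matrix.smul_apply, Matrix.sum_apply, hcc]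
  simp only [vecMulVec_apply, smul_eq_mul]
  field_simp

lemma ev_tp {n d : ℕ} (hn : 0 < n) (hd : 0 < d) (x : Fin n → Fin d → ℝ) (q : ℕ) :
    ev x ((gs n d).tp (cc n d) q) = (d : ℝ)⁻¹ * trace (Wr x ^ q) := by
  have hsm : ∀ (r : ℝ) (p : Pol n d), ev x (r • p) = r * ev x p := by
    intro r p; simp [ev, MvPolynomial.smul_eval]
  rw [GS.tp, hsm, ← ev_Wp hn hd, ← Matrix.map_pow]
  congr 1
  exact AddMonoidHom.map_trace (ev x : Pol n d →+ ℝ) _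

lemma ev_tl {n d : ℕ} (hn : 0 < n) (hd : 0 < d) (x : Fin n → Fin d → ℝ) (l : List ℕ) :
    ev x ((gs n d).tl l) = (l.map fun q => (d : ℝ)⁻¹ * trace (Wr x ^ q)).prod := by
  induction l with
  | nil => simp [GS.tl]
  | cons q l ih => rw [GS.tl_cons, map_mul, ih, ev_tp hn hd]; simp

lemma em_eq (n d : ℕ) (l : List ℕ) : em n d l = L ((gs n d).tl l) := rfl

end Tyl

open MeasureTheory ProbabilityTheory Filter Matrix

namespace Tyl

lemma markov {α : Type*} [MeasurableSpace α] {μ : Measure α} {f : α → ℝ} (hf : Integrable f μ) (h0 : ∀ x, 0 ≤ f x)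
    {c : ℝ} (hc : 0 < c) : μ {x | c ≤ f x} ≤ ENNReal.ofReal ((∫ x, f x ∂μ) / c) := by
  have h1 := meas_ge_le_lintegral_div (μ := μ) (f := fun x => ENNReal.ofReal (f x)) hf.aestronglyMeasurable.aemeasurable.ennreal_ofReal
    (ε := ENNReal.ofReal c) (by simpa using hc) (by simp)
  rw [ENNReal.ofReal_div_of_pos hc, ofReal_integral_eq_lintegral_ofReal hf (ae_of_all _ h0)]
  refine le_trans (measure_mono ?_) h1
  intro x hx
  exact ENNReal.ofReal_le_ofReal hx

lemma tends0 {p : ℕ → ENNReal} {f : ℕ → ℝ} (hf : Tendsto f atTop (nhds 0)) (h : ∀ᶠ d in atTop, p d ≤ ENNReal.ofReal (f d)) :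
    Tendsto p atTop (nhds 0) := by
  have h2 : Tendsto (fun d => ENNReal.ofReal (f d)) atTop (nhds 0) := by
    simpa using ENNReal.tendsto_ofReal hf
  exact tendsto_of_tendsto_of_tendsto_of_le_of_le' tendsto_const_nhds h2 (Eventually.of_forall fun _ => zero_le) h

section
variable (n : ℕ → ℕ) (hn : Tendsto n atTop atTop)
    (hdn : Tendsto (fun d : ℕ => (d : ℝ) / (n d : ℝ)) atTop (nhds 0))

include hn hdn in
lemma ub_S (T : ℝ) (hT : 0 < T) :
    Tendsto (fun d => gsam (n d) d {x | ¬ QB (Wr x) (2 + T)}) atTop (nhds 0) := by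
  obtain ⟨k, hk⟩ := em_growing n hn hdn T hT
  refine tends0 hk ?_
  filter_upwards [hn.eventually_gt_atTop 0, eventually_gt_atTop 0] with d hnd hd
  have hd' : (0 : ℝ) < d := by exact_mod_cast hd
  have hpos : (0 : ℝ) < (2 + T) ^ (2 * k d) / d := by positivity
  have hev : ∀ x : Fin (n d) → Fin d → ℝ, ev x ((gs (n d) d).tl [2 * k d]) = (d : ℝ)⁻¹ * trace (Wr x ^ (2 * k d)) := by
    intro x; rw [ev_tl hnd hd]; simp
  have := markov (μ := gsam (n d) d) (f := fun x => ev x ((gs (n d) d).tl [2 * k d])) (integrable_ev _) (fun x => by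
    rw [hev]; exact mul_nonneg (by positivity) (trace_pow_nonneg (Wr_herm x) _)) hpos
  rw [← L_apply, ← em_eq] at this
  refine (measure_mono ?_).trans (this.trans (le_of_eq ?_))
  · intro x hx
    obtain ⟨v, hv, hv2⟩ := not_QB hx
    have := quad_pow_le (Wr_herm x) (k d) v hv
    simp only [Set.mem_ofPred_eq]
    rw [hev, div_eq_inv_mul]
    refine mul_le_mul_of_nonneg_left (le_trans ?_ this) (by positivity)
    calc (2 + T) ^ (2 * k d) ≤ |v ⬝ᵥ Wr x *ᵥ v| ^ (2 * k d) := by gcongr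
      _ = _ := by rw [pow_mul, pow_mul, sq_abs]
  · congr 1
    field_simp

lemma exists_k (T : ℝ) (hT : 0 < T) (hT2 : T < 2) : ∃ k, 2 * (2 - T) ^ (2 * k) ≤ bb 0 (2 * k) := by
  set r := ((2 - T) / 2) ^ 2 with hr
  have hr0 : 0 < r := by have : 0 < 2 - T := by linarith
                         positivity
  have hr1 : r < 1 := by
    rw [hr, sq_lt_one_iff₀ (by linarith)]; linarith
  have h1 : Tendsto (fun k : ℕ => (k : ℝ) ^ 2 * r ^ k) atTop (nhds 0) :=
    tendsto_pow_const_mul_const_pow_of_lt_one 2 hr0.le hr1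
  have h2 := (tendsto_add_atTop_iff_nat 1).2 h1
  obtain ⟨k, hk⟩ := (h2.eventually_le_const (u := r / 4) (by positivity)).exists
  refine ⟨k, le_trans ?_ (bb_catalan (le_refl 0) k)⟩
  have h3 := catalan_lb k
  push_cast at hk
  have h4 : ((k : ℝ) + 1) ^ 2 * r ^ k ≤ 1 / 4 := by
    rw [pow_succ r, ← mul_assoc] at hk
    have : ((k : ℝ) + 1) ^ 2 * r ^ k * r ≤ 1 / 4 * r := by linarith
    exact le_of_mul_le_mul_right this hr0
  have h5 : (2 - T) ^ (2 * k) = 4 ^ k * r ^ k := by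
    rw [hr, ← mul_pow, pow_mul]; congr 1; ring
  rw [h5]
  have h3' : (4 : ℝ) ^ k ≤ 2 * ((k : ℝ) + 1) ^ 2 * catalan k := by exact_mod_cast h3
  have hrk : 0 < r ^ k := by positivity
  have hc : (0 : ℝ) ≤ catalan k := by positivity
  calc 2 * (4 ^ k * r ^ k) ≤ 2 * ((2 * ((k : ℝ) + 1) ^ 2 * catalan k) * r ^ k) := by gcongr
    _ = 4 * (((k : ℝ) + 1) ^ 2 * r ^ k) * catalan k := by ring
    _ ≤ 4 * (1 / 4) * catalan k := by gcongr
    _ = _ := by ring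

include hn hdn in
lemma lb_S (T : ℝ) (hT : 0 < T) (hT2 : T < 2) :
    Tendsto (fun d => gsam (n d) d {x | QB (Wr x) (2 - T)}) atTop (nhds 0) := by
  obtain ⟨k, hk⟩ := exists_k T hT hT2
  set β := bb 0 (2 * k) with hβ
  have hβ0 : 0 < β := by
    have : 0 < 2 - T := by linarith
    have : 0 < (2 - T) ^ (2 * k) := by positivity
    linarith
  rw [ENNReal.tendsto_nhds_zero]
  intro ε hε
  by_cases hεt : ε = ⊤
  · simp [hεt]
  set η := ε.toReal * (β ^ 2 / 4) with hη
  have hε' : 0 < ε.toReal := ENNReal.toReal_pos hε.ne' hεt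
  filter_upwards [hn.eventually_gt_atTop 0, eventually_gt_atTop 0, em_fixed n hn hdn k η (by positivity)] with d hnd hd hem
  set τ := (gs (n d) d).tl [2 * k] with hτ
  have hev : ∀ x : Fin (n d) → Fin d → ℝ, ev x τ = (d : ℝ)⁻¹ * trace (Wr x ^ (2 * k)) := by
    intro x; rw [hτ, ev_tl hnd hd]; simp
  have htt : (gs (n d) d).tl [2 * k, 2 * k] = τ * τ := by
    rw [hτ, GS.tl_cons, GS.tl_cons]; simp [GS.tl]
  set p : Pol (n d) d := (τ - MvPolynomial.C β) ^ 2 with hp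
  have hL : L p ≤ η := by
    have h1 : p = τ * τ + ((-2 * β) • τ + MvPolynomial.C (β ^ 2)) := by
      rw [hp, MvPolynomial.smul_eq_C_mul, show (-2 * β) = -(β + β) by ring, map_neg, map_add, map_pow]; ring
    have h2 : β ≤ L τ := by
      have := em_lower hnd hd [2 * k]
      rw [em_eq] at this
      simpa [GS.bl, ← hβ, ← hτ] using this
    rw [h1, map_add, map_add, map_smul, L_C, ← htt, ← em_eq, smul_eq_mul]
    nlinarith
  have hevp : ∀ x : Fin (n d) → Fin d → ℝ, ev x p = (ev x τ - β) ^ 2 := by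
    intro x; simp [hp, ev]
  have hm := markov (μ := gsam (n d) d) (f := fun x => ev x p) (integrable_ev p) (fun x => by rw [hevp]; positivity) (c := β ^ 2 / 4) (by positivity)
  rw [← L_apply] at hm
  refine (measure_mono ?_).trans (hm.trans ?_)
  · intro x hx
    have h1 := trace_pow_le (Wr_herm x) hx k
    have hd' : (0 : ℝ) < d := by exact_mod_cast hd
    have h2 : ev x τ ≤ (2 - T) ^ (2 * k) := by
      rw [hev, inv_mul_le_iff₀ hd']; exact h1
    simp only [Set.mem_ofPred_eq]
    rw [hevp]
    have h3 : ev x τ - β ≤ - (β / 2) := by linarith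
    nlinarith
  · rw [← ENNReal.ofReal_toReal hεt]
    apply ENNReal.ofReal_le_ofReal
    rw [div_le_iff₀ (by positivity)]
    exact hL
end
end Tyl

open MeasureTheory ProbabilityTheory Filter Matrix

namespace Tyl

lemma tyler_real {d n : ℕ} (hd : 0 < d) (hn : 0 < n) (a : Fin d → ℝ) (x : Fin n → ℝ) (w : Fin d → Fin n → ℝ)
    (ha : ∀ i, 0 < a i) (hsum : ∑ i, a i = d) (hw : ∀ i j, 0 ≤ w i j)
    (hx : ∀ c, (∀ i, c ≤ a i) → ∀ j, c ≤ x j)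
    (hwd : ∀ j, ∑ i, w i j = (d : ℝ) / n)
    (heq : ∀ i, (a i)⁻¹ = ∑ j, w i j * (x j)⁻¹)
    (σ κ : ℝ) (hσ0 : 0 ≤ σ) (hσ : σ ≤ 1 / 20) (hκ0 : 0 ≤ κ) (hκ : κ ≤ 1 / 20)
    (h1 : ∀ i, |∑ j, w i j - 1| ≤ σ)
    (h2 : ∀ β, (∀ i, |a i - 1| ≤ β) → ∀ i, ∑ j, w i j * |x j - 1| ≤ κ * β)
    (s : ℝ) (hs : s * ∑ i, (a i)⁻¹ = d) (i : Fin d) : |s * (a i)⁻¹ - 1| ≤ (1 + 20 * κ) * σ := by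
  have : Nonempty (Fin d) := ⟨⟨0, hd⟩⟩
  have hd' : (0 : ℝ) < d := by exact_mod_cast hd
  have hn' : (0 : ℝ) < n := by exact_mod_cast hn
  obtain ⟨it, -, hit⟩ := Finset.exists_max_image Finset.univ a Finset.univ_nonempty
  obtain ⟨ib, -, hib⟩ := Finset.exists_min_image Finset.univ a Finset.univ_nonempty
  have hit' : ∀ i, a i ≤ a it := fun i => hit i (Finset.mem_univ i)
  have hib' : ∀ i, a ib ≤ a i := fun i => hib i (Finset.mem_univ i)
  have hxb := hx _ hib'
  have hx0 : ∀ j, 0 < x j := fun j => (ha ib).trans_le (hxb j)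
  have h1t : 1 ≤ a it := by
    have : ∑ i, a i ≤ ∑ _i : Fin d, a it := Finset.sum_le_sum fun i _ => hit' i
    rw [hsum] at this
    simp at this
    nlinarith
  have hβ1 : ∀ i, |a i - 1| ≤ a it := fun i => by
    rw [abs_le]; constructor <;> linarith [hit' i, ha i]
  have h2t := h2 _ hβ1
  have hup : ∀ i, ∑ j, w i j ≤ 1 + σ := fun i => by linarith [(abs_le.1 (h1 i)).2]
  have hlo : ∀ i, 1 - σ ≤ ∑ j, w i j := fun i => by linarith [(abs_le.1 (h1 i)).1]
  -- step 1
  have s1 : a it ≤ 5 / 4 := by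
    have hcs : (∑ j, w it j) ^ 2 ≤ (∑ j, w it j * (x j)⁻¹) * ∑ j, w it j * x j := by
      refine Finset.sum_sq_le_sum_mul_sum_of_sq_le_mul _ (fun j _ => mul_nonneg (hw _ _) (inv_nonneg.2 (hx0 j).le))
        (fun j _ => mul_nonneg (hw _ _) (hx0 j).le) (fun j _ => ?_)
      have := (hx0 j).ne'
      apply le_of_eq
      field_simp
    rw [← heq] at hcs
    have h3 : ∑ j, w it j * x j ≤ 1 + σ + κ * a it := by
      calc _ ≤ ∑ j, (w it j + w it j * |x j - 1|) := Finset.sum_le_sum fun j _ => by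
            have := le_abs_self (x j - 1)
            nlinarith [hw it j]
        _ ≤ _ := by rw [Finset.sum_add_distrib]; linarith [h2t it, hup it]
    have h4 : (1 - σ) ^ 2 ≤ (∑ j, w it j) ^ 2 := by
      have := hlo it
      exact pow_le_pow_left₀ (by linarith) this 2
    have h5 : (1 - σ) ^ 2 ≤ (a it)⁻¹ * (1 + σ + κ * a it) :=
      (h4.trans hcs).trans (mul_le_mul_of_nonneg_left h3 (inv_nonneg.2 (ha it).le))
    rw [inv_mul_eq_div, le_div_iff₀ (ha it)] at h5
    have h6 : (19 / 20 : ℝ) ^ 2 ≤ (1 - σ) ^ 2 := pow_le_pow_left₀ (by norm_num) (by linarith) 2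
    have h7 := mul_le_mul_of_nonneg_right h6 (ha it).le
    have h8 := mul_le_mul_of_nonneg_right hκ (ha it).le
    linarith
  -- step 2
  have s2 : 1 / 2 ≤ a ib := by
    have h3 : (a ib)⁻¹ ≤ (1 + σ) + κ * a it / a ib := by
      rw [heq ib]
      calc _ ≤ ∑ j, (w ib j + w ib j * |x j - 1| / a ib) := Finset.sum_le_sum fun j _ => by
            rw [mul_div_assoc, ← mul_one_add]
            refine mul_le_mul_of_nonneg_left ?_ (hw _ _)
            have e1 : (x j)⁻¹ ≤ 1 + |x j - 1| / x j := by
              rw [inv_eq_one_div, one_add_div (hx0 j).ne']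
              apply div_le_div_of_nonneg_right _ (hx0 j).le
              have := neg_abs_le (x j - 1)
              linarith
            have e2 : |x j - 1| / x j ≤ |x j - 1| / a ib := div_le_div_of_nonneg_left (abs_nonneg _) (ha ib) (hxb j)
            linarith
        _ ≤ _ := by
          rw [Finset.sum_add_distrib, ← Finset.sum_div]
          have := div_le_div_of_nonneg_right (h2t ib) (ha ib).le
          linarith [hup ib]
    have h4 : 1 ≤ (1 + σ) * a ib + κ * a it := by
      have := mul_le_mul_of_nonneg_right h3 (ha ib).le
      rw [inv_mul_cancel₀ (ha ib).ne', add_mul, div_mul_cancel₀ _ (ha ib).ne'] at this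
      exact this
    nlinarith [ha ib, ha it]
  -- step 3
  obtain ⟨im, -, him⟩ := Finset.exists_max_image Finset.univ (fun i => |a i - 1|) Finset.univ_nonempty
  have him' : ∀ i, |a i - 1| ≤ |a im - 1| := fun i => him i (Finset.mem_univ i)
  have h2m := h2 _ him'
  set β := |a im - 1| with hβ
  have hβ0 : 0 ≤ β := abs_nonneg _
  have key : ∀ i, |(a i)⁻¹ - ∑ j, w i j| ≤ 2 * κ * β := fun i => by
    rw [heq i, ← Finset.sum_sub_distrib]
    refine (Finset.abs_sum_le_sum_abs _ _).trans ?_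
    calc _ ≤ ∑ j, 2 * (w i j * |x j - 1|) := Finset.sum_le_sum fun j _ => by
          rw [← mul_sub_one, abs_mul, abs_of_nonneg (hw i j)]
          have e1 : |(x j)⁻¹ - 1| ≤ 2 * |x j - 1| := by
            have : (x j)⁻¹ - 1 = (1 - x j) * (x j)⁻¹ := by
              rw [sub_mul, mul_inv_cancel₀ (hx0 j).ne', one_mul]
            rw [this, abs_mul, abs_sub_comm, mul_comm, abs_of_pos (inv_pos.2 (hx0 j))]
            refine mul_le_mul_of_nonneg_right ?_ (abs_nonneg _)
            rw [inv_le_comm₀ (hx0 j) (by norm_num)]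
            linarith [hxb j]
          nlinarith [hw i j]
      _ ≤ _ := by rw [← Finset.mul_sum]; linarith [h2m i]
  have key2 : ∀ i, |(a i)⁻¹ - 1| ≤ σ + 2 * κ * β := fun i => by
    have := abs_sub_le ((a i)⁻¹) (∑ j, w i j) 1
    linarith [key i, h1 i]
  have hβσ : β ≤ 2 * σ := by
    have e1 : β ≤ 5 / 4 * (σ + 2 * κ * β) := by
      have : a im - 1 = a im * (1 - (a im)⁻¹) := by
        rw [mul_sub, mul_inv_cancel₀ (ha im).ne', mul_one]
      have e0 : β = a im * |(a im)⁻¹ - 1| := by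
        rw [hβ, this, abs_mul, abs_sub_comm, abs_of_pos (ha im)]
      refine e0.le.trans ?_
      exact mul_le_mul ((hit' im).trans s1) (key2 im) (abs_nonneg _) (by norm_num)
    nlinarith
  have hkb : 2 * κ * β ≤ 4 * κ * σ := by nlinarith
  set m := (∑ i, (a i)⁻¹) / d with hm
  have hm1 : |m - 1| ≤ 4 * κ * σ := by
    have e1 : ∑ i, ∑ j, w i j = d := by
      rw [Finset.sum_comm]
      simp only [hwd]
      simp; field_simp
    have e2 : m - 1 = (∑ i, ((a i)⁻¹ - ∑ j, w i j)) / d := by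
      rw [Finset.sum_sub_distrib, e1, sub_div, div_self hd'.ne']
    rw [e2, abs_div, abs_of_pos hd', div_le_iff₀ hd']
    calc _ ≤ ∑ i, |(a i)⁻¹ - ∑ j, w i j| := Finset.abs_sum_le_sum_abs _ _
      _ ≤ ∑ _i : Fin d, 4 * κ * σ := Finset.sum_le_sum fun i _ => (key i).trans hkb
      _ = _ := by simp; ring
  have hsm : s * m = 1 := by
    rw [hm, mul_div_assoc', hs, div_self hd'.ne']
  have hks : 4 * κ * σ ≤ κ / 5 := by nlinarith
  have hm2 : 1 - κ / 5 ≤ m := by linarith [(abs_le.1 hm1).1]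
  have hm0 : 0 < m := by linarith
  have e3 : s * (a i)⁻¹ - 1 = ((a i)⁻¹ - m) / m := by
    rw [eq_div_iff hm0.ne', sub_mul, mul_right_comm, hsm]; ring
  rw [e3, abs_div, abs_of_pos hm0, div_le_iff₀ hm0]
  have e4 := abs_sub_le ((a i)⁻¹) 1 m
  rw [abs_sub_comm 1 m] at e4
  have e5 := key2 i
  have e6 : (1 + 20 * κ) * σ * (1 - κ / 5) ≤ (1 + 20 * κ) * σ * m := mul_le_mul_of_nonneg_left hm2 (by positivity)
  have hks0 : 0 ≤ κ * σ := mul_nonneg hκ0 hσ0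
  nlinarith
end Tyl

open MeasureTheory ProbabilityTheory Filter Matrix

namespace Tyl

/-- normalized sample -/
noncomputable def yU {n d : ℕ} (x : Fin n → Fin d → ℝ) : Fin n → Fin d → ℝ := fun j => (√(d : ℝ) / √(x j ⬝ᵥ x j)) • x j

lemma dot_nonneg {d : ℕ} (v : Fin d → ℝ) : 0 ≤ v ⬝ᵥ v := by
  simpa using dotProduct_self_star_nonneg v

lemma dot_pos {d : ℕ} {v : Fin d → ℝ} (h : v ≠ 0) : 0 < v ⬝ᵥ v :=
  (dot_nonneg v).lt_of_ne fun h' => h (dotProduct_self_eq_zero.1 h'.symm)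

lemma vmv_quad {d : ℕ} (u v : Fin d → ℝ) : v ⬝ᵥ vecMulVec u u *ᵥ v = (u ⬝ᵥ v) ^ 2 := by
  rw [vecMulVec_mulVec, dotProduct_smul, dotProduct_comm v u, MulOpposite.smul_eq_mul_unop, sq]; rfl

lemma Sr_quad {n d : ℕ} (x : Fin n → Fin d → ℝ) (v : Fin d → ℝ) : v ⬝ᵥ Sr x *ᵥ v = ∑ j, (n : ℝ)⁻¹ * (x j ⬝ᵥ v) ^ 2 := by
  rw [Sr, smul_mulVec, dotProduct_smul, Matrix.sum_mulVec, dotProduct_sum, smul_eq_mul, Finset.mul_sum]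
  simp only [vmv_quad]

lemma smul_quad {d : ℕ} (c : ℝ) (M : Matrix (Fin d) (Fin d) ℝ) (v : Fin d → ℝ) : (c • v) ⬝ᵥ M *ᵥ (c • v) = c ^ 2 * (v ⬝ᵥ M *ᵥ v) := by
  rw [Matrix.mulVec_smul, smul_dotProduct, dotProduct_smul, smul_eq_mul, smul_eq_mul]; ring

lemma sub_one_quad {d : ℕ} (M : Matrix (Fin d) (Fin d) ℝ) (v : Fin d → ℝ) : v ⬝ᵥ (M - 1) *ᵥ v = v ⬝ᵥ M *ᵥ v - v ⬝ᵥ v := by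
  rw [sub_mulVec, one_mulVec, dotProduct_sub]

lemma yU_dot {n d : ℕ} (x : Fin n → Fin d → ℝ) (j) (h : x j ≠ 0) : yU x j ⬝ᵥ yU x j = d := by
  have := dot_pos h
  rw [yU, smul_dotProduct, dotProduct_smul, smul_eq_mul, smul_eq_mul, ← mul_assoc, ← sq, div_pow, Real.sq_sqrt (by positivity), Real.sq_sqrt this.le]
  field_simp

lemma tyler_mat {d n : ℕ} (hd : 0 < d) (hn : 0 < n) (x : Fin n → Fin d → ℝ) (hx : ∀ j, x j ≠ 0)
    (T : Matrix (Fin d) (Fin d) ℝ) (hTpd : T.PosDef) (htr : T.trace = d)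
    (hTeq : T = ((d : ℝ) / (n : ℝ)) • ∑ j : Fin n, (x j ⬝ᵥ T⁻¹ *ᵥ x j)⁻¹ • vecMulVec (x j) (x j))
    (σ κ : ℝ) (hσ0 : 0 ≤ σ) (hσ : σ ≤ 1 / 20) (hκ0 : 0 ≤ κ) (hκ : κ ≤ 1 / 20)
    (h1 : QB (Sr (yU x) - 1) σ)
    (h2 : ∀ D : Matrix (Fin d) (Fin d) ℝ, D.IsHermitian → D.trace = 0 → ∀ β, QB D β → ∀ v, v ⬝ᵥ v = 1 →
      ∑ j, (n : ℝ)⁻¹ * (yU x j ⬝ᵥ v) ^ 2 * |(d : ℝ)⁻¹ * (yU x j ⬝ᵥ D *ᵥ yU x j)| ≤ κ * β) :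
    QB (T - 1) ((1 + 20 * κ) * σ) := by
  have hd' : (0 : ℝ) < d := by exact_mod_cast hd
  have hn' : (0 : ℝ) < n := by exact_mod_cast hn
  have : Nonempty (Fin d) := ⟨⟨0, hd⟩⟩
  have hdet : IsUnit T.det := hTpd.det_pos.ne'.isUnit
  have hIpd : (T⁻¹).PosDef := hTpd.inv
  have htrI : 0 < (T⁻¹).trace := hIpd.trace_pos
  set s := (d : ℝ) / (T⁻¹).trace with hs
  have hs0 : 0 < s := by positivity
  set A := s • T⁻¹ with hA
  have hApd : A.PosDef := hIpd.smul hs0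
  have hAh : A.IsHermitian := hApd.isHermitian
  have htrA : A.trace = d := by
    rw [hA, Matrix.trace_smul, smul_eq_mul, hs, div_mul_cancel₀ _ htrI.ne']
  set e := evec hAh with he
  set a := hAh.eigenvalues with ha
  have ha0 : ∀ i, 0 < a i := hApd.eigenvalues_pos
  have hTA : T * A = s • 1 := by
    rw [hA, Matrix.mul_smul, Matrix.mul_nonsing_inv _ hdet]
  have hTe : ∀ i, T *ᵥ e i = (s * (a i)⁻¹) • e i := by
    intro i
    have h3 : T *ᵥ (A *ᵥ e i) = s • e i := by
      rw [Matrix.mulVec_mulVec, hTA, smul_mulVec, one_mulVec]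
    rw [evec_mul hAh i, Matrix.mulVec_smul] at h3
    have h4 := congrArg (fun z => (a i)⁻¹ • z) h3
    simp only [smul_smul] at h4
    rw [inv_mul_cancel₀ (ha0 i).ne', one_smul] at h4
    rw [h4, mul_comm]
  have hTq : ∀ v, v ⬝ᵥ T *ᵥ v = ∑ i, (s * (a i)⁻¹) * (e i ⬝ᵥ v) ^ 2 := by
    intro v
    conv_lhs => enter [2]; rw [evec_expand hAh v]
    rw [Matrix.mulVec_sum, dotProduct_sum]
    refine Finset.sum_congr rfl fun i _ => ?_
    rw [Matrix.mulVec_smul, ← he, hTe, dotProduct_smul, dotProduct_smul, smul_eq_mul, smul_eq_mul, dotProduct_comm v]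
    ring
  have hxx : ∀ j, 0 < x j ⬝ᵥ x j := fun j => dot_pos (hx j)
  have hxA : ∀ j, x j ⬝ᵥ A *ᵥ x j = s * (x j ⬝ᵥ T⁻¹ *ᵥ x j) := fun j => by
    rw [hA, smul_mulVec, dotProduct_smul, smul_eq_mul]
  have hxI : ∀ j, 0 < x j ⬝ᵥ T⁻¹ *ᵥ x j := fun j => by
    have := hIpd.dotProduct_mulVec_pos (hx j)
    simpa using this
  set X : Fin n → ℝ := fun j => (d : ℝ)⁻¹ * (yU x j ⬝ᵥ A *ᵥ yU x j) with hX
  have hXe : ∀ j, X j = s * (x j ⬝ᵥ T⁻¹ *ᵥ x j) / (x j ⬝ᵥ x j) := fun j => by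
    simp only [hX]
    rw [yU, smul_quad, hxA, div_pow, Real.sq_sqrt hd'.le, Real.sq_sqrt (hxx j).le]
    field_simp
  have hyd : ∀ j v, (yU x j ⬝ᵥ v) ^ 2 = d / (x j ⬝ᵥ x j) * (x j ⬝ᵥ v) ^ 2 := fun j v => by
    rw [yU, smul_dotProduct, smul_eq_mul, mul_pow, div_pow, Real.sq_sqrt hd'.le, Real.sq_sqrt (hxx j).le]
  have heq : ∀ i, (a i)⁻¹ = ∑ j, (n : ℝ)⁻¹ * (yU x j ⬝ᵥ e i) ^ 2 * (X j)⁻¹ := by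
    intro i
    have h3 : e i ⬝ᵥ T *ᵥ e i = s * (a i)⁻¹ := by
      rw [hTe, dotProduct_smul, evec_dot]; simp
    have h4 : e i ⬝ᵥ T *ᵥ e i = s * ∑ j, (n : ℝ)⁻¹ * (yU x j ⬝ᵥ e i) ^ 2 * (X j)⁻¹ := by
      conv_lhs => rw [hTeq]
      rw [smul_mulVec, dotProduct_smul, Matrix.sum_mulVec, dotProduct_sum, smul_eq_mul, Finset.mul_sum, Finset.mul_sum]
      refine Finset.sum_congr rfl fun j _ => ?_
      rw [smul_mulVec, dotProduct_smul, vmv_quad, smul_eq_mul, hyd, hXe]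
      have := (hxx j).ne'
      have := (hxI j).ne'
      field_simp
    exact mul_left_cancel₀ hs0.ne' (h3.symm.trans h4)
  have hwd : ∀ j, ∑ i, (n : ℝ)⁻¹ * (yU x j ⬝ᵥ e i) ^ 2 = (d : ℝ) / n := by
    intro j
    rw [← Finset.mul_sum, div_eq_inv_mul, ← yU_dot x j (hx j), evec_norm hAh (yU x j)]
    congr 1
    exact Finset.sum_congr rfl fun i _ => by rw [dotProduct_comm]
  have hmain := tyler_real hd hn a X (fun i j => (n : ℝ)⁻¹ * (yU x j ⬝ᵥ e i) ^ 2) ha0 (by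
      rw [← htrA, hAh.trace_eq_sum_eigenvalues]; simp [ha]) (fun i j => by positivity) (by
      intro c hc j
      simp only [hX]
      rw [le_inv_mul_iff₀ hd', evec_quad hAh, ← yU_dot x j (hx j), evec_norm hAh (yU x j), Finset.sum_mul]
      refine Finset.sum_le_sum fun i _ => ?_
      rw [mul_comm]
      exact mul_le_mul_of_nonneg_right (hc i) (sq_nonneg _)) hwd heq σ κ hσ0 hσ hκ0 hκ (by
      intro i
      have := h1 (e i)
      rw [sub_one_quad, Sr_quad, evec_dot] at this
      simpa using this) (by
      intro β hβ i
      have hDh : (A - 1).IsHermitian := hAh.sub Matrix.isHermitian_one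
      have hq : QB (A - 1) β := by
        intro v
        rw [sub_one_quad, evec_quad hAh, evec_norm hAh v, ← Finset.sum_sub_distrib, Finset.mul_sum]
        refine (Finset.abs_sum_le_sum_abs _ _).trans (Finset.sum_le_sum fun i _ => ?_)
        rw [← sub_one_mul, abs_mul, abs_of_nonneg (sq_nonneg (evec hAh i ⬝ᵥ v))]
        exact mul_le_mul_of_nonneg_right (hβ i) (sq_nonneg _)
      have := h2 (A - 1) hDh (by rw [Matrix.trace_sub, htrA]; simp) β hq (e i) (by rw [evec_dot]; simp)
      refine le_trans (le_of_eq ?_) this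
      refine Finset.sum_congr rfl fun j _ => ?_
      rw [sub_one_quad, yU_dot x j (hx j), mul_sub, inv_mul_cancel₀ hd'.ne']) s (by
      rw [← htr]
      conv_rhs => rw [hTeq]
      rw [Matrix.trace_smul, Matrix.trace_sum, Finset.sum_congr rfl fun i _ => heq i, Finset.sum_comm, smul_eq_mul, Finset.mul_sum, Finset.mul_sum]
      refine Finset.sum_congr rfl fun j _ => ?_
      rw [← Finset.sum_mul, hwd, Matrix.trace_smul, Matrix.trace_vecMulVec, smul_eq_mul, hXe]
      have := (hxx j).ne'
      have := (hxI j).ne'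
      field_simp)
  intro v
  rw [sub_one_quad, hTq, evec_norm hAh v, ← Finset.sum_sub_distrib, Finset.mul_sum]
  refine (Finset.abs_sum_le_sum_abs _ _).trans (Finset.sum_le_sum fun i _ => ?_)
  rw [← sub_one_mul, abs_mul, abs_of_nonneg (sq_nonneg (evec hAh i ⬝ᵥ v))]
  exact mul_le_mul_of_nonneg_right (hmain i) (sq_nonneg _)
end Tyl

open MeasureTheory ProbabilityTheory Filter Matrix

namespace Tyl

noncomputable def vv {n d : ℕ} (x : Fin n → Fin d → ℝ) (i j : Fin n) : ℝ := (x i ⬝ᵥ x j) ^ 2 - x i ⬝ᵥ x i - x j ⬝ᵥ x j + d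

noncomputable def Km {n d : ℕ} (x : Fin n → Fin d → ℝ) (i j : Fin n) : ℝ := if i = j then 0 else vv x i j

noncomputable def Vm {n d : ℕ} (x : Fin n → Fin d → ℝ) (j : Fin n) (a b : Fin d) : ℝ := x j a * x j b - if a = b then 1 else 0

lemma Vm_dot {n d : ℕ} (x : Fin n → Fin d → ℝ) (i j : Fin n) : ∑ a, ∑ b, Vm x i a b * Vm x j a b = vv x i j := by
  have : ∀ a b, Vm x i a b * Vm x j a b = (x i a * x j a) * (x i b * x j b) - (if a = b then x i a * x i b else 0)
      - (if a = b then x j a * x j b else 0) + if a = b then 1 else 0 := by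
    intro a b; unfold Vm; split_ifs <;> ring
  simp only [this, Finset.sum_add_distrib, Finset.sum_sub_distrib, Finset.sum_ite_eq, Finset.mem_univ, if_true]
  rw [vv, ← Finset.sum_mul_sum]
  simp only [dotProduct, sq]
  simp

lemma frob_sum {n d : ℕ} (x : Fin n → Fin d → ℝ) (z : Fin n → ℝ) :
    ∑ a, ∑ b, (∑ j, z j * Vm x j a b) ^ 2 = ∑ i, ∑ j, z i * z j * vv x i j := by
  have : ∀ a b, (∑ j, z j * Vm x j a b) ^ 2 = ∑ i, ∑ j, z i * z j * (Vm x i a b * Vm x j a b) := by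
    intro a b
    rw [sq, Finset.sum_mul_sum]
    exact Finset.sum_congr rfl fun i _ => Finset.sum_congr rfl fun j _ => by ring
  simp only [this]
  simp only [← Vm_dot, Finset.mul_sum]
  rw [Finset.sum_congr rfl fun a _ => Finset.sum_comm]
  rw [Finset.sum_comm]
  refine Finset.sum_congr rfl fun i _ => ?_
  rw [Finset.sum_congr rfl fun a _ => Finset.sum_comm]
  rw [Finset.sum_comm]

lemma K_quad {n d : ℕ} (x : Fin n → Fin d → ℝ) (z : Fin n → ℝ) (F : ℝ) (hF0 : 0 ≤ F)
    (hF : ∑ i, ∑ l, (∑ j, Km x i j * Km x j l) ^ 2 ≤ F ^ 4) : ∑ i, ∑ j, z i * z j * Km x i j ≤ F * ∑ i, z i ^ 2 := by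
  set N := ∑ i, z i ^ 2 with hN
  have hN0 : 0 ≤ N := Finset.sum_nonneg fun i _ => sq_nonneg _
  have hsym : ∀ i j, Km x i j = Km x j i := by
    intro i j; unfold Km vv
    by_cases h : i = j
    · subst h; rfl
    · rw [if_neg h, if_neg (Ne.symm h), dotProduct_comm (x i) (x j)]; ring
  -- |Kz|^2
  set y : Fin n → ℝ := fun i => ∑ j, Km x i j * z j with hy
  have e1 : ∑ i, ∑ j, z i * z j * Km x i j = ∑ i, z i * y i := by
    refine Finset.sum_congr rfl fun i _ => ?_
    rw [hy, Finset.mul_sum]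
    exact Finset.sum_congr rfl fun j _ => by ring
  have e2 : ∑ j, y j ^ 2 = ∑ i, ∑ l, (z i * z l) * (∑ j, Km x i j * Km x j l) := by
    have : ∀ j, y j ^ 2 = ∑ i, ∑ l, (z i * z l) * (Km x i j * Km x j l) := by
      intro j
      rw [sq, hy, Finset.sum_mul_sum]
      refine Finset.sum_congr rfl fun i _ => Finset.sum_congr rfl fun l _ => ?_
      rw [hsym i j]; ring
    rw [Finset.sum_congr rfl fun j _ => this j, Finset.sum_comm]
    refine Finset.sum_congr rfl fun i _ => ?_
    rw [Finset.sum_comm]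
    exact Finset.sum_congr rfl fun l _ => by rw [Finset.mul_sum]
  have e3 : (∑ j, y j ^ 2) ^ 2 ≤ (N * F ^ 2) ^ 2 := by
    rw [e2]
    have h1 := Finset.sum_mul_sq_le_sq_mul_sq (Finset.univ : Finset (Fin n × Fin n)) (fun p => z p.1 * z p.2) (fun p => ∑ j, Km x p.1 j * Km x j p.2)
    simp only [Fintype.sum_prod_type] at h1
    refine h1.trans ?_
    have h2 : ∑ i, ∑ l, (z i * z l) ^ 2 = N * N := by
      rw [hN, Finset.sum_mul_sum]
      exact Finset.sum_congr rfl fun i _ => Finset.sum_congr rfl fun j _ => by ring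
    rw [h2]
    calc _ ≤ N * N * F ^ 4 := mul_le_mul_of_nonneg_left hF (by positivity)
      _ = _ := by ring
  have e4 : ∑ j, y j ^ 2 ≤ N * F ^ 2 := le_of_abs_le (abs_le_of_sq_le_sq e3 (by positivity))
  rw [e1]
  have e5 := Finset.sum_mul_sq_le_sq_mul_sq Finset.univ z y
  have e6 : (∑ i, z i * y i) ^ 2 ≤ (F * N) ^ 2 := by
    refine e5.trans ?_
    calc _ ≤ N * (N * F ^ 2) := mul_le_mul_of_nonneg_left e4 hN0
      _ = _ := by ring
  exact le_of_abs_le (abs_le_of_sq_le_sq e6 (by positivity))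

lemma quad_V {n d : ℕ} (x : Fin n → Fin d → ℝ) (D : Matrix (Fin d) (Fin d) ℝ) (hD : D.trace = 0) (j) :
    x j ⬝ᵥ D *ᵥ x j = ∑ a, ∑ b, D a b * Vm x j a b := by
  have : ∀ a b, D a b * Vm x j a b = x j a * (D a b * x j b) - if a = b then D a b else 0 := by
    intro a b; unfold Vm; split_ifs <;> ring
  simp only [this, Finset.sum_sub_distrib, Finset.sum_ite_eq, Finset.mem_univ, if_true]
  have h2 : ∑ a, D a a = 0 := hD
  rw [h2, sub_zero]
  simp only [dotProduct, mulVec, Finset.mul_sum]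

lemma J_bound {n d : ℕ} (hd : 0 < d) (x : Fin n → Fin d → ℝ) (F : ℝ) (hF0 : 0 ≤ F)
    (hF : ∑ i, ∑ l, (∑ j, Km x i j * Km x j l) ^ 2 ≤ F ^ 4)
    (D : Matrix (Fin d) (Fin d) ℝ) (hDh : D.IsHermitian) (hD : D.trace = 0) (hQ : QB D 1)
    (J : Finset (Fin n)) (hJ : ∀ j ∈ J, x j ⬝ᵥ x j ≤ 2 * d) (η : ℝ) (hη : 0 < η)
    (hJ2 : ∀ j ∈ J, d / 2 * η ≤ |x j ⬝ᵥ D *ᵥ x j|) : (J.card : ℝ) ≤ 4 / η ^ 2 * (5 * d + F / d) := by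
  have hd' : (0 : ℝ) < d := by exact_mod_cast hd
  have hd1 : (1 : ℝ) ≤ d := by exact_mod_cast hd
  set p : Fin n → ℝ := fun j => x j ⬝ᵥ D *ᵥ x j with hp
  set z : Fin n → ℝ := fun j => if j ∈ J then p j else 0 with hz
  set N := ∑ j, z j ^ 2 with hN
  have hN0 : 0 ≤ N := Finset.sum_nonneg fun i _ => sq_nonneg _
  have e1 : N = ∑ a, ∑ b, D a b * ∑ j, z j * Vm x j a b := by
    have h1 : ∀ j, z j ^ 2 = ∑ a, ∑ b, D a b * (z j * Vm x j a b) := by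
      intro j
      have : z j ^ 2 = z j * p j := by simp only [hz]; split_ifs <;> ring
      rw [this, hp]
      simp only
      rw [quad_V x D hD, Finset.mul_sum]
      refine Finset.sum_congr rfl fun a _ => ?_
      rw [Finset.mul_sum]
      exact Finset.sum_congr rfl fun b _ => by ring
    rw [hN, Finset.sum_congr rfl fun j _ => h1 j, Finset.sum_comm]
    refine Finset.sum_congr rfl fun a _ => ?_
    rw [Finset.sum_comm]
    exact Finset.sum_congr rfl fun b _ => by rw [Finset.mul_sum]
  have e2 : ∑ a, ∑ b, D a b ^ 2 ≤ d := by
    have h1 := trace_pow_le hDh hQ 1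
    simp only [mul_one, one_pow] at h1
    refine le_trans (le_of_eq ?_) h1
    rw [sq, Matrix.trace]
    refine Finset.sum_congr rfl fun a _ => ?_
    rw [Matrix.diag_apply, Matrix.mul_apply]
    refine Finset.sum_congr rfl fun b _ => ?_
    have := hDh.apply a b
    simp only [star_trivial] at this
    rw [this, sq]
  have e3 : ∑ a, ∑ b, (∑ j, z j * Vm x j a b) ^ 2 ≤ (5 * d ^ 2 + F) * N := by
    rw [frob_sum]
    have h1 := K_quad x z F hF0 hF
    have h2 : ∑ i, ∑ j, z i * z j * vv x i j = ∑ i, ∑ j, z i * z j * Km x i j + ∑ i, z i ^ 2 * vv x i i := by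
      rw [← Finset.sum_add_distrib]
      refine Finset.sum_congr rfl fun i _ => ?_
      have : ∀ j, z i * z j * vv x i j = z i * z j * Km x i j + if i = j then z i ^ 2 * vv x i i else 0 := by
        intro j; unfold Km
        by_cases h : i = j
        · subst h; simp; left; ring
        · simp [h]
      rw [Finset.sum_congr rfl fun j _ => this j, Finset.sum_add_distrib]
      simp
    have h3 : ∑ i, z i ^ 2 * vv x i i ≤ 5 * d ^ 2 * N := by
      rw [hN, Finset.mul_sum]
      refine Finset.sum_le_sum fun i _ => ?_
      simp only [hz]
      split_ifs with h
      · rw [mul_comm]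
        refine mul_le_mul_of_nonneg_right ?_ (sq_nonneg _)
        have h4 := hJ i h
        have h5 := dot_nonneg (x i)
        unfold vv
        nlinarith
      · simp
    rw [h2]; linarith
  have e4 : N ^ 2 ≤ d * ((5 * d ^ 2 + F) * N) := by
    have h1 := Finset.sum_mul_sq_le_sq_mul_sq (Finset.univ : Finset (Fin d × Fin d)) (fun p => D p.1 p.2) (fun p => ∑ j, z j * Vm x j p.1 p.2)
    simp only [Fintype.sum_prod_type] at h1
    rw [← e1] at h1
    refine h1.trans (mul_le_mul e2 e3 (Finset.sum_nonneg fun _ _ => Finset.sum_nonneg fun _ _ => sq_nonneg _) hd'.le)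
  have e5 : N ≤ d * (5 * d ^ 2 + F) := by
    rcases hN0.eq_or_lt with h | h
    · rw [← h]; positivity
    · refine le_of_mul_le_mul_right ?_ h
      nlinarith
  have e6 : (J.card : ℝ) * (d / 2 * η) ^ 2 ≤ N := by
    calc (J.card : ℝ) * (d / 2 * η) ^ 2 = ∑ j ∈ J, (d / 2 * η) ^ 2 := by simp
      _ ≤ ∑ j ∈ J, z j ^ 2 := Finset.sum_le_sum fun j hj => by
          simp only [hz, if_pos hj]
          rw [← sq_abs (p j)]
          exact pow_le_pow_left₀ (by positivity) (hJ2 j hj) 2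
      _ ≤ _ := Finset.sum_le_sum_of_subset_of_nonneg (Finset.subset_univ _) fun _ _ _ => sq_nonneg _
  have e7 := e6.trans e5
  rw [div_mul_eq_mul_div, le_div_iff₀ (by positivity)]
  have : (J.card : ℝ) * η ^ 2 * (d ^ 2 / 4) ≤ (4 * (5 * d + F / d)) * (d ^ 2 / 4) := by
    calc _ = (J.card : ℝ) * (d / 2 * η) ^ 2 := by ring
      _ ≤ _ := e7
      _ = _ := by field_simp
  exact le_of_mul_le_mul_right this (by positivity)

lemma cs_dot {d : ℕ} (u v : Fin d → ℝ) : (u ⬝ᵥ v) ^ 2 ≤ (u ⬝ᵥ u) * (v ⬝ᵥ v) := by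
  have := Finset.sum_mul_sq_le_sq_mul_sq Finset.univ u v
  simpa [dotProduct, sq] using this

open Classical in
lemma kappa_one {n d : ℕ} (hd : 0 < d) (hn : 0 < n) (x : Fin n → Fin d → ℝ) (hx : ∀ j, x j ≠ 0) (F : ℝ) (hF0 : 0 ≤ F)
    (hF : ∑ i, ∑ l, (∑ j, Km x i j * Km x j l) ^ 2 ≤ F ^ 4)
    (η t φ b g σ : ℝ) (hη : 0 < η) (ht : 0 ≤ t)
    (hσ1 : σ ≤ 1) (hσ : QB (Sr (yU x) - 1) σ)
    (hb : ((Finset.univ.filter fun j => x j ⬝ᵥ x j < d / 2).card : ℝ) ≤ b)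
    (hg : ((Finset.univ.filter fun j => 2 * (d : ℝ) < x j ⬝ᵥ x j).card : ℝ) ≤ g)
    (hφ : ∀ v, v ⬝ᵥ v = 1 → ∑ j, max ((x j ⬝ᵥ v) ^ 2 - t) 0 ≤ n * φ)
    (D : Matrix (Fin d) (Fin d) ℝ) (hDh : D.IsHermitian) (hD : D.trace = 0) (hQ : QB D 1) (v : Fin d → ℝ) (hv : v ⬝ᵥ v = 1) :
    ∑ j, (n : ℝ)⁻¹ * (yU x j ⬝ᵥ v) ^ 2 * |(d : ℝ)⁻¹ * (yU x j ⬝ᵥ D *ᵥ yU x j)| ≤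
      d * b / n + 2 * η + 2 * t / n * (g + 4 / η ^ 2 * (5 * d + F / d)) + 2 * φ := by
  have hd' : (0 : ℝ) < d := by exact_mod_cast hd
  have hn' : (0 : ℝ) < n := by exact_mod_cast hn
  have hxx : ∀ j, 0 < x j ⬝ᵥ x j := fun j => dot_pos (hx j)
  set q : Fin n → ℝ := fun j => |(d : ℝ)⁻¹ * (yU x j ⬝ᵥ D *ᵥ yU x j)| with hq
  have hqe : ∀ j, |x j ⬝ᵥ D *ᵥ x j| = (x j ⬝ᵥ x j) * q j := fun j => by
    simp only [hq]
    rw [yU, smul_quad, div_pow, Real.sq_sqrt hd'.le, Real.sq_sqrt (hxx j).le]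
    have h0 : (x j ⬝ᵥ x j) * |(d : ℝ)⁻¹ * (d / (x j ⬝ᵥ x j) * (x j ⬝ᵥ D *ᵥ x j))| =
        |(x j ⬝ᵥ x j) * ((d : ℝ)⁻¹ * (d / (x j ⬝ᵥ x j) * (x j ⬝ᵥ D *ᵥ x j)))| := by
      rw [abs_mul (x j ⬝ᵥ x j), abs_of_pos (hxx j)]
    rw [h0]
    congr 1
    have := (hxx j).ne'
    field_simp
  have hq1 : ∀ j, q j ≤ 1 := fun j => by
    have := hQ (x j)
    rw [hqe, one_mul] at this
    have h2 := hxx j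
    exact le_of_mul_le_mul_left (by linarith) h2
  have hq0 : ∀ j, 0 ≤ q j := fun j => abs_nonneg _
  have hyd : ∀ j, (yU x j ⬝ᵥ v) ^ 2 = d / (x j ⬝ᵥ x j) * (x j ⬝ᵥ v) ^ 2 := fun j => by
    rw [yU, smul_dotProduct, smul_eq_mul, mul_pow, div_pow, Real.sq_sqrt hd'.le, Real.sq_sqrt (hxx j).le]
  have hyle : ∀ j, (yU x j ⬝ᵥ v) ^ 2 ≤ d := fun j => by
    have := cs_dot (yU x j) v
    rwa [yU_dot x j (hx j), hv, mul_one] at this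
  set B := Finset.univ.filter fun j => x j ⬝ᵥ x j < d / 2 with hB
  set G := Finset.univ.filter fun j => 2 * (d : ℝ) < x j ⬝ᵥ x j with hG
  set J := Finset.univ.filter fun j => x j ⬝ᵥ x j ≤ 2 * d ∧ (d / 2 ≤ x j ⬝ᵥ x j ∧ η < q j) with hJ
  have hJc := J_bound hd x F hF0 hF D hDh hD hQ J (fun j hj => (Finset.mem_filter.1 hj).2.1) η hη (fun j hj => by
    obtain ⟨-, h1, h2, h3⟩ := Finset.mem_filter.1 hj
    rw [hqe]
    exact mul_le_mul h2 h3.le hη.le (hxx j).le)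
  have hterm : ∀ j, (n : ℝ)⁻¹ * (yU x j ⬝ᵥ v) ^ 2 * q j ≤ (if j ∈ B then (n : ℝ)⁻¹ * d else 0) +
      η * ((n : ℝ)⁻¹ * (yU x j ⬝ᵥ v) ^ 2) + 2 * t / n * ((if j ∈ G then 1 else 0) + (if j ∈ J then 1 else 0)) +
      2 / n * max ((x j ⬝ᵥ v) ^ 2 - t) 0 := by
    intro j
    have hm0 : 0 ≤ max ((x j ⬝ᵥ v) ^ 2 - t) 0 := le_max_right _ _
    have hm1 : (x j ⬝ᵥ v) ^ 2 - t ≤ max ((x j ⬝ᵥ v) ^ 2 - t) 0 := le_max_left _ _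
    have c1 : 0 ≤ (if j ∈ B then (n : ℝ)⁻¹ * d else 0) := by split_ifs <;> positivity
    have c2 : 0 ≤ η * ((n : ℝ)⁻¹ * (yU x j ⬝ᵥ v) ^ 2) := by positivity
    have c3 : 0 ≤ 2 * t / n * ((if j ∈ G then 1 else 0) + (if j ∈ J then 1 else 0)) := by
      refine mul_nonneg (by positivity) (add_nonneg ?_ ?_) <;> split_ifs <;> norm_num
    have c4 : 0 ≤ 2 / n * max ((x j ⬝ᵥ v) ^ 2 - t) 0 := by positivity
    by_cases h1 : x j ⬝ᵥ x j < d / 2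
    · have : j ∈ B := by rw [hB, Finset.mem_filter]; exact ⟨Finset.mem_univ _, h1⟩
      rw [if_pos this]
      have : (n : ℝ)⁻¹ * (yU x j ⬝ᵥ v) ^ 2 * q j ≤ (n : ℝ)⁻¹ * d * 1 :=
        mul_le_mul (mul_le_mul_of_nonneg_left (hyle j) (by positivity)) (hq1 j) (hq0 j) (by positivity)
      linarith
    · by_cases h2 : q j ≤ η
      · have : (n : ℝ)⁻¹ * (yU x j ⬝ᵥ v) ^ 2 * q j ≤ (n : ℝ)⁻¹ * (yU x j ⬝ᵥ v) ^ 2 * η :=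
          mul_le_mul_of_nonneg_left h2 (by positivity)
        linarith
      · have h3 : 1 ≤ (if j ∈ G then (1 : ℝ) else 0) + (if j ∈ J then 1 else 0) := by
          by_cases h4 : 2 * (d : ℝ) < x j ⬝ᵥ x j
          · have : j ∈ G := by rw [hG, Finset.mem_filter]; exact ⟨Finset.mem_univ _, h4⟩
            rw [if_pos this]; split_ifs <;> norm_num
          · have : j ∈ J := by
              rw [hJ, Finset.mem_filter]; exact ⟨Finset.mem_univ _, not_lt.1 h4, not_lt.1 h1, not_le.1 h2⟩
            rw [if_pos this]; split_ifs <;> norm_num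
        have h5 : (n : ℝ)⁻¹ * (yU x j ⬝ᵥ v) ^ 2 * q j ≤ (n : ℝ)⁻¹ * (2 * (x j ⬝ᵥ v) ^ 2) * 1 := by
          refine mul_le_mul (mul_le_mul_of_nonneg_left ?_ (by positivity)) (hq1 j) (hq0 j) (by positivity)
          rw [hyd]
          refine mul_le_mul_of_nonneg_right ?_ (sq_nonneg _)
          rw [div_le_iff₀ (hxx j)]
          linarith [not_lt.1 h1]
        have h6 : (n : ℝ)⁻¹ * (2 * (x j ⬝ᵥ v) ^ 2) * 1 ≤ 2 * t / n * 1 + 2 / n * max ((x j ⬝ᵥ v) ^ 2 - t) 0 := by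
          have : 2 / (n : ℝ) * (x j ⬝ᵥ v) ^ 2 ≤ 2 / n * (t + max ((x j ⬝ᵥ v) ^ 2 - t) 0) :=
            mul_le_mul_of_nonneg_left (by linarith) (by positivity)
          calc _ = 2 / (n : ℝ) * (x j ⬝ᵥ v) ^ 2 := by ring
            _ ≤ _ := this
            _ = _ := by ring
        have h7 : 2 * t / n * 1 ≤ 2 * t / n * ((if j ∈ G then (1 : ℝ) else 0) + (if j ∈ J then 1 else 0)) :=
          mul_le_mul_of_nonneg_left h3 (by positivity)
        linarith
  refine (Finset.sum_le_sum fun j _ => hterm j).trans ?_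
  simp only [Finset.sum_add_distrib, ← Finset.mul_sum]
  have s1 : ∑ j, (if j ∈ B then (n : ℝ)⁻¹ * d else 0) ≤ d * b / n := by
    rw [Finset.sum_ite_mem, Finset.univ_inter, Finset.sum_const, nsmul_eq_mul, div_eq_mul_inv]
    have := mul_le_mul_of_nonneg_right hb (show 0 ≤ (n : ℝ)⁻¹ * d by positivity)
    linarith
  have s2 : (n : ℝ)⁻¹ * ∑ j, (yU x j ⬝ᵥ v) ^ 2 ≤ 2 := by
    have h1 := (abs_le.1 (hσ v)).2
    rw [sub_one_quad, Sr_quad, hv, ← Finset.mul_sum] at h1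
    linarith
  have s3 : ∑ j, (if j ∈ G then (1 : ℝ) else 0) ≤ g := by
    rw [Finset.sum_ite_mem, Finset.univ_inter]; simpa using hg
  have s4 : ∑ j, (if j ∈ J then (1 : ℝ) else 0) ≤ 4 / η ^ 2 * (5 * d + F / d) := by
    rw [Finset.sum_ite_mem, Finset.univ_inter]; simpa using hJc
  have s5 : 2 / (n : ℝ) * ∑ j, max ((x j ⬝ᵥ v) ^ 2 - t) 0 ≤ 2 * φ := by
    calc _ ≤ 2 / (n : ℝ) * (n * φ) := mul_le_mul_of_nonneg_left (hφ v hv) (by positivity)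
      _ = _ := by field_simp
  have s6 : η * ((n : ℝ)⁻¹ * ∑ j, (yU x j ⬝ᵥ v) ^ 2) ≤ 2 * η := by nlinarith
  have s7 : 2 * t / n * (∑ j, (if j ∈ G then (1 : ℝ) else 0) + ∑ j, (if j ∈ J then (1 : ℝ) else 0)) ≤
      2 * t / n * (g + 4 / η ^ 2 * (5 * d + F / d)) := mul_le_mul_of_nonneg_left (by linarith) (by positivity)
  linarith

open Classical in
lemma tyler_good {n d : ℕ} (hd : 0 < d) (hn : 0 < n) (x : Fin n → Fin d → ℝ) (hx : ∀ j, x j ≠ 0) (F : ℝ) (hF0 : 0 ≤ F)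
    (hF : ∑ i, ∑ l, (∑ j, Km x i j * Km x j l) ^ 2 ≤ F ^ 4)
    (η t φ b g σ κ : ℝ) (hη : 0 < η) (ht : 0 ≤ t)
    (hσ0 : 0 ≤ σ) (hσ1 : σ ≤ 1 / 20) (hσ : QB (Sr (yU x) - 1) σ)
    (hb : ((Finset.univ.filter fun j => x j ⬝ᵥ x j < d / 2).card : ℝ) ≤ b)
    (hg : ((Finset.univ.filter fun j => 2 * (d : ℝ) < x j ⬝ᵥ x j).card : ℝ) ≤ g)
    (hφ : ∀ v, v ⬝ᵥ v = 1 → ∑ j, max ((x j ⬝ᵥ v) ^ 2 - t) 0 ≤ n * φ)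
    (hκe : d * b / n + 2 * η + 2 * t / n * (g + 4 / η ^ 2 * (5 * d + F / d)) + 2 * φ ≤ κ)
    (hκ0 : 0 ≤ κ) (hκ : κ ≤ 1 / 20)
    (T : Matrix (Fin d) (Fin d) ℝ) (hT : IsTyler x T) : QB (T - 1) ((1 + 20 * κ) * σ) := by
  obtain ⟨hTpd, htr, hTeq⟩ := hT
  refine tyler_mat hd hn x hx T hTpd htr hTeq σ κ hσ0 hσ1 hκ0 hκ hσ ?_
  intro D hDh hD β hQ v hv
  have hβ0 : 0 ≤ β := by
    have := hQ v
    rw [hv, mul_one] at this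
    exact (abs_nonneg _).trans this
  rcases hβ0.eq_or_lt with h | h
  · rw [← h, mul_zero]
    apply le_of_eq
    refine Finset.sum_eq_zero fun j _ => ?_
    have := hQ (yU x j)
    rw [← h, zero_mul] at this
    rw [abs_nonpos_iff.1 this]; simp
  · have h1 := kappa_one hd hn x hx F hF0 hF η t φ b g σ hη ht (by linarith) hσ hb hg hφ (β⁻¹ • D)
      (by rw [Matrix.IsHermitian, Matrix.conjTranspose_smul, hDh]; simp) (by rw [Matrix.trace_smul, hD, smul_zero]) (by
        intro u
        rw [smul_mulVec, dotProduct_smul, smul_eq_mul, abs_mul, abs_of_pos (inv_pos.2 h), one_mul, inv_mul_le_iff₀ h]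
        exact hQ u) v hv
    have h2 := mul_le_mul_of_nonneg_right (h1.trans hκe) h.le
    refine le_trans (le_of_eq ?_) h2
    rw [Finset.sum_mul]
    refine Finset.sum_congr rfl fun j _ => ?_
    rw [smul_mulVec, dotProduct_smul, smul_eq_mul, mul_left_comm, abs_mul β⁻¹, abs_of_pos (inv_pos.2 h)]
    field_simp
end Tyl

open MeasureTheory ProbabilityTheory Filter Matrix

namespace Tyl

lemma gexp (a : ℝ) (ha : a < 1 / 2) : Integrable (fun x : ℝ => Real.exp (a * x ^ 2)) (gaussianReal 0 1) ∧
    ∫ x, Real.exp (a * x ^ 2) ∂(gaussianReal 0 1) = √((1 - 2 * a)⁻¹) := by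
  have hb : 0 < 1 / 2 - a := by linarith
  have hfun : ∀ x : ℝ, gaussianPDFReal 0 1 x * Real.exp (a * x ^ 2) = (√(2 * Real.pi))⁻¹ * Real.exp (-(1 / 2 - a) * x ^ 2) := by
    intro x
    rw [gaussianPDFReal, mul_assoc, ← Real.exp_add]
    congr 1
    · simp
    · congr 1; simp; ring
  constructor
  · rw [gaussianReal_of_var_ne_zero 0 one_ne_zero, integrable_withDensity_iff_integrable_smul' (measurable_gaussianPDF _ _)
      (ae_of_all _ fun _ => gaussianPDF_lt_top)]
    simp only [toReal_gaussianPDF, smul_eq_mul, hfun]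
    exact (integrable_exp_neg_mul_sq hb).const_mul _
  · rw [integral_gaussianReal_eq_integral_smul one_ne_zero]
    simp only [smul_eq_mul, hfun]
    rw [integral_const_mul, integral_gaussian, ← Real.sqrt_inv, ← Real.sqrt_mul (by positivity)]
    congr 1
    have : (1 - 2 * a) ≠ 0 := by linarith
    have h2 : (1 / 2 - a) ≠ 0 := hb.ne'
    rw [show 1 / 2 - a = (1 - 2 * a) / 2 by ring]
    field_simp

lemma gexp_vec (d : ℕ) (a : ℝ) (ha : a < 1 / 2) : Integrable (fun x : Fin d → ℝ => Real.exp (a * (x ⬝ᵥ x))) (gvec d) ∧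
    ∫ x, Real.exp (a * (x ⬝ᵥ x)) ∂(gvec d) = √((1 - 2 * a)⁻¹) ^ d := by
  have hfun : (fun x : Fin d → ℝ => Real.exp (a * (x ⬝ᵥ x))) = fun x => ∏ i, Real.exp (a * x i ^ 2) := by
    ext x
    rw [← Real.exp_sum, dotProduct, Finset.mul_sum]
    congr 1
    exact Finset.sum_congr rfl fun i _ => by ring
  rw [hfun]
  refine ⟨Integrable.fintype_prod (f := fun _ (y : ℝ) => Real.exp (a * y ^ 2)) fun i => (gexp a ha).1, ?_⟩
  rw [integral_fintype_prod_eq_prod (f := fun _ (y : ℝ) => Real.exp (a * y ^ 2))]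
  simp [(gexp a ha).2]

lemma small_norm (d : ℕ) : gvec d {x | x ⬝ᵥ x < d / 2} ≤ ENNReal.ofReal ((Real.exp (1 / 4) * √(1 / 2)) ^ d) := by
  obtain ⟨h1, h2⟩ := gexp_vec d (-(1 / 2)) (by norm_num)
  have := markov h1 (fun x => (Real.exp_pos _).le) (c := Real.exp (-(d / 4 : ℝ))) (Real.exp_pos _)
  rw [h2] at this
  refine (measure_mono ?_).trans (this.trans (le_of_eq ?_))
  · intro x hx
    simp only [Set.mem_ofPred_eq] at hx ⊢
    apply Real.exp_le_exp.2
    linarith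
  · congr 1
    rw [Real.exp_neg, div_inv_eq_mul, mul_pow, ← Real.exp_nat_mul, mul_comm]
    congr 1
    · congr 1; ring
    · norm_num

lemma big_norm (d : ℕ) : gvec d {x | 2 * (d : ℝ) < x ⬝ᵥ x} ≤ ENNReal.ofReal ((Real.exp (-(1 / 2)) * √2) ^ d) := by
  obtain ⟨h1, h2⟩ := gexp_vec d (1 / 4) (by norm_num)
  have := markov h1 (fun x => (Real.exp_pos _).le) (c := Real.exp (d / 2 : ℝ)) (Real.exp_pos _)
  rw [h2] at this
  refine (measure_mono ?_).trans (this.trans (le_of_eq ?_))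
  · intro x hx
    simp only [Set.mem_ofPred_eq] at hx ⊢
    apply Real.exp_le_exp.2
    linarith
  · congr 1
    rw [div_eq_mul_inv, ← Real.exp_neg, mul_pow, ← Real.exp_nat_mul, mul_comm]
    congr 1
    · congr 1; ring
    · norm_num

lemma r1_lt : Real.exp (1 / 4) * √(1 / 2) < 1 := by
  have h : Real.exp (1 / 4) ^ 4 < 4 := by
    rw [← Real.exp_nat_mul]; norm_num; linarith [Real.exp_one_lt_d9]
  have h2 : √(1 / 2 : ℝ) ^ 4 = 1 / 4 := by
    rw [show 4 = 2 * 2 by norm_num, pow_mul, Real.sq_sqrt (by norm_num)]; norm_num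
  by_contra! hc
  have := pow_le_pow_left₀ (by norm_num) hc 4
  rw [mul_pow, h2] at this
  linarith

lemma r2_lt : Real.exp (-(1 / 2)) * √2 < 1 := by
  rw [Real.exp_neg, inv_mul_lt_iff₀ (Real.exp_pos _), mul_one]
  rw [Real.sqrt_lt' (Real.exp_pos _), ← Real.exp_nat_mul]
  norm_num; linarith [Real.exp_one_gt_d9]

open Classical in
lemma count_le {n d : ℕ} (p : (Fin d → ℝ) → Prop) (hp : MeasurableSet {x | p x}) (c : ℝ) (hc : 0 < c) :
    gsam n d {x | c ≤ ((Finset.univ.filter fun j => p (x j)).card : ℝ)} ≤ n * gvec d {x | p x} / ENNReal.ofReal c := by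
  set f : (Fin n → Fin d → ℝ) → ENNReal := fun x => ∑ j, ({x | p x} : Set (Fin d → ℝ)).indicator 1 (x j) with hf
  have hm : ∀ j, Measurable fun x : Fin n → Fin d → ℝ => ({x | p x} : Set (Fin d → ℝ)).indicator (1 : (Fin d → ℝ) → ENNReal) (x j) :=
    fun j => (measurable_one.indicator hp).comp (measurable_pi_apply j)
  have h1 := meas_ge_le_lintegral_div (μ := gsam n d) (f := f) (Finset.measurable_sum _ fun j _ => hm j).aemeasurable
    (ε := ENNReal.ofReal c) (by simpa using hc) (by simp)
  have h2 : ∫⁻ x, f x ∂(gsam n d) = n * gvec d {x | p x} := by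
    rw [hf, lintegral_finsetSum _ fun j _ => hm j]
    have : ∀ j, ∫⁻ x, ({x | p x} : Set (Fin d → ℝ)).indicator (1 : (Fin d → ℝ) → ENNReal) (x j) ∂(gsam n d) = gvec d {x | p x} := by
      intro j
      rw [(measurePreserving_eval (fun _ : Fin n => gvec d) j).lintegral_comp (measurable_one.indicator hp), lintegral_indicator_one hp]
    simp [this]
  rw [h2] at h1
  refine (measure_mono ?_).trans h1
  intro x hx
  simp only [Set.mem_ofPred_eq] at hx ⊢
  have : f x = ENNReal.ofReal ((Finset.univ.filter fun j => p (x j)).card : ℝ) := by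
    simp only [hf, Set.indicator_apply, Set.mem_ofPred_eq, Pi.one_apply]
    rw [Finset.sum_boole, ENNReal.ofReal_natCast]
  rw [this]
  exact ENNReal.ofReal_le_ofReal hx

lemma law_dot {d : ℕ} (v : Fin d → ℝ) : (gvec d).map (fun x => x ⬝ᵥ v) = gaussianReal 0 (Real.toNNReal (v ⬝ᵥ v)) := by
  have hm : Measurable fun x : Fin d → ℝ => x ⬝ᵥ v := by unfold dotProduct; fun_prop
  have : IsProbabilityMeasure ((gvec d).map (fun x => x ⬝ᵥ v)) := Measure.isProbabilityMeasure_map hm.aemeasurable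
  apply Measure.ext_of_charFun
  ext t
  rw [charFun_apply_real, integral_map hm.aemeasurable (by fun_prop), charFun_gaussianReal]
  have h1 : ∀ x : Fin d → ℝ, Complex.exp (t * ((x ⬝ᵥ v : ℝ) : ℂ) * Complex.I) = ∏ i, Complex.exp (((t * v i : ℝ) : ℂ) * (x i : ℂ) * Complex.I) := by
    intro x
    rw [← Complex.exp_sum, dotProduct]
    congr 1
    push_cast
    rw [Finset.mul_sum, Finset.sum_mul]
    exact Finset.sum_congr rfl fun i _ => by ring
  simp only [h1]
  rw [integral_fintype_prod_eq_prod (f := fun i (y : ℝ) => Complex.exp (((t * v i : ℝ) : ℂ) * (y : ℂ) * Complex.I))]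
  simp only [← charFun_apply_real, charFun_gaussianReal]
  rw [← Complex.exp_sum]
  congr 1
  rw [Real.coe_toNNReal _ (dot_nonneg v), dotProduct]
  push_cast
  rw [Finset.sum_mul, Finset.sum_div]
  simp
  exact Finset.sum_congr rfl fun i _ => by ring

lemma exp_dot {d : ℕ} (v : Fin d → ℝ) (hv : v ⬝ᵥ v ≤ 4) :
    ∫⁻ x, ENNReal.ofReal (Real.exp ((x ⬝ᵥ v) ^ 2 / 16)) ∂(gvec d) ≤ ENNReal.ofReal 2 := by
  have hm : Measurable fun x : Fin d → ℝ => x ⬝ᵥ v := by unfold dotProduct; fun_prop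
  have h1 : ∫⁻ x, ENNReal.ofReal (Real.exp ((x ⬝ᵥ v) ^ 2 / 16)) ∂(gvec d) =
      ∫⁻ y, ENNReal.ofReal (Real.exp (y ^ 2 / 16)) ∂(gaussianReal 0 (Real.toNNReal (v ⬝ᵥ v))) := by
    rw [← law_dot, lintegral_map (by fun_prop) hm]
  have h2 : gaussianReal 0 (Real.toNNReal (v ⬝ᵥ v)) = (gaussianReal 0 1).map (fun y => √(v ⬝ᵥ v) * y) := by
    rw [gaussianReal_map_const_mul]
    congr 1
    · simp
    · ext; simp [Real.sq_sqrt (dot_nonneg v), dot_nonneg v]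
  rw [h1, h2, lintegral_map (by fun_prop) (by fun_prop)]
  have h3 : ∫⁻ y, ENNReal.ofReal (Real.exp (1 / 4 * y ^ 2)) ∂(gaussianReal 0 1) ≤ ENNReal.ofReal 2 := by
    rw [← ofReal_integral_eq_lintegral_ofReal (gexp (1/4) (by norm_num)).1 (ae_of_all _ fun _ => (Real.exp_pos _).le),
      (gexp (1/4) (by norm_num)).2]
    apply ENNReal.ofReal_le_ofReal
    rw [Real.sqrt_le_left (by norm_num)]; norm_num
  refine le_trans (lintegral_mono fun y => ?_) h3
  apply ENNReal.ofReal_le_ofReal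
  apply Real.exp_le_exp.2
  rw [mul_pow, Real.sq_sqrt (dot_nonneg v)]
  nlinarith [sq_nonneg y]
end Tyl

open MeasureTheory ProbabilityTheory Filter Matrix

namespace Tyl

noncomputable def Ph {n d : ℕ} (t : ℝ) (x : Fin n → Fin d → ℝ) (v : Fin d → ℝ) : ℝ :=
  ∑ j, max ((x j ⬝ᵥ v) ^ 2 - t) 0

lemma Ph_par {n d : ℕ} (t : ℝ) (x : Fin n → Fin d → ℝ) (v u : Fin d → ℝ) :
    2 * Ph t x v ≤ Ph t x (v + u) + Ph t x (v - u) := by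
  unfold Ph
  rw [← Finset.sum_add_distrib, Finset.mul_sum]
  refine Finset.sum_le_sum fun j _ => ?_
  rw [dotProduct_add, dotProduct_sub]
  set p := x j ⬝ᵥ v
  set q := x j ⬝ᵥ u
  have h1 := le_max_left ((p + q) ^ 2 - t) 0
  have h2 := le_max_left ((p - q) ^ 2 - t) 0
  have h3 := le_max_right ((p + q) ^ 2 - t) 0
  have h4 := le_max_right ((p - q) ^ 2 - t) 0
  rcases max_cases (p ^ 2 - t) 0 with h | h
  · rw [h.1]; nlinarith [sq_nonneg q]
  · rw [h.1]; linarith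

noncomputable def Wp {n d : ℕ} (t : ℝ) (x : Fin n → Fin d → ℝ) (v : Fin d → ℝ) : ENNReal :=
  ENNReal.ofReal (Real.exp (Ph t x v / 16))

lemma Wp_par {n d : ℕ} (t : ℝ) (x : Fin n → Fin d → ℝ) (v u : Fin d → ℝ) (M : ℝ) (hM : M ≤ Ph t x v) :
    ENNReal.ofReal (Real.exp (M / 16)) ≤ Wp t x (v + u) + Wp t x (v - u) := by
  have h := Ph_par t x v u
  rcases le_total M (Ph t x (v + u)) with h1 | h1
  · refine le_trans ?_ le_self_add
    exact ENNReal.ofReal_le_ofReal (Real.exp_le_exp.2 (by linarith))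
  · refine le_trans ?_ le_add_self
    exact ENNReal.ofReal_le_ofReal (Real.exp_le_exp.2 (by linarith))

lemma Wp_meas {n d : ℕ} (t : ℝ) : Measurable fun p : (Fin n → Fin d → ℝ) × (Fin d → ℝ) => Wp t p.1 p.2 := by
  unfold Wp Ph dotProduct
  fun_prop

def bU (d : ℕ) (r : ℝ) : Set (Fin d → ℝ) := {u | u ⬝ᵥ u < r}

lemma bU_open (d : ℕ) (r : ℝ) : IsOpen (bU d r) := by
  unfold bU dotProduct
  exact isOpen_lt (by fun_prop) (by fun_prop)

open Pointwise in
lemma bU_vol (d : ℕ) : volume (bU d 4) = 2 ^ d * volume (bU d 1) := by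
  have h : bU d 4 = (2 : ℝ) • bU d 1 := by
    ext v
    rw [Set.mem_smul_set_iff_inv_smul_mem₀ (by norm_num)]
    simp only [bU, Set.mem_ofPred_eq, smul_dotProduct, dotProduct_smul, smul_eq_mul]
    constructor <;> intro h <;> linarith
  rw [h, Measure.addHaar_smul]
  simp

lemma bU_pos (d : ℕ) : volume (bU d 1) ≠ 0 :=
  ((bU_open d 1).measure_pos volume ⟨0, by simp [bU]⟩).ne'

lemma bU_fin (d : ℕ) : volume (bU d 1) ≠ ⊤ := by
  have : bU d 1 ⊆ Metric.closedBall 0 1 := by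
    intro v hv
    rw [mem_closedBall_zero_iff, pi_norm_le_iff_of_nonneg (by norm_num)]
    intro i
    have h1 : v i * v i ≤ v ⬝ᵥ v := Finset.single_le_sum (f := fun i => v i * v i) (fun i _ => mul_self_nonneg _) (Finset.mem_univ i)
    have h2 : v ⬝ᵥ v < 1 := hv
    rw [Real.norm_eq_abs, abs_le]
    constructor <;> nlinarith
  exact ((measure_mono this).trans_lt (isCompact_closedBall _ _).measure_lt_top).ne

lemma vol_point {n d : ℕ} (t : ℝ) (x : Fin n → Fin d → ℝ) (v : Fin d → ℝ) (hv : v ⬝ᵥ v = 1) (M : ℝ) (hM : M ≤ Ph t x v) :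
    volume (bU d 1) * ENNReal.ofReal (Real.exp (M / 16)) ≤ 2 * ∫⁻ w in bU d 4, Wp t x w := by
  have hmw : Measurable fun w => Wp t x w := by unfold Wp Ph dotProduct; fun_prop
  have h1 : ∀ u ∈ bU d 1, v + u ∈ bU d 4 ∧ v - u ∈ bU d 4 := by
    intro u hu
    have hu : u ⬝ᵥ u < 1 := hu
    have h2 := dot_nonneg (v + u)
    have h3 := dot_nonneg (v - u)
    simp only [bU, Set.mem_ofPred_eq]
    simp only [add_dotProduct, sub_dotProduct, dotProduct_add, dotProduct_sub, dotProduct_comm u v] at *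
    constructor <;> linarith
  have hm1 := (bU_open d 1).measurableSet
  have hm4 := (bU_open d 4).measurableSet
  calc volume (bU d 1) * ENNReal.ofReal (Real.exp (M / 16))
      = ∫⁻ u in bU d 1, ENNReal.ofReal (Real.exp (M / 16)) := by rw [setLIntegral_const, mul_comm]
    _ ≤ ∫⁻ u in bU d 1, (Wp t x (v + u) + Wp t x (v - u)) := lintegral_mono fun u => Wp_par t x v u M hM
    _ = (∫⁻ u in bU d 1, Wp t x (v + u)) + ∫⁻ u in bU d 1, Wp t x (v - u) := lintegral_add_left (hmw.comp (measurable_const_add v)) _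
    _ ≤ (∫⁻ w in bU d 4, Wp t x w) + ∫⁻ w in bU d 4, Wp t x w := by
      refine add_le_add ?_ ?_
      · rw [← lintegral_indicator hm1, ← lintegral_indicator hm4, ← lintegral_add_left_eq_self ((bU d 4).indicator _) v]
        refine lintegral_mono fun u => ?_
        by_cases hu : u ∈ bU d 1
        · simp [hu, (h1 u hu).1]
        · simp [hu]
      · rw [← lintegral_indicator hm1, ← lintegral_indicator hm4, ← lintegral_sub_left_eq_self ((bU d 4).indicator _) v]
        refine lintegral_mono fun u => ?_
        by_cases hu : u ∈ bU d 1
        · simp [hu, (h1 u hu).2]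
        · simp [hu]
    _ = _ := by rw [two_mul]

lemma Wp_int {n d : ℕ} (t : ℝ) (v : Fin d → ℝ) (hv : v ⬝ᵥ v ≤ 4) :
    ∫⁻ x, Wp t x v ∂(gsam n d) ≤ ENNReal.ofReal ((1 + 2 * Real.exp (-t / 16)) ^ n) := by
  set f : (Fin d → ℝ) → ENNReal := fun y => ENNReal.ofReal (Real.exp (max ((y ⬝ᵥ v) ^ 2 - t) 0 / 16)) with hf
  have hfm : Measurable f := by unfold f dotProduct; fun_prop
  have h1 : ∀ x : Fin n → Fin d → ℝ, Wp t x v = ∏ j, f (x j) := by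
    intro x
    unfold Wp Ph
    rw [hf, ← ENNReal.ofReal_prod_of_nonneg (fun _ _ => (Real.exp_pos _).le), ← Real.exp_sum, Finset.sum_div]
  have h2 : ∫⁻ y, f y ∂(gvec d) ≤ ENNReal.ofReal (1 + 2 * Real.exp (-t / 16)) := by
    calc ∫⁻ y, f y ∂(gvec d) ≤ ∫⁻ y, (1 + ENNReal.ofReal (Real.exp (-t / 16)) * ENNReal.ofReal (Real.exp ((y ⬝ᵥ v) ^ 2 / 16))) ∂(gvec d) := by
          refine lintegral_mono fun y => ?_
          simp only [hf]
          rw [← ENNReal.ofReal_mul (Real.exp_pos _).le, ← Real.exp_add, ← ENNReal.ofReal_one, ← ENNReal.ofReal_add (by norm_num) (Real.exp_pos _).le]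
          apply ENNReal.ofReal_le_ofReal
          rcases max_cases ((y ⬝ᵥ v) ^ 2 - t) 0 with h | h
          · rw [h.1, show ((y ⬝ᵥ v) ^ 2 - t) / 16 = -t / 16 + (y ⬝ᵥ v) ^ 2 / 16 by ring]; linarith
          · rw [h.1]; simp; exact (Real.exp_pos _).le
      _ = 1 + ENNReal.ofReal (Real.exp (-t / 16)) * ∫⁻ y, ENNReal.ofReal (Real.exp ((y ⬝ᵥ v) ^ 2 / 16)) ∂(gvec d) := by
          rw [lintegral_add_left measurable_const, lintegral_const_mul]
          · simp
          · unfold dotProduct; fun_prop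
      _ ≤ 1 + ENNReal.ofReal (Real.exp (-t / 16)) * ENNReal.ofReal 2 := by gcongr; exact exp_dot v hv
      _ = _ := by
          rw [← ENNReal.ofReal_mul (Real.exp_pos _).le, ← ENNReal.ofReal_one, ← ENNReal.ofReal_add (by norm_num) (by positivity), mul_comm]
  simp only [h1]
  have h3 : iIndepFun (fun j (x : Fin n → Fin d → ℝ) => f (x j)) (gsam n d) :=
    iIndepFun_pi (μ := fun _ : Fin n => gvec d) (X := fun _ => f) fun j => hfm.aemeasurable
  rw [lintegral_prod_eq_prod_lintegral_of_indepFun Finset.univ _ h3 (fun j => hfm.comp (measurable_pi_apply j))]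
  have h4 : ∀ j : Fin n, ∫⁻ x, f (x j) ∂(gsam n d) ≤ ENNReal.ofReal (1 + 2 * Real.exp (-t / 16)) := by
    intro j
    rw [(measurePreserving_eval (fun _ : Fin n => gvec d) j).lintegral_comp hfm]
    exact h2
  refine (Finset.prod_le_prod' fun j _ => h4 j).trans ?_
  simp [ENNReal.ofReal_pow (by positivity : 0 ≤ 1 + 2 * Real.exp (-t / 16))]

lemma Ph_event {n d : ℕ} (t M : ℝ) :
    gsam n d {x | ∃ v, v ⬝ᵥ v = 1 ∧ M ≤ Ph t x v} ≤
      ENNReal.ofReal (2 * 2 ^ d * (1 + 2 * Real.exp (-t / 16)) ^ n * Real.exp (-(M / 16))) := by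
  set A := volume (bU d 1) * ENNReal.ofReal (Real.exp (M / 16)) with hA
  have hA0 : A ≠ 0 := by
    rw [hA]; exact mul_ne_zero (bU_pos d) (by simp [Real.exp_pos])
  have hA1 : A ≠ ⊤ := ENNReal.mul_ne_top (bU_fin d) (by simp)
  have hm : Measurable fun x : Fin n → Fin d → ℝ => ∫⁻ w in bU d 4, Wp t x w :=
    Measurable.lintegral_prod_right' (Wp_meas t)
  have h1 := meas_ge_le_lintegral_div (μ := gsam n d) (f := fun x => 2 * ∫⁻ w in bU d 4, Wp t x w)
    (hm.const_mul 2).aemeasurable hA0 hA1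
  refine (measure_mono ?_).trans (h1.trans ?_)
  · rintro x ⟨v, hv, hvM⟩
    exact vol_point t x v hv M hvM
  · rw [lintegral_const_mul _ hm, lintegral_lintegral_swap (Wp_meas t).aemeasurable]
    have h2 : ∫⁻ w in bU d 4, ∫⁻ x, Wp t x w ∂(gsam n d) ≤ ENNReal.ofReal ((1 + 2 * Real.exp (-t / 16)) ^ n) * volume (bU d 4) := by
      rw [← setLIntegral_const]
      refine setLIntegral_mono measurable_const fun w hw => Wp_int t w (le_of_lt hw)
    rw [bU_vol] at h2
    apply ENNReal.div_le_of_le_mul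
    refine (mul_le_mul_right h2 2).trans (le_of_eq ?_)
    rw [hA, mul_comm (volume _) (ENNReal.ofReal _), ← mul_assoc (ENNReal.ofReal (2 * 2 ^ d * _ * _)), ← ENNReal.ofReal_mul (by positivity), mul_assoc (2 * 2 ^ d * _),
      ← Real.exp_add]
    simp only [neg_add_cancel, Real.exp_zero, mul_one]
    rw [ENNReal.ofReal_mul (by positivity), ENNReal.ofReal_mul (by positivity), ENNReal.ofReal_pow (by positivity) d]
    simp only [ENNReal.ofReal_ofNat]
    ring

lemma exists_t (φ : ℝ) (hφ : 0 < φ) : ∃ t : ℝ, 0 ≤ t ∧ 2 * Real.exp (-t / 16) ≤ φ / 64 := by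
  have h : Tendsto (fun t : ℝ => 2 * Real.exp (-t / 16)) atTop (nhds 0) := by
    have h1 : Tendsto (fun t : ℝ => t / 16) atTop atTop := tendsto_id.atTop_div_const (by norm_num)
    have := (Real.tendsto_exp_neg_atTop_nhds_zero.comp h1).const_mul 2
    simpa [Function.comp_def, neg_div] using this
  obtain ⟨t, h1, h2⟩ := ((h.eventually_le_const (by positivity : 0 < φ / 64)).and (eventually_ge_atTop 0)).exists
  exact ⟨t, h2, h1⟩

lemma E2 (n : ℕ → ℕ) (hn : Tendsto n atTop atTop)
    (hdn : Tendsto (fun d : ℕ => (d : ℝ) / (n d : ℝ)) atTop (nhds 0)) (φ t : ℝ) (hφ : 0 < φ) (ht : 2 * Real.exp (-t / 16) ≤ φ / 64) :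
    Tendsto (fun d => gsam (n d) d {x | ∃ v, v ⬝ᵥ v = 1 ∧ n d * φ ≤ Ph t x v}) atTop (nhds 0) := by
  have hN : Tendsto (fun d => (n d : ℝ)) atTop atTop := tendsto_natCast_atTop_atTop.comp hn
  have hlim : Tendsto (fun d => 2 * Real.exp (-((n d : ℝ) * (φ / 32)))) atTop (nhds 0) := by
    have := (Real.tendsto_exp_neg_atTop_nhds_zero.comp (hN.atTop_mul_const (by positivity : 0 < φ / 32))).const_mul 2
    simpa [Function.comp_def] using this
  refine tends0 hlim ?_
  filter_upwards [hdn.eventually_le_const (by positivity : 0 < φ / 64), hN.eventually_gt_atTop 0] with d h1 h2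
  refine (Ph_event t _).trans (ENNReal.ofReal_le_ofReal ?_)
  have h3 : (2 : ℝ) ^ d ≤ Real.exp (n d * (φ / 64)) := by
    have : (2 : ℝ) ≤ Real.exp 1 := by linarith [Real.exp_one_gt_d9]
    calc (2 : ℝ) ^ d ≤ Real.exp 1 ^ d := pow_le_pow_left₀ (by norm_num) this d
      _ = Real.exp d := by rw [← Real.exp_nat_mul, mul_one]
      _ ≤ _ := Real.exp_le_exp.2 (by rwa [div_le_iff₀ h2, mul_comm] at h1)
  have h4 : (1 + 2 * Real.exp (-t / 16)) ^ n d ≤ Real.exp (n d * (φ / 64)) := by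
    rw [Real.exp_nat_mul]
    apply pow_le_pow_left₀ (by positivity)
    linarith [Real.add_one_le_exp (φ / 64)]
  calc 2 * 2 ^ d * (1 + 2 * Real.exp (-t / 16)) ^ n d * Real.exp (-(n d * φ / 16))
      ≤ 2 * Real.exp (n d * (φ / 64)) * Real.exp (n d * (φ / 64)) * Real.exp (-(n d * φ / 16)) := by gcongr
    _ = _ := by
      rw [mul_assoc, mul_assoc, ← Real.exp_add, ← Real.exp_add]
      congr 2; ring
end Tyl

open MeasureTheory ProbabilityTheory Filter Matrix

namespace Tyl

lemma count_bd {n : ℕ} (a c r : ℝ) (hc : 0 < c) (hr : 0 ≤ r) (q : ENNReal) (hq : q ≤ ENNReal.ofReal r)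
    (hh : n * r / c ≤ a) : (n : ENNReal) * q / ENNReal.ofReal c ≤ ENNReal.ofReal a := by
  calc (n : ENNReal) * q / ENNReal.ofReal c ≤ (n : ENNReal) * ENNReal.ofReal r / ENNReal.ofReal c := by gcongr
    _ = ENNReal.ofReal (n * r / c) := by
      rw [ENNReal.ofReal_div_of_pos hc, ENNReal.ofReal_mul (by positivity), ENNReal.ofReal_natCast]
    _ ≤ _ := ENNReal.ofReal_le_ofReal hh

open Classical in
lemma E3b (n : ℕ → ℕ) (hn : Tendsto n atTop atTop) (θ : ℝ) (hθ : 0 < θ) :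
    Tendsto (fun d : ℕ => gsam (n d) d {x | θ * n d / d ≤ ((Finset.univ.filter fun j => x j ⬝ᵥ x j < (d : ℝ) / 2).card : ℝ)}) atTop (nhds 0) := by
  have h := (tendsto_self_mul_const_pow_of_lt_one (by positivity) r1_lt).div_const θ
  rw [zero_div] at h
  refine tends0 h ?_
  filter_upwards [hn.eventually_gt_atTop 0, eventually_gt_atTop 0] with d h1 h2
  have h1' : (0 : ℝ) < n d := by exact_mod_cast h1
  have h2' : (0 : ℝ) < d := by exact_mod_cast h2
  refine (count_le (fun y : Fin d → ℝ => y ⬝ᵥ y < (d : ℝ) / 2) ?_ _ (by positivity)).trans ?_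
  · unfold dotProduct; exact measurableSet_lt (by fun_prop) (by fun_prop)
  · refine count_bd _ _ _ (by positivity) (by positivity) _ (small_norm d) (le_of_eq ?_)
    field_simp

open Classical in
lemma E3g (n : ℕ → ℕ) (hn : Tendsto n atTop atTop) (θ : ℝ) (hθ : 0 < θ) :
    Tendsto (fun d : ℕ => gsam (n d) d {x | θ * n d ≤ ((Finset.univ.filter fun j => 2 * (d : ℝ) < x j ⬝ᵥ x j).card : ℝ)}) atTop (nhds 0) := by
  have h := (tendsto_pow_atTop_nhds_zero_of_lt_one (by positivity) r2_lt).div_const θ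
  rw [zero_div] at h
  refine tends0 h ?_
  filter_upwards [hn.eventually_gt_atTop 0] with d h1
  have h1' : (0 : ℝ) < n d := by exact_mod_cast h1
  refine (count_le (fun y : Fin d → ℝ => 2 * (d : ℝ) < y ⬝ᵥ y) ?_ _ (by positivity)).trans ?_
  · unfold dotProduct; exact measurableSet_lt (by fun_prop) (by fun_prop)
  · refine count_bd _ _ _ (by positivity) (by positivity) _ (big_norm d) (le_of_eq ?_)
    field_simp

lemma gvec_zero {d : ℕ} (hd : 0 < d) : gvec d {0} = 0 := by
  have : NullSingletonClass (gaussianReal 0 1) := nullSingletonClass_gaussianReal (by norm_num)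
  rw [← Set.univ_pi_singleton, Measure.pi_pi]
  exact Finset.prod_eq_zero (Finset.mem_univ ⟨0, hd⟩) (by simp)

lemma nz {n d : ℕ} (hd : 0 < d) : gsam n d {x | ¬ ∀ j, x j ≠ 0} = 0 := by
  have : {x : Fin n → Fin d → ℝ | ¬ ∀ j, x j ≠ 0} = ⋃ j, (fun x => x j) ⁻¹' {0} := by
    ext x; simp
  rw [this, measure_iUnion_null_iff]
  intro j
  rw [(measurePreserving_eval (fun _ : Fin n => gvec d) j).measure_preimage (measurableSet_singleton _).nullMeasurableSet]
  exact gvec_zero hd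
end Tyl

open MeasureTheory ProbabilityTheory Filter Matrix

namespace Tyl

noncomputable def pol1 {d : ℕ} (p : (Fin d → ℝ) × (Fin d → ℝ)) : Fin d → ℝ :=
  (√(p.1 ⬝ᵥ p.1) / √(p.2 ⬝ᵥ p.2)) • p.2

lemma pol1_meas {d : ℕ} : Measurable (pol1 (d := d)) := by
  unfold pol1 dotProduct
  fun_prop

section
variable {E : Type*} [NormedAddCommGroup E] [InnerProductSpace ℝ E] [FiniteDimensional ℝ E] [MeasurableSpace E] [BorelSpace E]

noncomputable def hh (ξ : E) : ℂ := ∫ y : E, Complex.exp ((inner ℝ (‖y‖⁻¹ • y) ξ : ℝ) * Complex.I) ∂(stdGaussian E)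

lemma hh_rot (ξ η : E) (h : ‖ξ‖ = ‖η‖) : hh ξ = hh η := by
  set R := (ℝ ∙ (η - ξ))ᗮ.reflection with hR
  have h1 : R η = ξ := Submodule.reflection_sub h.symm
  unfold hh
  have h2 := stdGaussian_map (E := E) R
  conv_lhs => rw [← h2]
  rw [integral_map R.continuous.measurable.aemeasurable (by fun_prop)]
  congr 1; ext y
  rw [R.norm_map, ← map_smul, ← h1, R.inner_map_map]

lemma polar_E (h0 : stdGaussian E {0} = 0) :
    ((stdGaussian E).prod (stdGaussian E)).map (fun p => (‖p.1‖ * ‖p.2‖⁻¹) • p.2) = stdGaussian E := by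
  have hm : Measurable fun p : E × E => (‖p.1‖ * ‖p.2‖⁻¹) • p.2 := by fun_prop
  have := Measure.isProbabilityMeasure_map (μ := (stdGaussian E).prod (stdGaussian E)) hm.aemeasurable
  apply Measure.ext_of_charFun
  ext ξ
  rw [charFun_apply, integral_map hm.aemeasurable (by fun_prop)]
  have hint : ∀ f : E × E → ℝ, Measurable f → Integrable (fun p => Complex.exp ((f p : ℂ) * Complex.I)) ((stdGaussian E).prod (stdGaussian E)) := by
    intro f hf
    refine Integrable.of_bound (by fun_prop) 1 (ae_of_all _ fun p => ?_)
    rw [Complex.norm_exp_ofReal_mul_I]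
  rw [integral_prod _ (hint _ (by fun_prop))]
  have h1 : ∀ x : E, ∫ y, Complex.exp ((inner ℝ ((‖x‖ * ‖y‖⁻¹) • y) ξ : ℝ) * Complex.I) ∂(stdGaussian E) =
      ∫ y, Complex.exp ((inner ℝ (‖y‖⁻¹ • y) (‖ξ‖ • x) : ℝ) * Complex.I) ∂(stdGaussian E) := by
    intro x
    have := hh_rot (‖x‖ • ξ) (‖ξ‖ • x) (by simp [norm_smul, mul_comm])
    unfold hh at this
    rw [← this]
    congr 1; ext y
    congr 3
    simp only [inner_smul_left, inner_smul_right]; simp; ring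
  simp only [h1]
  rw [integral_integral_swap (hint (fun p => inner ℝ (‖p.2‖⁻¹ • p.2) (‖ξ‖ • p.1)) (by fun_prop))]
  have h2 : ∀ᵐ y ∂(stdGaussian E), ∫ x, Complex.exp ((inner ℝ (‖y‖⁻¹ • y) (‖ξ‖ • x) : ℝ) * Complex.I) ∂(stdGaussian E) = charFun (stdGaussian E) ξ := by
    have : ∀ᵐ y ∂(stdGaussian E), y ≠ 0 := by
      rw [ae_iff]; simpa using h0
    filter_upwards [this] with y hy
    have h3 : ∫ x, Complex.exp ((inner ℝ (‖y‖⁻¹ • y) (‖ξ‖ • x) : ℝ) * Complex.I) ∂(stdGaussian E) = charFun (stdGaussian E) (‖ξ‖ • ‖y‖⁻¹ • y) := by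
      rw [charFun_apply]
      congr 1; ext x
      congr 3
      rw [real_inner_comm, inner_smul_left, inner_smul_right (r := ‖ξ‖)]; simp
    rw [h3, charFun_stdGaussian, charFun_stdGaussian]
    have : ‖y‖ ≠ 0 := norm_ne_zero_iff.2 hy
    have h4 : ‖‖ξ‖ • ‖y‖⁻¹ • y‖ = ‖ξ‖ := by
      rw [norm_smul, norm_smul, norm_norm, norm_inv, norm_norm, inv_mul_cancel₀ this, mul_one]
    rw [h4]
  rw [integral_congr_ae h2]
  simp
end

lemma polar_one {d : ℕ} (hd : 0 < d) : ((gvec d).prod (gvec d)).map pol1 = gvec d := by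
  set f : (Fin d → ℝ) → EuclideanSpace ℝ (Fin d) := WithLp.toLp 2 with hf
  have hfm : Measurable f := WithLp.measurable_toLp 2 _
  set g : EuclideanSpace ℝ (Fin d) → Fin d → ℝ := WithLp.ofLp with hg
  have hgm : Measurable g := WithLp.measurable_ofLp 2 _
  have hG : (gvec d).map f = stdGaussian (EuclideanSpace ℝ (Fin d)) := map_pi_eq_stdGaussian
  have hz : stdGaussian (EuclideanSpace ℝ (Fin d)) {0} = 0 := by
    rw [← hG, Measure.map_apply hfm (measurableSet_singleton _)]
    have : f ⁻¹' {0} = {0} := by ext x; simp [hf]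
    rw [this]; exact gvec_zero hd
  have hnorm : ∀ x, ‖f x‖ = √(x ⬝ᵥ x) := by
    intro x
    rw [EuclideanSpace.norm_eq]
    congr 1
    simp [hf, dotProduct, sq]
  have h1 := polar_E hz
  have h2 : pol1 (d := d) = g ∘ (fun p : EuclideanSpace ℝ (Fin d) × EuclideanSpace ℝ (Fin d) => (‖p.1‖ * ‖p.2‖⁻¹) • p.2) ∘ Prod.map f f := by
    ext p i
    have e1 := hnorm p.1
    have e2 := hnorm p.2
    simp only [Function.comp, Prod.map, pol1, e1, e2, hg]
    simp [div_eq_mul_inv, hf]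
  rw [h2, ← Measure.map_map hgm (by fun_prop), ← Measure.map_map (by fun_prop) (by fun_prop), ← Measure.map_prod_map _ _ hfm hfm, hG, h1, ← hG,
    Measure.map_map hgm hfm]
  have : g ∘ f = id := rfl
  rw [this, Measure.map_id]

noncomputable def polN {n d : ℕ} (p : (Fin n → Fin d → ℝ) × (Fin n → Fin d → ℝ)) : Fin n → Fin d → ℝ :=
  fun j => pol1 (p.1 j, p.2 j)

lemma polN_meas {n d : ℕ} : Measurable (polN (n := n) (d := d)) := by
  unfold polN pol1 dotProduct
  fun_prop

lemma polar_N {n d : ℕ} (hd : 0 < d) : ((gsam n d).prod (gsam n d)).map polN = gsam n d := by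
  have h1 := (measurePreserving_arrowProdEquivProdArrow (Fin d → ℝ) (Fin d → ℝ) (Fin n) (fun _ => gvec d) (fun _ => gvec d))
  rw [← h1.map_eq, Measure.map_map polN_meas h1.measurable]
  have h2 : polN ∘ (MeasurableEquiv.arrowProdEquivProdArrow (Fin d → ℝ) (Fin d → ℝ) (Fin n)) = fun x i => pol1 (x i) := rfl
  rw [h2]
  have : IsProbabilityMeasure (((gvec d).prod (gvec d)).map pol1) := by rw [polar_one hd]; infer_instance
  rw [Measure.pi_map_pi (fun i => pol1_meas.aemeasurable)]
  simp only [polar_one hd]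
end Tyl

open MeasureTheory ProbabilityTheory Filter Matrix

namespace Tyl

lemma ev_meas {n d : ℕ} (p : Pol n d) : Measurable fun x : Fin n → Fin d → ℝ => ev x p := by
  unfold ev
  have h := MvPolynomial.continuous_eval p
  exact h.measurable.comp (by fun_prop : Measurable fun (x : Fin n → Fin d → ℝ) (i : Fin n × Fin d) => x i.1 i.2)

lemma L_X2 {n d : ℕ} (i : Fin n × Fin d) : L (MvPolynomial.X i * MvPolynomial.X i : Pol n d) = 1 := by
  rw [stein]; simp [L_one]

lemma Wr_quad {n d : ℕ} (x : Fin n → Fin d → ℝ) (v : Fin d → ℝ) (hv : v ⬝ᵥ v = 1) :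
    v ⬝ᵥ Wr x *ᵥ v = √((n : ℝ) / d) * ((∑ j, (n : ℝ)⁻¹ * (x j ⬝ᵥ v) ^ 2) - 1) := by
  rw [Wr, smul_mulVec, dotProduct_smul, smul_eq_mul, sub_one_quad, Sr_quad, hv]

/-- quadratic form of the randomized matrix as a polynomial -/
noncomputable def qp {n d : ℕ} (y : Fin n → Fin d → ℝ) (v : Fin d → ℝ) : Pol n d :=
  √((n : ℝ) / d) • ((∑ j, ∑ a, ((n : ℝ)⁻¹ * (yU y j ⬝ᵥ v) ^ 2 * (d : ℝ)⁻¹) • (MvPolynomial.X (j, a) * MvPolynomial.X (j, a))) - 1)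

lemma qp_ev {n d : ℕ} (hd : 0 < d) (x y : Fin n → Fin d → ℝ) (hy : ∀ j, y j ≠ 0) (v : Fin d → ℝ) (hv : v ⬝ᵥ v = 1) :
    ev x (qp y v) = v ⬝ᵥ Wr (polN (x, y)) *ᵥ v := by
  rw [Wr_quad _ _ hv]
  simp only [qp, ev, MvPolynomial.smul_eval, map_sub, map_sum, map_mul, MvPolynomial.eval_X, map_one]
  congr 2
  refine Finset.sum_congr rfl fun j _ => ?_
  rw [← Finset.mul_sum]
  change (n : ℝ)⁻¹ * (yU y j ⬝ᵥ v) ^ 2 * (d : ℝ)⁻¹ * (x j ⬝ᵥ x j) = _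
  simp only [polN, pol1, yU, smul_dotProduct, smul_eq_mul, mul_pow, div_pow]
  have h1 := dot_pos (hy j)
  have h2 : (0 : ℝ) < d := by exact_mod_cast hd
  rw [Real.sq_sqrt h1.le, Real.sq_sqrt h2.le, Real.sq_sqrt (dot_nonneg _)]
  field_simp

lemma qp_L {n d : ℕ} (hd : 0 < d) (y : Fin n → Fin d → ℝ) (v : Fin d → ℝ) (hv : v ⬝ᵥ v = 1) :
    L (qp y v) = v ⬝ᵥ Wr (yU y) *ᵥ v := by
  rw [Wr_quad _ _ hv, qp, map_smul, map_sub, L_one, map_sum, smul_eq_mul]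
  congr 2
  refine Finset.sum_congr rfl fun j _ => ?_
  rw [map_sum]
  simp only [map_smul, L_X2]
  have h2 : (d : ℝ) ≠ 0 := by exact_mod_cast hd.ne'
  simp; field_simp

lemma jensen {n d : ℕ} (p : Pol n d) (k : ℕ) : (L p) ^ (2 * k) ≤ L (p ^ (2 * k)) := by
  have h := ConvexOn.map_integral_le (μ := gsam n d) (f := fun x => ev x p) (g := fun t : ℝ => t ^ (2 * k)) (s := Set.univ)
    (Even.convexOn_pow (even_two_mul k)) (by fun_prop) isClosed_univ (by simp) (integrable_ev p)
    (by simpa [Function.comp_def] using integrable_ev (p ^ (2 * k)))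
  simpa [L_apply] using h

lemma ub_U (n : ℕ → ℕ) (hn : Tendsto n atTop atTop)
    (hdn : Tendsto (fun d : ℕ => (d : ℝ) / (n d : ℝ)) atTop (nhds 0)) (T : ℝ) (hT : 0 < T) :
    Tendsto (fun d => gsam (n d) d {x | ¬ QB (Wr (yU x)) (2 + T)}) atTop (nhds 0) := by
  obtain ⟨k, hk⟩ := em_growing n hn hdn T hT
  refine tends0 hk ?_
  filter_upwards [hn.eventually_gt_atTop 0, eventually_gt_atTop 0] with d hnd hd
  have hd' : (0 : ℝ) < d := by exact_mod_cast hd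
  set τ := (gs (n d) d).tl [2 * k d] with hτ
  have hev : ∀ x : Fin (n d) → Fin d → ℝ, (d : ℝ) * ev x τ = trace (Wr x ^ (2 * k d)) := by
    intro x; rw [hτ, ev_tl hnd hd]; simp; field_simp
  set f : (Fin (n d) → Fin d → ℝ) → ENNReal := fun x => ENNReal.ofReal (d * ev x τ) with hf
  have hfm : Measurable f := ((ev_meas τ).const_mul _).ennreal_ofReal
  have hpos : (0 : ℝ) < (2 + T) ^ (2 * k d) := by positivity
  have hfp : Measurable fun q : (Fin (n d) → Fin d → ℝ) × (Fin (n d) → Fin d → ℝ) => f (polN (q.2, q.1)) :=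
    hfm.comp (polN_meas.comp measurable_swap)
  have hm : Measurable fun y => ∫⁻ x, f (polN (x, y)) ∂(gsam (n d) d) :=
    Measurable.lintegral_prod_right' hfp
  have h1 := meas_ge_le_lintegral_div (μ := gsam (n d) d) hm.aemeasurable (ε := ENNReal.ofReal ((2 + T) ^ (2 * k d))) (by simpa using hpos) (by simp)
  have h2 : ∫⁻ y, ∫⁻ x, f (polN (x, y)) ∂(gsam (n d) d) ∂(gsam (n d) d) = ENNReal.ofReal (d * em (n d) d [2 * k d]) := by
    rw [← lintegral_prod_symm' (fun q => f (polN q)) (hfm.comp polN_meas), ← lintegral_map hfm polN_meas, polar_N hd, em_eq, L_apply, ← integral_const_mul,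
      ofReal_integral_eq_lintegral_ofReal ((integrable_ev _).const_mul _)]
    refine ae_of_all _ fun x => ?_
    change 0 ≤ (d : ℝ) * ev x τ
    rw [hev]; exact trace_pow_nonneg (Wr_herm x) _
  rw [h2, ← ENNReal.ofReal_div_of_pos hpos] at h1
  have h3 : {y : Fin (n d) → Fin d → ℝ | ¬ QB (Wr (yU y)) (2 + T)} ⊆
      {y | ENNReal.ofReal ((2 + T) ^ (2 * k d)) ≤ ∫⁻ x, f (polN (x, y)) ∂(gsam (n d) d)} ∪ {x | ¬ ∀ j, x j ≠ 0} := by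
    intro y hy
    by_cases hz : ∀ j, y j ≠ 0
    · left
      obtain ⟨v, hv, hv2⟩ := not_QB hy
      simp only [Set.mem_ofPred_eq]
      calc ENNReal.ofReal ((2 + T) ^ (2 * k d)) ≤ ENNReal.ofReal (L (qp y v ^ (2 * k d))) := by
            apply ENNReal.ofReal_le_ofReal
            refine le_trans ?_ (jensen _ _)
            rw [qp_L hd y v hv]
            calc (2 + T) ^ (2 * k d) ≤ |v ⬝ᵥ Wr (yU y) *ᵥ v| ^ (2 * k d) := by gcongr
              _ = _ := by rw [pow_mul, pow_mul, sq_abs]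
        _ = ∫⁻ x, ENNReal.ofReal (ev x (qp y v ^ (2 * k d))) ∂(gsam (n d) d) := by
            rw [L_apply, ofReal_integral_eq_lintegral_ofReal (integrable_ev _)]
            refine ae_of_all _ fun x => ?_
            simp only [map_pow, pow_mul]; positivity
        _ ≤ _ := by
            refine lintegral_mono fun x => ENNReal.ofReal_le_ofReal ?_
            rw [hev, map_pow, qp_ev hd x y hz v hv]
            exact quad_pow_le (Wr_herm _) (k d) v hv
    · right; exact hz
  refine (measure_mono h3).trans ((measure_union_le _ _).trans ?_)
  rw [nz hd, add_zero]
  exact h1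
end Tyl

open MeasureTheory ProbabilityTheory Filter Matrix

namespace Tyl
section
variable {n d : ℕ}
open MvPolynomial (pderiv)

noncomputable def kd (a b : Fin d) : ℝ := if a = b then 1 else 0

def Ind (j : Fin n) (p : Pol n d) : Prop := ∀ a, pderiv (j, a) p = 0

lemma Ind.mul {j : Fin n} {p q : Pol n d} (hp : Ind j p) (hq : Ind j q) : Ind j (p * q) := by
  intro a; rw [MvPolynomial.pderiv_mul, hp a, hq a]; simp

lemma pd_same (j : Fin n) (a b : Fin d) : pderiv (j, a) (MvPolynomial.X (j, b) : Pol n d) = MvPolynomial.C (kd a b) := by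
  unfold kd
  split_ifs with h
  · subst h; simp
  · rw [MvPolynomial.pderiv_X_of_ne (by simp [Ne.symm h])]; simp

lemma Ind_X {i j : Fin n} (h : i ≠ j) (b : Fin d) : Ind j (MvPolynomial.X (i, b) : Pol n d) := by
  intro a; exact MvPolynomial.pderiv_X_of_ne (by simp [h])

noncomputable def Vq (i : Fin n) (a b : Fin d) : Pol n d := MvPolynomial.X (i, a) * MvPolynomial.X (i, b) - MvPolynomial.C (kd a b)

noncomputable def vq (i j : Fin n) : Pol n d := ∑ a, ∑ b, Vq i a b * Vq j a b

lemma Ind_V {i j : Fin n} (h : i ≠ j) (b c : Fin d) : Ind j (Vq i b c : Pol n d) := by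
  intro a
  rw [Vq, map_sub, (Ind_X h b).mul (Ind_X h c) a]; simp

lemma Ind_v {i l j : Fin n} (h : i ≠ j) (h' : l ≠ j) : Ind j (vq i l : Pol n d) := by
  intro a
  rw [vq, map_sum]
  refine Finset.sum_eq_zero fun b _ => ?_
  rw [map_sum]
  exact Finset.sum_eq_zero fun c _ => (Ind_V h b c).mul (Ind_V h' b c) a

lemma L_Cmul (a : ℝ) (p : Pol n d) : L (MvPolynomial.C a * p) = a * L p := by
  rw [← MvPolynomial.smul_eq_C_mul, map_smul, smul_eq_mul]

lemma mom2 (j : Fin n) (c e : Fin d) (p : Pol n d) (hp : Ind j p) :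
    L (MvPolynomial.X (j, c) * (MvPolynomial.X (j, e) * p)) = kd c e * L p := by
  rw [stein, MvPolynomial.pderiv_mul, hp c, pd_same, mul_zero, add_zero, L_Cmul]

lemma momV (j : Fin n) (c e : Fin d) (p : Pol n d) (hp : Ind j p) : L (Vq j c e * p) = 0 := by
  rw [Vq, sub_mul, map_sub, mul_assoc, mom2 j c e p hp, L_Cmul, sub_self]

lemma momVV (j : Fin n) (a b c e : Fin d) (p : Pol n d) (hp : Ind j p) :
    L (Vq j a b * (Vq j c e * p)) = (kd a c * kd b e + kd a e * kd b c) * L p := by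
  have h1 : L (MvPolynomial.X (j, a) * (MvPolynomial.X (j, b) * (Vq j c e * p))) = (kd a c * kd b e + kd a e * kd b c) * L p := by
    rw [stein, MvPolynomial.pderiv_mul, pd_same, map_add, L_Cmul, momV j c e p hp, mul_zero, zero_add, MvPolynomial.pderiv_mul, hp a, mul_zero, add_zero,
      Vq, map_sub, MvPolynomial.pderiv_mul, pd_same, pd_same, MvPolynomial.pderiv_C, sub_zero]
    rw [show (MvPolynomial.X (j, b) : Pol n d) * ((MvPolynomial.C (kd a c) * MvPolynomial.X (j, e) + MvPolynomial.X (j, c) * MvPolynomial.C (kd a e)) * p)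
      = MvPolynomial.C (kd a c) * (MvPolynomial.X (j, b) * (MvPolynomial.X (j, e) * p)) + MvPolynomial.C (kd a e) * (MvPolynomial.X (j, b) * (MvPolynomial.X (j, c) * p)) by ring]
    rw [map_add, L_Cmul, L_Cmul, mom2 _ _ _ _ hp, mom2 _ _ _ _ hp]; ring
  rw [Vq, sub_mul, map_sub, mul_assoc, h1, L_Cmul, momV j c e p hp, mul_zero, sub_zero]

lemma Vq_symm (i : Fin n) (a b : Fin d) : (Vq i a b : Pol n d) = Vq i b a := by
  unfold Vq kd; rw [mul_comm]; simp only [eq_comm]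

lemma vq_symm (i j : Fin n) : (vq i j : Pol n d) = vq j i := by
  unfold vq; simp only [mul_comm]

lemma contract {i j l : Fin n} (hi : i ≠ j) (hl : l ≠ j) (r : Pol n d) (hr : Ind j r) :
    L (vq i j * vq j l * r) = 2 * L (vq i l * r) := by
  have h1 : vq i j * vq j l * r = ∑ a, ∑ b, ∑ c, ∑ e, Vq j a b * (Vq j c e * (Vq i a b * Vq l c e * r)) := by
    unfold vq
    rw [Finset.sum_mul, Finset.sum_mul]
    refine Finset.sum_congr rfl fun a _ => ?_
    rw [Finset.sum_mul, Finset.sum_mul]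
    refine Finset.sum_congr rfl fun b _ => ?_
    rw [Finset.mul_sum, Finset.sum_mul]
    refine Finset.sum_congr rfl fun c _ => ?_
    rw [Finset.mul_sum, Finset.sum_mul]
    refine Finset.sum_congr rfl fun e _ => ?_
    ring
  have h2 : vq i l * r = ∑ a, ∑ b, Vq i a b * Vq l a b * r := by
    unfold vq; simp only [Finset.sum_mul]
  rw [h1, h2]
  simp only [map_sum]
  rw [Finset.mul_sum]
  refine Finset.sum_congr rfl fun a _ => ?_
  rw [Finset.mul_sum]
  refine Finset.sum_congr rfl fun b _ => ?_
  have h3 : ∀ c e, L (Vq j a b * (Vq j c e * (Vq i a b * Vq l c e * r))) =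
      (if a = c then (if b = e then L (Vq i a b * Vq l c e * r) else 0) else 0) + (if b = c then (if a = e then L (Vq i a b * Vq l c e * r) else 0) else 0) := by
    intro c e
    rw [momVV _ _ _ _ _ _ (((Ind_V hi a b).mul (Ind_V hl c e)).mul hr)]
    unfold kd
    split_ifs <;> norm_num <;> ring
  simp only [h3, Finset.sum_add_distrib]
  simp only [Finset.sum_ite_irrel, Finset.sum_ite_eq, Finset.sum_const_zero, Finset.mem_univ, if_true]
  rw [Vq_symm l b a, two_mul]

lemma ev_vq (x : Fin n → Fin d → ℝ) (i j : Fin n) : ev x (vq i j) = vv x i j := by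
  rw [← Vm_dot]
  simp [vq, Vq, Vm, kd, ev]

noncomputable def Dq (i j : Fin n) : Pol n d := ∑ a, MvPolynomial.X (i, a) * MvPolynomial.X (j, a)

lemma ev_Dq (x : Fin n → Fin d → ℝ) (i j : Fin n) : ev x (Dq i j) = x i ⬝ᵥ x j := by
  simp [Dq, ev, dotProduct]

lemma pd_D {i j : Fin n} (h : j ≠ i) (a : Fin d) : pderiv (i, a) (Dq i j : Pol n d) = MvPolynomial.X (j, a) := by
  rw [Dq, map_sum]
  simp only [MvPolynomial.pderiv_mul, pd_same, Ind_X h _ a, mul_zero, add_zero]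
  simp [kd]

lemma D_rec {i j : Fin n} (h : j ≠ i) (m : ℕ) (r : Pol n d) (hr : Ind i r) :
    L (Dq i j ^ (m + 2) * r) = (m + 1) * L (Dq i j ^ m * (Dq j j * r)) := by
  have h1 : (Dq i j : Pol n d) ^ (m + 2) * r = ∑ a, MvPolynomial.X (i, a) * (MvPolynomial.X (j, a) * Dq i j ^ (m + 1) * r) := by
    rw [show (Dq i j : Pol n d) ^ (m + 2) * r = Dq i j * (Dq i j ^ (m + 1) * r) by ring]
    generalize hq : (Dq i j : Pol n d) ^ (m + 1) = q
    rw [Dq, Finset.sum_mul]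
    exact Finset.sum_congr rfl fun a _ => by ring
  have h2 : (Dq i j : Pol n d) ^ m * (Dq j j * r) = ∑ a, Dq i j ^ m * (MvPolynomial.X (j, a) * MvPolynomial.X (j, a) * r) := by
    rw [show (Dq j j : Pol n d) = ∑ a, MvPolynomial.X (j, a) * MvPolynomial.X (j, a) from rfl, Finset.sum_mul, Finset.mul_sum]
  rw [h1, h2, map_sum, map_sum, Finset.mul_sum]
  refine Finset.sum_congr rfl fun a _ => ?_
  rw [stein, MvPolynomial.pderiv_mul, hr a, mul_zero, add_zero, MvPolynomial.pderiv_mul, Ind_X h a a, zero_mul, zero_add, MvPolynomial.pderiv_pow, pd_D h]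
  have : (MvPolynomial.X (j, a) * (((m + 1 : ℕ) : Pol n d) * Dq i j ^ (m + 1 - 1) * MvPolynomial.X (j, a)) * r) =
    MvPolynomial.C ((m : ℝ) + 1) * (Dq i j ^ m * (MvPolynomial.X (j, a) * MvPolynomial.X (j, a) * r)) := by
    simp only [Nat.add_sub_cancel, Nat.cast_add, Nat.cast_one, map_add, map_natCast, map_one]; ring
  rw [this, L_Cmul]

lemma Ind_D {i j : Fin n} (h : j ≠ i) : Ind i (Dq j j : Pol n d) := by
  intro a
  rw [Dq, map_sum]
  exact Finset.sum_eq_zero fun b _ => (Ind_X h b).mul (Ind_X h b) a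

lemma D8 {i j : Fin n} (h : j ≠ i) : L (Dq i j ^ 8 : Pol n d) = 105 * L (Dq j j ^ 4 : Pol n d) := by
  have e := Ind_D (d := d) h
  have h1 := D_rec h 6 (1 : Pol n d) (fun a => by simp)
  have h2 := D_rec h 4 (Dq j j * 1 : Pol n d) (e.mul fun a => by simp)
  have h3 := D_rec h 2 (Dq j j * (Dq j j * 1) : Pol n d) (e.mul (e.mul fun a => by simp))
  have h4 := D_rec h 0 (Dq j j * (Dq j j * (Dq j j * 1)) : Pol n d) (e.mul (e.mul (e.mul fun a => by simp)))
  rw [h2, h3, h4] at h1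
  rw [show (Dq i j ^ 8 : Pol n d) = Dq i j ^ (6 + 2) * 1 by ring, h1]
  rw [show (Dq i j ^ 0 * (Dq j j * (Dq j j * (Dq j j * (Dq j j * 1)))) : Pol n d) = Dq j j ^ 4 by ring]
  push_cast; ring

lemma X_pow (i : Fin n × Fin d) (k : ℕ) : L (MvPolynomial.X i ^ (k + 2) : Pol n d) = (k + 1) * L (MvPolynomial.X i ^ k : Pol n d) := by
  rw [show (MvPolynomial.X i ^ (k + 2) : Pol n d) = MvPolynomial.X i * MvPolynomial.X i ^ (k + 1) by ring, stein, MvPolynomial.pderiv_pow,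
    MvPolynomial.pderiv_X_self]
  rw [show (((k + 1 : ℕ) : Pol n d) * MvPolynomial.X i ^ (k + 1 - 1) * 1) = MvPolynomial.C ((k : ℝ) + 1) * MvPolynomial.X i ^ k by
    simp, L_Cmul]

lemma Npow (j : Fin n) (k : ℕ) : L (Dq j j ^ (k + 1) : Pol n d) ≤ (d : ℝ) ^ k * ∑ a, L (MvPolynomial.X (j, a) ^ (2 * (k + 1)) : Pol n d) := by
  have h1 : L (Dq j j ^ (k + 1) : Pol n d) ≤ L (MvPolynomial.C ((d : ℝ) ^ k) * ∑ a, MvPolynomial.X (j, a) ^ (2 * (k + 1)) : Pol n d) := by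
    apply L_mono
    intro x
    rw [map_pow, ev_Dq, dotProduct]
    simp only [ev, map_mul, map_sum, map_pow, MvPolynomial.eval_X, MvPolynomial.eval_C]
    rcases Nat.eq_zero_or_pos d with rfl | hd
    · simp
    have := pow_sum_div_card_le_sum_pow (s := (Finset.univ : Finset (Fin d))) (f := fun a => x j a * x j a) (fun a _ => mul_self_nonneg _) k
    rw [Finset.card_univ, Fintype.card_fin, div_le_iff₀ (by positivity)] at this
    refine this.trans (le_of_eq ?_)
    rw [mul_comm]
    congr 1
    exact Finset.sum_congr rfl fun a _ => by rw [← sq, ← pow_mul]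
  rwa [L_Cmul, map_sum] at h1

lemma N4 (j : Fin n) : L (Dq j j ^ 4 : Pol n d) ≤ 105 * (d : ℝ) ^ 4 := by
  refine (Npow j 3).trans (le_of_eq ?_)
  have h8 : ∀ a, L (MvPolynomial.X (j, a) ^ (2 * (3 + 1)) : Pol n d) = 105 := by
    intro a
    have e := fun k => X_pow (n := n) (j, a) k
    have e0 := e 0; have e2 := e 2; have e4 := e 4; have e6 := e 6
    norm_num [L_one] at e0 e2 e4 e6 ⊢
    rw [e6, e4, e2, e0]; norm_num
  simp only [h8, Finset.sum_const, Finset.card_univ, Fintype.card_fin, nsmul_eq_mul]; ring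

lemma N2 (j : Fin n) : L (Dq j j ^ 2 : Pol n d) ≤ 3 * (d : ℝ) ^ 2 := by
  refine (Npow j 1).trans (le_of_eq ?_)
  have h8 : ∀ a, L (MvPolynomial.X (j, a) ^ (2 * (1 + 1)) : Pol n d) = 3 := by
    intro a
    have e := fun k => X_pow (n := n) (j, a) k
    have e0 := e 0; have e2 := e 2
    norm_num [L_one] at e0 e2 ⊢
    rw [e2, e0]; norm_num
  simp only [h8, Finset.sum_const, Finset.card_univ, Fintype.card_fin, nsmul_eq_mul]; ring

lemma vq_self (i : Fin n) (hd : 0 < d) : L (vq i i : Pol n d) ≤ 4 * (d : ℝ) ^ 2 := by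
  have h1 : L (vq i i : Pol n d) ≤ L (Dq i i ^ 2 + MvPolynomial.C (d : ℝ) : Pol n d) := by
    apply L_mono
    intro x
    rw [ev_vq, map_add, map_pow, ev_Dq]
    have := dot_nonneg (x i)
    simp only [vv, ev, MvPolynomial.eval_C]; linarith
  rw [map_add, L_C] at h1
  have : (1 : ℝ) ≤ d := by exact_mod_cast hd
  have := N2 (d := d) i
  nlinarith

lemma four_pow (a b c e : ℝ) : (a - b - c + e) ^ 4 ≤ 64 * (a ^ 4 + b ^ 4 + c ^ 4 + e ^ 4) := by
  have h1 : (a - b - c + e) ^ 2 ≤ 4 * (a ^ 2 + b ^ 2 + c ^ 2 + e ^ 2) := by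
    nlinarith [sq_nonneg (a + b), sq_nonneg (a + c), sq_nonneg (a - e), sq_nonneg (b - c), sq_nonneg (b + e), sq_nonneg (c + e)]
  have h2 : (a ^ 2 + b ^ 2 + c ^ 2 + e ^ 2) ^ 2 ≤ 4 * (a ^ 4 + b ^ 4 + c ^ 4 + e ^ 4) := by
    nlinarith [sq_nonneg (a ^ 2 - b ^ 2), sq_nonneg (a ^ 2 - c ^ 2), sq_nonneg (a ^ 2 - e ^ 2), sq_nonneg (b ^ 2 - c ^ 2), sq_nonneg (b ^ 2 - e ^ 2), sq_nonneg (c ^ 2 - e ^ 2)]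
  have h3 := pow_le_pow_left₀ (sq_nonneg (a - b - c + e)) h1 2
  nlinarith

lemma vq4 {i j : Fin n} (h : i ≠ j) : L (vq i j ^ 4 : Pol n d) ≤ 719104 * (d : ℝ) ^ 4 := by
  have h1 : L (vq i j ^ 4 : Pol n d) ≤ L ((64 : ℝ) • (Dq i j ^ 8 + Dq i i ^ 4 + Dq j j ^ 4 + MvPolynomial.C ((d : ℝ) ^ 4)) : Pol n d) := by
    apply L_mono
    intro x
    have h2 : ev x ((64 : ℝ) • (Dq i j ^ 8 + Dq i i ^ 4 + Dq j j ^ 4 + MvPolynomial.C ((d : ℝ) ^ 4)) : Pol n d) =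
        64 * ((x i ⬝ᵥ x j) ^ 8 + (x i ⬝ᵥ x i) ^ 4 + (x j ⬝ᵥ x j) ^ 4 + (d : ℝ) ^ 4) := by
      rw [MvPolynomial.smul_eq_C_mul, map_mul, map_add, map_add, map_add, map_pow, map_pow, map_pow, ev_Dq, ev_Dq, ev_Dq]
      simp only [ev, MvPolynomial.eval_C]
    rw [h2, map_pow, ev_vq, vv]
    refine (four_pow _ _ _ _).trans (le_of_eq ?_)
    ring
  rw [map_smul, map_add, map_add, map_add, D8 h.symm, L_C, smul_eq_mul] at h1
  have := N4 (d := d) i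
  have := N4 (d := d) j
  linarith

noncomputable def Kq (i j : Fin n) : Pol n d := if i = j then 0 else vq i j

lemma ev_Kq (x : Fin n → Fin d → ℝ) (i j : Fin n) : ev x (Kq i j) = Km x i j := by
  unfold Kq Km
  split_ifs
  · simp
  · exact ev_vq x i j

lemma Kq4 (i j : Fin n) : L (Kq i j ^ 4 : Pol n d) ≤ 719104 * (d : ℝ) ^ 4 := by
  unfold Kq
  split_ifs with h
  · simp
  · exact vq4 h

lemma Kq_gen (i j l m : Fin n) : L (Kq i j * Kq j l * (Kq i m * Kq m l) : Pol n d) ≤ 719104 * (d : ℝ) ^ 4 := by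
  have h1 : L (Kq i j * Kq j l * (Kq i m * Kq m l) : Pol n d) ≤ L ((1 / 4 : ℝ) • (Kq i j ^ 4 + Kq j l ^ 4 + Kq i m ^ 4 + Kq m l ^ 4) : Pol n d) := by
    apply L_mono
    intro x
    rw [MvPolynomial.smul_eq_C_mul]
    simp only [map_mul, map_add, map_pow]
    rw [show ev x (MvPolynomial.C (1 / 4 : ℝ) : Pol n d) = 1 / 4 by simp [ev]]
    generalize ev x (Kq i j) = a
    generalize ev x (Kq j l) = b
    generalize ev x (Kq i m) = c
    generalize ev x (Kq m l) = e
    nlinarith [sq_nonneg (a * b - c * e), sq_nonneg (a ^ 2 - b ^ 2), sq_nonneg (c ^ 2 - e ^ 2)]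
  rw [map_smul, map_add, map_add, map_add, smul_eq_mul] at h1
  have := Kq4 (d := d) i j
  have := Kq4 (d := d) j l
  have := Kq4 (d := d) i m
  have := Kq4 (d := d) m l
  linarith

lemma Kq_dist (hd : 0 < d) (i j l m : Fin n) (hil : i ≠ l) (hjm : j ≠ m) : L (Kq i j * Kq j l * (Kq i m * Kq m l) : Pol n d) ≤ 32 * (d : ℝ) ^ 2 := by
  by_cases h1 : i = j
  · simp [Kq, h1]
  by_cases h2 : j = l
  · simp [Kq, h2]
  by_cases h3 : i = m
  · simp [Kq, h3]
  by_cases h4 : m = l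
  · simp [Kq, h4]
  simp only [Kq, h1, h2, h3, h4, if_false]
  rw [contract h1 (Ne.symm h2) _ ((Ind_v h1 (Ne.symm hjm)).mul (Ind_v (Ne.symm hjm) (Ne.symm h2))), mul_comm (vq i l),
    contract h3 (Ne.symm h4) _ (Ind_v h3 (Ne.symm h4))]
  conv_lhs => rw [show (vq i l * vq i l : Pol n d) = vq i l * vq l i * 1 by rw [vq_symm l i, mul_one]]
  rw [contract hil hil _ (fun a => by simp), mul_one]
  have := vq_self i hd
  linarith

lemma EQ (hd : 0 < d) : L (∑ i, ∑ l, (∑ j, Kq i j * Kq j l) ^ 2 : Pol n d) ≤ 32 * (n : ℝ) ^ 4 * (d : ℝ) ^ 2 + 1438208 * (n : ℝ) ^ 3 * (d : ℝ) ^ 4 := by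
  have h1 : (∑ i, ∑ l, (∑ j, Kq i j * Kq j l) ^ 2 : Pol n d) = ∑ i, ∑ l, ∑ j, ∑ m, Kq i j * Kq j l * (Kq i m * Kq m l) := by
    refine Finset.sum_congr rfl fun i _ => Finset.sum_congr rfl fun l _ => ?_
    rw [sq, Finset.sum_mul_sum]
  rw [h1]
  simp only [map_sum]
  set c := 719104 * (d : ℝ) ^ 4 with hc
  have hc0 : 0 ≤ c := by positivity
  have h2 : ∀ i l j m : Fin n, L (Kq i j * Kq j l * (Kq i m * Kq m l) : Pol n d) ≤
      32 * (d : ℝ) ^ 2 + (if i = l then c else 0) + (if j = m then c else 0) := by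
    intro i l j m
    have g := Kq_gen (d := d) i j l m
    have hp : 0 ≤ 32 * (d : ℝ) ^ 2 := by positivity
    split_ifs with h h' h'
    · linarith
    · linarith
    · linarith
    · have := Kq_dist hd i j l m h h'; linarith
  refine (Finset.sum_le_sum fun i _ => Finset.sum_le_sum fun l _ => Finset.sum_le_sum fun j _ => Finset.sum_le_sum fun m _ => h2 i l j m).trans (le_of_eq ?_)
  simp only [Finset.sum_add_distrib, Finset.sum_const, Finset.card_univ, Fintype.card_fin, nsmul_eq_mul, ← Finset.mul_sum, Finset.sum_ite_eq, Finset.mem_univ, if_true]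
  rw [hc]; ring
end

lemma E1 (n : ℕ → ℕ) (hn : Tendsto n atTop atTop) (θ : ℝ) (hθ : 0 < θ) :
    Tendsto (fun d : ℕ => gsam (n d) d {x | (θ * n d * d) ^ 4 ≤ ∑ i, ∑ l, (∑ j, Km x i j * Km x j l) ^ 2}) atTop (nhds 0) := by
  have hN : Tendsto (fun d => (n d : ℝ)⁻¹) atTop (nhds 0) := tendsto_inv_atTop_zero.comp (tendsto_natCast_atTop_atTop.comp hn)
  have hD : Tendsto (fun d : ℕ => (d : ℝ)⁻¹) atTop (nhds 0) := tendsto_inv_atTop_zero.comp tendsto_natCast_atTop_atTop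
  have hlim : Tendsto (fun d : ℕ => 32 / θ ^ 4 * ((d : ℝ)⁻¹) ^ 2 + 1438208 / θ ^ 4 * (n d : ℝ)⁻¹) atTop (nhds 0) := by
    have := ((hD.pow 2).const_mul (32 / θ ^ 4)).add (hN.const_mul (1438208 / θ ^ 4))
    simpa using this
  refine tends0 hlim ?_
  filter_upwards [hn.eventually_gt_atTop 0, eventually_gt_atTop 0] with d hnd hd
  have hd' : (0 : ℝ) < d := by exact_mod_cast hd
  have hn' : (0 : ℝ) < n d := by exact_mod_cast hnd
  set p : Pol (n d) d := ∑ i, ∑ l, (∑ j, Kq i j * Kq j l) ^ 2 with hp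
  have hev : ∀ x : Fin (n d) → Fin d → ℝ, ev x p = ∑ i, ∑ l, (∑ j, Km x i j * Km x j l) ^ 2 := by
    intro x; simp only [hp, map_sum, map_pow, map_mul, ev_Kq]
  have hm := markov (μ := gsam (n d) d) (f := fun x => ev x p) (integrable_ev p) (fun x => by rw [hev]; positivity) (c := (θ * n d * d) ^ 4) (by positivity)
  rw [← L_apply] at hm
  simp only [hev] at hm
  refine hm.trans (ENNReal.ofReal_le_ofReal ?_)
  rw [div_le_iff₀ (by positivity)]
  refine (EQ hd).trans (le_of_eq ?_)
  field_simp
end Tyl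

open MeasureTheory ProbabilityTheory Filter Matrix
namespace Tyl

lemma QB_smul {d : ℕ} {M : Matrix (Fin d) (Fin d) ℝ} {s c : ℝ} (hc : 0 ≤ c) (h : QB M s) : QB (c • M) (c * s) := by
  intro v
  rw [smul_mulVec, dotProduct_smul, smul_eq_mul, abs_mul, abs_of_nonneg hc, mul_assoc]
  exact mul_le_mul_of_nonneg_left (h v) hc

lemma QB_mono {d : ℕ} {M : Matrix (Fin d) (Fin d) ℝ} {s r : ℝ} (hc : s ≤ r) (h : QB M s) : QB M r := by
  intro v
  exact (h v).trans (mul_le_mul_of_nonneg_right hc (dot_nonneg v))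

lemma tends_union {a b : ℕ → ENNReal} (ha : Tendsto a atTop (nhds 0)) (hb : Tendsto b atTop (nhds 0)) :
    Tendsto (fun d => a d + b d) atTop (nhds 0) := by
  simpa using ha.add hb

open Classical in
lemma ub_T (n : ℕ → ℕ) (hn : Tendsto n atTop atTop)
    (hdn : Tendsto (fun d : ℕ => (d : ℝ) / (n d : ℝ)) atTop (nhds 0)) (ε : ℝ) (hε : 0 < ε) :
    Tendsto (fun d => gsam (n d) d {x | ¬ ∀ T, IsTyler x T → QB (√((n d : ℝ) / d) • (T - 1)) (2 + ε)}) atTop (nhds 0) := by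
  obtain ⟨κ, hκ0, hκ1, hκ2⟩ : ∃ κ : ℝ, 0 < κ ∧ κ ≤ 1 / 20 ∧ (1 + 20 * κ) * (2 + ε / 2) ≤ 2 + ε := by
    refine ⟨min (1 / 20) (ε / (40 * (2 + ε / 2))), by positivity, min_le_left _ _, ?_⟩
    have h1 : min (1 / 20) (ε / (40 * (2 + ε / 2))) ≤ ε / (40 * (2 + ε / 2)) := min_le_right _ _
    rw [le_div_iff₀ (by positivity)] at h1
    nlinarith
  obtain ⟨t, ht0, ht⟩ := exists_t (κ / 16) (by positivity)
  set η := κ / 16 with hη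
  have hη0 : 0 < η := by positivity
  set C := 1 + 2 * t * (1 + 4 / η ^ 2) with hC
  have hC0 : 0 < C := by positivity
  set θ := κ / (4 * C) with hθ
  have hθ0 : 0 < θ := by positivity
  have e1 := E1 n hn θ hθ0
  have e2 := E2 n hn hdn (κ / 16) t (by positivity) ht
  have e3 := E3b n hn θ hθ0
  have e4 := E3g n hn θ hθ0
  have e5 := ub_U n hn hdn (ε / 2) (by positivity)
  have hall := tends_union (tends_union (tends_union e1 e2) (tends_union e3 e4)) e5
  refine tendsto_of_tendsto_of_tendsto_of_le_of_le' tendsto_const_nhds hall (Eventually.of_forall fun _ => zero_le) ?_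
  have l1 : Tendsto (fun d : ℕ => 40 * t / η ^ 2 * ((d : ℝ) / n d)) atTop (nhds 0) := by simpa using hdn.const_mul (40 * t / η ^ 2)
  have l2 : Tendsto (fun d : ℕ => (2 + ε / 2) * √((d : ℝ) / n d)) atTop (nhds 0) := by
    simpa using (hdn.sqrt).const_mul (2 + ε / 2)
  filter_upwards [hn.eventually_gt_atTop 0, eventually_gt_atTop 0, l1.eventually_le_const (show (0 : ℝ) < κ / 4 by positivity),
    l2.eventually_le_const (show (0 : ℝ) < 1 / 20 by norm_num)] with d hnd hd h1 h2
  have hd' : (0 : ℝ) < d := by exact_mod_cast hd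
  have hn' : (0 : ℝ) < n d := by exact_mod_cast hnd
  have hsub : {x : Fin (n d) → Fin d → ℝ | ¬ ∀ T, IsTyler x T → QB (√((n d : ℝ) / d) • (T - 1)) (2 + ε)} ⊆
      ((({x | (θ * n d * d) ^ 4 ≤ ∑ i, ∑ l, (∑ j, Km x i j * Km x j l) ^ 2} ∪
        {x | ∃ v, v ⬝ᵥ v = 1 ∧ n d * (κ / 16) ≤ Ph t x v}) ∪
        ({x | θ * n d / d ≤ ((Finset.univ.filter fun j => x j ⬝ᵥ x j < (d : ℝ) / 2).card : ℝ)} ∪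
        {x | θ * n d ≤ ((Finset.univ.filter fun j => 2 * (d : ℝ) < x j ⬝ᵥ x j).card : ℝ)})) ∪
        {x | ¬ QB (Wr (yU x)) (2 + ε / 2)}) ∪ {x | ¬ ∀ j, x j ≠ 0} := by
    intro x hx
    by_contra hc
    simp only [Set.mem_union, Set.mem_ofPred_eq, not_or, not_not, not_le, not_exists, not_and] at hc
    obtain ⟨⟨⟨⟨c1, c2⟩, c3, c4⟩, c5⟩, c6⟩ := hc
    apply hx
    intro T hT
    have hs : √((n d : ℝ) / d) * √((d : ℝ) / n d) = 1 := by
      rw [← Real.sqrt_mul (by positivity), div_mul_div_comm, mul_comm (n d : ℝ), div_self (by positivity), Real.sqrt_one]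
    have hσ : QB (Sr (yU x) - 1) ((2 + ε / 2) * √((d : ℝ) / n d)) := by
      have := QB_smul (Real.sqrt_nonneg ((d : ℝ) / n d)) c5
      rw [Wr, smul_smul, mul_comm (√((d : ℝ) / n d)), hs, one_smul, mul_comm] at this
      exact this
    have hg := tyler_good hd hnd x c6 (θ * n d * d) (by positivity) c1.le η t (κ / 16) (θ * n d / d) (θ * n d)
      ((2 + ε / 2) * √((d : ℝ) / n d)) κ hη0 ht0 (by positivity) h2 hσ c3.le c4.le (fun v hv => (c2 v hv).le) ?_ hκ0.le hκ1 T hT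
    · have := QB_smul (Real.sqrt_nonneg ((n d : ℝ) / d)) hg
      refine QB_mono ?_ this
      calc _ = (1 + 20 * κ) * (2 + ε / 2) * (√((n d : ℝ) / d) * √((d : ℝ) / n d)) := by ring
        _ ≤ _ := by rw [hs, mul_one]; exact hκ2
    · have hCθ : C * θ = κ / 4 := by rw [hθ]; field_simp
      have : (d : ℝ) * (θ * n d / d) / n d + 2 * η + 2 * t / n d * (θ * n d + 4 / η ^ 2 * (5 * d + θ * n d * d / d)) + 2 * (κ / 16)
          = C * θ + κ / 4 + 40 * t / η ^ 2 * ((d : ℝ) / n d) := by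
        rw [hC]
        have : κ = 16 * η := by rw [hη]; ring
        rw [this]
        field_simp
        ring
      rw [this, hCθ]; linarith
  refine (measure_mono hsub).trans ((measure_union_le _ _).trans ?_)
  rw [nz hd, add_zero]
  refine (measure_union_le _ _).trans (add_le_add ((measure_union_le _ _).trans (add_le_add (measure_union_le _ _) (measure_union_le _ _))) le_rfl)

lemma sup_det {d : ℕ} {A B : Matrix (Fin d) (Fin d) ℝ} (hA : A.IsHermitian) (hB : B.IsHermitian) (ε δ : ℝ)
    (hδ : δ ≤ ε) (hA1 : QB A (2 + ε)) (hB1 : QB B (2 + ε)) (hB2 : ¬ QB B (2 - δ)) :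
    |sSup {y : ℝ | ∃ i : Fin d, ∃ α ∈ Set.Icc (0 : ℝ) 1, ∃ l,
              l = α * sortedEigs A i + (1 - α) * sortedEigs B i ∧ y = |l|} - 2| ≤ ε := by
  have sA : ∀ i, |sortedEigs A i| ≤ 2 + ε := by
    intro i; rw [sortedEigs, dif_pos hA]; exact eig_of_QB hA hA1 _
  have sB : ∀ i, |sortedEigs B i| ≤ 2 + ε := by
    intro i; rw [sortedEigs, dif_pos hB]; exact eig_of_QB hB hB1 _
  obtain ⟨i, hi⟩ : ∃ i, 2 - δ < |sortedEigs B i| := by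
    by_contra! hc
    apply hB2
    refine QB_of_eig hB fun i => ?_
    have := hc ((Tuple.sort hB.eigenvalues).symm i)
    rw [sortedEigs, dif_pos hB] at this
    simpa using this
  have hmem : |sortedEigs B i| ∈ {y : ℝ | ∃ i : Fin d, ∃ α ∈ Set.Icc (0 : ℝ) 1, ∃ l,
              l = α * sortedEigs A i + (1 - α) * sortedEigs B i ∧ y = |l|} :=
    ⟨i, 0, by simp, sortedEigs B i, by simp, rfl⟩
  have hub : ∀ y ∈ {y : ℝ | ∃ i : Fin d, ∃ α ∈ Set.Icc (0 : ℝ) 1, ∃ l,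
              l = α * sortedEigs A i + (1 - α) * sortedEigs B i ∧ y = |l|}, y ≤ 2 + ε := by
    rintro y ⟨i, α, ⟨h0, h1⟩, l, rfl, rfl⟩
    have h2 := abs_le.1 (sA i)
    have h3 := abs_le.1 (sB i)
    rw [abs_le]
    constructor <;> nlinarith
  have u := csSup_le ⟨_, hmem⟩ hub
  have v := le_csSup ⟨_, hub⟩ hmem
  rw [abs_le]; constructor <;> linarith

lemma transfer {Ωs : Type*} [MeasurableSpace Ωs] (P : Measure Ωs) [IsProbabilityMeasure P] {n d : ℕ}
    (X : Fin n → Ωs → Fin d → ℝ) (hmeas : ∀ j, Measurable (X j)) (hindep : iIndepFun X P)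
    (hgauss : ∀ j, Measure.map (X j) P = Measure.pi fun _ : Fin d => gaussianReal 0 1) (s : Set (Fin n → Fin d → ℝ)) :
    P {ω | (fun j => X j ω) ∈ s} ≤ gsam n d s := by
  have h := (iIndepFun_iff_map_fun_eq_pi_map (fun j => (hmeas j).aemeasurable)).1 hindep
  simp only [hgauss] at h
  have hm : Measurable fun ω j => X j ω := measurable_pi_lambda _ hmeas
  have := Measure.le_map_apply (μ := P) hm.aemeasurable s
  rw [h] at this
  exact this

end Tyl

theorem sup_abs_segment_eigenvalues_tendsto_two
    {Ωs : Type*} [MeasurableSpace Ωs] (P : Measure Ωs) [IsProbabilityMeasure P]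
    (n : ℕ → ℕ) (hn : Tendsto n atTop atTop)
    (hdn : Tendsto (fun d : ℕ => (d : ℝ) / (n d : ℝ)) atTop (nhds 0))
    (X : ∀ d : ℕ, Fin (n d) → Ωs → Fin d → ℝ)
    (hmeas : ∀ d j, Measurable (X d j))
    (hindep : ∀ d, iIndepFun (X d) P)
    (hgauss : ∀ d j,
      Measure.map (X d j) P = Measure.pi fun _ : Fin d => gaussianReal 0 1)
    (T : ∀ d : ℕ, Ωs → Matrix (Fin d) (Fin d) ℝ)
    (hT : ∀ d, ∀ᵐ ω ∂P, IsTyler (fun j => X d j ω) (T d ω)) :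
    ∀ ε > (0 : ℝ),
      Tendsto (fun d =>
          P {ω | |sSup {y : ℝ | ∃ i : Fin d, ∃ α ∈ Set.Icc (0 : ℝ) 1, ∃ l,
              l = α * sortedEigs (Real.sqrt ((n d : ℝ) / d) • (T d ω - 1)) i +
                  (1 - α) * sortedEigs (Real.sqrt ((n d : ℝ) / d) •
                    ((n d : ℝ)⁻¹ • ∑ j : Fin (n d),
                      vecMulVec (X d j ω) (X d j ω) - 1)) i ∧
              y = |l|} - 2| > ε})
        atTop (nhds 0) := by
  intro ε hε
  have hall := Tyl.tends_union (Tyl.tends_union (Tyl.ub_T n hn hdn ε hε) (Tyl.ub_S n hn hdn ε hε))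
    (Tyl.lb_S n hn hdn (min ε 1) (by positivity) (by have := min_le_right ε 1; linarith))
  refine tendsto_of_tendsto_of_tendsto_of_le_of_le tendsto_const_nhds hall (fun _ => zero_le) fun d => ?_
  have tr := Tyl.transfer P (X d) (hmeas d) (hindep d) (hgauss d)
  have hsub : {ω | |sSup {y : ℝ | ∃ i : Fin d, ∃ α ∈ Set.Icc (0 : ℝ) 1, ∃ l,
              l = α * sortedEigs (Real.sqrt ((n d : ℝ) / d) • (T d ω - 1)) i +
                  (1 - α) * sortedEigs (Real.sqrt ((n d : ℝ) / d) •
                    ((n d : ℝ)⁻¹ • ∑ j : Fin (n d),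
                      vecMulVec (X d j ω) (X d j ω) - 1)) i ∧
              y = |l|} - 2| > ε} ⊆
      (({ω | (fun j => X d j ω) ∈ {x | ¬ ∀ T, IsTyler x T → Tyl.QB (√((n d : ℝ) / d) • (T - 1)) (2 + ε)}} ∪
        {ω | (fun j => X d j ω) ∈ {x | ¬ Tyl.QB (Tyl.Wr x) (2 + ε)}}) ∪
        {ω | (fun j => X d j ω) ∈ {x | Tyl.QB (Tyl.Wr x) (2 - min ε 1)}}) ∪
        {ω | ¬ IsTyler (fun j => X d j ω) (T d ω)} := by
    intro ω hω
    by_contra hc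
    simp only [Set.mem_union, Set.mem_ofPred_eq, not_or, not_not] at hc
    obtain ⟨⟨⟨c1, c2⟩, c3⟩, c4⟩ := hc
    rw [Set.mem_ofPred_eq] at hω
    refine absurd hω (not_lt.2 ?_)
    refine Tyl.sup_det ?_ (Tyl.Wr_herm fun j => X d j ω) ε (min ε 1) (min_le_left _ _) (c1 _ c4) c2 c3
    have hh : (T d ω)ᴴ = T d ω := c4.1.1
    rw [Matrix.IsHermitian, Matrix.conjTranspose_smul, Matrix.conjTranspose_sub, hh]; simp
  refine (measure_mono hsub).trans ((measure_union_le _ _).trans ?_)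
  rw [show P {ω | ¬ IsTyler (fun j => X d j ω) (T d ω)} = 0 from hT d, add_zero]
  refine (measure_union_le _ _).trans (add_le_add ((measure_union_le _ _).trans (add_le_add (tr _) (tr _))) (tr _))
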